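/- Let q be a power of an odd prime p and let t₀ := diag(−1,1,−1) ∈ SU_3(q). Let ϑ be an irreducible complex character of the Borel subgroup B of SU_3(q) of degree q²−q whose character field is not contained in ℝ. If ϑ(t₀) = q−1, then ϑ has unitary discriminant q when q ≡ 1 (mod 4) and −1 when q ≡ 3 (mod 4); if ϑ(t₀) = −(q−1), then ϑ has unitary discriminant 1 when q ≡ 1 (mod 4) and −q when q ≡ 3 (mod 4). -/

import Mathlib

open Matrix

noncomputable section

namespace Paper

/-- The character of a matrix representation. -/
def charOf {G : Type} [Group G] {n : ℕ} (ρ : G →* GL (Fin n) ℂ) : G → ℂ :=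
  fun g => Matrix.trace ((ρ g : Matrix (Fin n) (Fin n) ℂ))

/-- Irreducibility of a complex matrix representation. -/
def IsIrredRep {G : Type} [Group G] {n : ℕ} (ρ : G →* GL (Fin n) ℂ) : Prop :=
  0 < n ∧ ∀ W : Submodule ℂ (Fin n → ℂ),
    (∀ (g : G), ∀ v ∈ W, (ρ g : Matrix (Fin n) (Fin n) ℂ).mulVec v ∈ W) → W = ⊥ ∨ W = ⊤

/-- `χ` is an irreducible complex character of `G`. -/
def IsIrrChar {G : Type} [Group G] (χ : G → ℂ) : Prop :=
  ∃ (n : ℕ) (ρ : G →* GL (Fin n) ℂ), IsIrredRep ρ ∧ χ = charOf ρ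

/-- The character field `ℚ(χ)`, as a subfield of `ℂ`. -/
def charField {G : Type} [Group G] (χ : G → ℂ) : Subfield ℂ :=
  Subfield.closure (Set.range χ)

/-- The subfield of real numbers inside `ℂ`. -/
def realsIn : Subfield ℂ := Subfield.closure (Set.range ((↑) : ℝ → ℂ))

/-- The character field of `χ` is not contained in `ℝ`. -/
def NotReal {G : Type} [Group G] (χ : G → ℂ) : Prop := ¬ charField χ ≤ realsIn

/-- `χ` has unitary discriminant `d`. -/
def HasUnitaryDisc {G : Type} [Group G] (χ : G → ℂ) (d : ℂ) : Prop :=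
  ∀ (n : ℕ) (ρ : G →* GL (Fin n) ℂ),
    χ = charOf ρ →
    (∀ g i j, ((ρ g : Matrix (Fin n) (Fin n) ℂ)) i j ∈ charField χ) →
    ∀ H : Matrix (Fin n) (Fin n) ℂ,
      (∀ i j, H i j ∈ charField χ) →
      IsUnit H.det →
      H.conjTranspose = H →
      (∀ g, ((ρ g : Matrix (Fin n) (Fin n) ℂ)).conjTranspose * H *
        (ρ g : Matrix (Fin n) (Fin n) ℂ) = H) →
      ∃ z ∈ charField χ, z ≠ 0 ∧
        (-1 : ℂ) ^ (n * (n - 1) / 2) * H.det = d * (z * (starRingEnd ℂ) z)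

/-- `χ` has orthogonal discriminant `d`. -/
def HasOrthDisc {G : Type} [Group G] (χ : G → ℂ) (d : ℂ) : Prop :=
  ∀ (n : ℕ) (ρ : G →* GL (Fin n) ℂ),
    χ = charOf ρ →
    (∀ g i j, ((ρ g : Matrix (Fin n) (Fin n) ℂ)) i j ∈ charField χ) →
    ∀ H : Matrix (Fin n) (Fin n) ℂ,
      (∀ i j, H i j ∈ charField χ) →
      IsUnit H.det →
      H.transpose = H →
      (∀ g, ((ρ g : Matrix (Fin n) (Fin n) ℂ)).transpose * H *
        (ρ g : Matrix (Fin n) (Fin n) ℂ) = H) →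
      ∃ z ∈ charField χ, z ≠ 0 ∧
        (-1 : ℂ) ^ (n * (n - 1) / 2) * H.det = d * z ^ 2

/-- `χ` is a rational character. -/
def IsRationalChar {G : Type} [Group G] (χ : G → ℂ) : Prop :=
  ∀ g, ∃ r : ℚ, χ g = (r : ℂ)

/-- `χ` is the character of a representation over `ℚ`. -/
def RealizableOverQ {G : Type} [Group G] (χ : G → ℂ) : Prop :=
  ∃ (n : ℕ) (ρ : G →* GL (Fin n) ℂ), χ = charOf ρ ∧
    ∀ g i j, ∃ r : ℚ, ((ρ g : Matrix (Fin n) (Fin n) ℂ)) i j = (r : ℂ)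

end Paper

namespace Paper

variable (p k : ℕ) (F : Type) [Field F] [Fintype F] [ExpChar F p]

/-- The Gram matrix `Ω` (anti-diagonal ones). -/
def Om : Matrix (Fin 3) (Fin 3) F :=
  Matrix.of fun i j => if (i : ℕ) + (j : ℕ) = 2 then 1 else 0

/-- Entrywise `q`-power Frobenius `Φ` on `3×3` matrices, where `q = p^k`. -/
def Phi : Matrix (Fin 3) (Fin 3) F →+* Matrix (Fin 3) (Fin 3) F :=
  (iterateFrobenius F p k).mapMatrix

/-- The special unitary group `SU₃(q) = {g ∈ SL₃(F_{q²}) : Φ(g)ᵀ·Ω·g = Ω}`. -/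
def SU3 : Subgroup (Matrix.SpecialLinearGroup (Fin 3) F) where
  carrier := {g | (Phi p k F g.val)ᵀ * Om F * g.val = Om F}
  one_mem' := by
    show (Phi p k F (1 : Matrix.SpecialLinearGroup (Fin 3) F).val)ᵀ * Om F *
        (1 : Matrix.SpecialLinearGroup (Fin 3) F).val = Om F
    simp
  mul_mem' := by
    intro a b ha hb
    show (Phi p k F (a.val * b.val))ᵀ * Om F * (a.val * b.val) = Om F
    have ha' : (Phi p k F a.val)ᵀ * Om F * a.val = Om F := ha
    have hb' : (Phi p k F b.val)ᵀ * Om F * b.val = Om F := hb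
    calc (Phi p k F (a.val * b.val))ᵀ * Om F * (a.val * b.val)
        = (Phi p k F b.val)ᵀ * ((Phi p k F a.val)ᵀ * Om F * a.val) * b.val := by
          rw [_root_.map_mul, Matrix.transpose_mul]; simp only [Matrix.mul_assoc]
      _ = (Phi p k F b.val)ᵀ * Om F * b.val := by rw [ha']
      _ = Om F := hb'
  inv_mem' := by
    intro a ha
    show (Phi p k F (a⁻¹).val)ᵀ * Om F * (a⁻¹).val = Om F
    have ha' : (Phi p k F a.val)ᵀ * Om F * a.val = Om F := ha
    have h1 : a.val * (a⁻¹).val = 1 := by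
      rw [← Matrix.SpecialLinearGroup.coe_mul, mul_inv_cancel,
        Matrix.SpecialLinearGroup.coe_one]
    nth_rewrite 1 [← ha']
    calc (Phi p k F (a⁻¹).val)ᵀ * ((Phi p k F a.val)ᵀ * Om F * a.val) * (a⁻¹).val
        = (Phi p k F a.val * Phi p k F (a⁻¹).val)ᵀ * Om F * (a.val * (a⁻¹).val) := by
          rw [Matrix.transpose_mul]; simp only [Matrix.mul_assoc]
      _ = Om F := by rw [← _root_.map_mul, h1, _root_.map_one, Matrix.transpose_one,
            Matrix.one_mul, Matrix.mul_one]

end Paper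

namespace Paper

variable (p k : ℕ) (F : Type) [Field F] [Fintype F] [ExpChar F p]

/-- The Borel subgroup of `SU₃(q)`: the upper triangular matrices in `SU₃(q)`. -/
def Borel : Subgroup ↥(SU3 p k F) where
  carrier := {g | Matrix.BlockTriangular ((g : Matrix.SpecialLinearGroup (Fin 3) F) :
    Matrix (Fin 3) (Fin 3) F) id}
  one_mem' := by
    show Matrix.BlockTriangular ((1 : Matrix.SpecialLinearGroup (Fin 3) F) :
      Matrix (Fin 3) (Fin 3) F) id
    rw [Matrix.SpecialLinearGroup.coe_one]
    exact Matrix.blockTriangular_one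
  mul_mem' := by
    intro a b ha hb
    exact Matrix.BlockTriangular.mul ha hb
  inv_mem' := by
    intro a ha
    show Matrix.BlockTriangular (((a⁻¹ : ↥(SU3 p k F)) : Matrix.SpecialLinearGroup (Fin 3) F) :
      Matrix (Fin 3) (Fin 3) F) id
    have hcoe : (((a⁻¹ : ↥(SU3 p k F)) : Matrix.SpecialLinearGroup (Fin 3) F) :
        Matrix (Fin 3) (Fin 3) F)
        = (((a : ↥(SU3 p k F)) : Matrix.SpecialLinearGroup (Fin 3) F) :
          Matrix (Fin 3) (Fin 3) F)⁻¹ := by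
      rw [show ((a⁻¹ : ↥(SU3 p k F)) : Matrix.SpecialLinearGroup (Fin 3) F)
        = ((a : ↥(SU3 p k F)) : Matrix.SpecialLinearGroup (Fin 3) F)⁻¹ from rfl]
      rw [Matrix.SpecialLinearGroup.coe_inv, Matrix.inv_def,
        ((a : ↥(SU3 p k F)) : Matrix.SpecialLinearGroup (Fin 3) F).2]
      simp
    rw [hcoe]
    haveI : Invertible (((a : ↥(SU3 p k F)) : Matrix.SpecialLinearGroup (Fin 3) F) :
        Matrix (Fin 3) (Fin 3) F) := by
      apply Matrix.invertibleOfIsUnitDet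
      rw [((a : ↥(SU3 p k F)) : Matrix.SpecialLinearGroup (Fin 3) F).2]
      exact isUnit_one
    exact Matrix.blockTriangular_inv_of_blockTriangular ha

end Paper

namespace Paper

/-- Hermitian nondegenerate sesquilinear form. -/
structure Herm {L V : Type} [Field L] [StarRing L] [AddCommGroup V] [Module L V]
    (B : V →ₗ⋆[L] V →ₗ[L] L) : Prop where
  symm : ∀ v w, star (B v w) = B w v
  nondeg : ∀ v, (∀ w, B v w = 0) → v = 0

def gram {L V ι : Type} [Field L] [StarRing L] [AddCommGroup V] [Module L V]
    (B : V →ₗ⋆[L] V →ₗ[L] L) (b : ι → V) : Matrix ι ι L := Matrix.of fun i j => B (b i) (b j)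

def Disc {L V : Type} [Field L] [StarRing L] [AddCommGroup V] [Module L V]
    (B : V →ₗ⋆[L] V →ₗ[L] L) (d : L) : Prop :=
  ∃ (ι : Type) (_ : Fintype ι) (_ : DecidableEq ι) (b : Module.Basis ι L V) (z : L),
    z ≠ 0 ∧ (gram B b).det = d * (z * star z)

section
variable {L V : Type} [Field L] [StarRing L] [AddCommGroup V] [Module L V]
  {B : V →ₗ⋆[L] V →ₗ[L] L}

theorem gram_reindex {ι κ : Type} [Fintype ι] [DecidableEq ι] [Fintype κ] [DecidableEq κ]
    (b : ι → V) (e : κ ≃ ι) : (gram B (b ∘ e)).det = (gram B b).det := by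
  rw [← Matrix.det_submatrix_equiv_self e (gram B b)]
  rfl

theorem gram_lin {ι κ κ' : Type} [Fintype ι] [DecidableEq ι]
    (b : ι → V) (c : κ → V) (c' : κ' → V) (P : Matrix ι κ L) (P' : Matrix ι κ' L)
    (hP : ∀ j, c j = ∑ i, P i j • b i) (hP' : ∀ j, c' j = ∑ i, P' i j • b i) :
    (Matrix.of fun i j => B (c i) (c' j)) = Pᴴ * gram B b * P' := by
  ext i j
  simp only [Matrix.of_apply, Matrix.mul_apply, gram, Matrix.conjTranspose_apply]
  rw [hP, hP']
  simp only [map_sum, LinearMap.sum_apply, map_smulₛₗ, LinearMap.smul_apply, smul_eq_mul,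
    RingHom.id_apply, starRingEnd_apply]
  exact Finset.sum_congr rfl fun k _ => mul_comm _ _

theorem gram_basis {ι : Type} [Fintype ι] [DecidableEq ι]
    (b c : Module.Basis ι L V) :
    ∃ z : L, z ≠ 0 ∧ (gram B c).det = (gram B b).det * (z * star z) := by
  refine ⟨(b.toMatrix c).det, ?_, ?_⟩
  · have := b.toMatrix_mul_toMatrix_flip c
    intro h
    have h2 := congrArg Matrix.det this
    rw [Matrix.det_mul, h] at h2; simp at h2
  · have := gram_lin (B := B) b c c (b.toMatrix c) (b.toMatrix c)
      (fun j => (b.sum_toMatrix_smul_self c j).symm) (fun j => (b.sum_toMatrix_smul_self c j).symm)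
    rw [show gram B c = _ from this, Matrix.det_mul, Matrix.det_mul, Matrix.det_conjTranspose]
    ring

theorem Disc.basis {d : L} (h : Disc B d) {κ : Type} [Fintype κ] [DecidableEq κ]
    (c : Module.Basis κ L V) : ∃ z : L, z ≠ 0 ∧ (gram B c).det = d * (z * star z) := by
  obtain ⟨ι, _, _, b, z, hz, hb⟩ := h
  let e := b.indexEquiv c
  obtain ⟨z', hz', h'⟩ := gram_basis (B := B) (b.reindex e) c
  refine ⟨z * z', mul_ne_zero hz hz', ?_⟩
  rw [h', Module.Basis.coe_reindex, gram_reindex, hb, star_mul]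
  ring

theorem Disc.norm {d : L} (h : Disc B d) {c z : L} (hz : z ≠ 0) (hd : d = c * (z * star z)) :
    Disc B c := by
  obtain ⟨ι, _, _, b, z', hz', hb⟩ := h
  refine ⟨ι, inferInstance, inferInstance, b, z * z', mul_ne_zero hz hz', ?_⟩
  rw [hb, hd, star_mul]; ring

/-- Adjointness. -/
def Adj (B : V →ₗ⋆[L] V →ₗ[L] L) (f g : V →ₗ[L] V) : Prop := ∀ v w, B (f v) w = B v (g w)

def Unit' (B : V →ₗ⋆[L] V →ₗ[L] L) (f : V →ₗ[L] V) : Prop := ∀ v w, B (f v) (f w) = B v w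

def rB (B : V →ₗ⋆[L] V →ₗ[L] L) (W : Submodule L V) : W →ₗ⋆[L] W →ₗ[L] L :=
  B.domRestrict₁₂ W W

@[simp] theorem rB_apply (W : Submodule L V) (v w : W) : rB B W v w = B v w := rfl

theorem Herm.restr (hB : Herm B) {W₁ W₂ : Submodule L V} (hc : IsCompl W₁ W₂)
    (ho : ∀ v ∈ W₁, ∀ w ∈ W₂, B v w = 0) : Herm (rB B W₁) := by
  refine ⟨fun v w => hB.symm _ _, fun v hv => ?_⟩
  apply Subtype.ext
  apply hB.nondeg
  intro w
  obtain ⟨a, ha, b, hb, rfl⟩ : ∃ a ∈ W₁, ∃ b ∈ W₂, a + b = w := by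
    have : w ∈ W₁ ⊔ W₂ := by rw [hc.sup_eq_top]; trivial
    exact Submodule.mem_sup.1 this
  rw [map_add, ho _ v.2 _ hb, add_zero]
  exact hv ⟨a, ha⟩

theorem Herm.orth (hB : Herm B) {v w : V} (h : B v w = 0) : B w v = 0 := by
  rw [← hB.symm, h, star_zero]

theorem Disc.sum (hB : Herm B) {W₁ W₂ : Submodule L V} (hc : IsCompl W₁ W₂)
    (ho : ∀ v ∈ W₁, ∀ w ∈ W₂, B v w = 0) {d₁ d₂ : L} (h₁ : Disc (rB B W₁) d₁)
    (h₂ : Disc (rB B W₂) d₂) : Disc B (d₁ * d₂) := by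
  obtain ⟨ι, _, _, b, z, hz, hb⟩ := h₁
  obtain ⟨κ, _, _, c, y, hy, hc'⟩ := h₂
  refine ⟨ι ⊕ κ, inferInstance, inferInstance,
    (b.prod c).map (Submodule.prodEquivOfIsCompl W₁ W₂ hc), z * y, mul_ne_zero hz hy, ?_⟩
  have : gram B ((b.prod c).map (Submodule.prodEquivOfIsCompl W₁ W₂ hc)) =
      Matrix.fromBlocks (gram (rB B W₁) b) 0 0 (gram (rB B W₂) c) := by
    ext (i | i) (j | j)
    · simp [gram, Submodule.coe_prodEquivOfIsCompl]
    · simpa [gram, Submodule.coe_prodEquivOfIsCompl] using ho _ (b i).2 _ (c j).2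
    · simpa [gram, Submodule.coe_prodEquivOfIsCompl] using hB.orth (ho _ (b j).2 _ (c i).2)
    · simp [gram, Submodule.coe_prodEquivOfIsCompl]
  rw [this, Matrix.det_fromBlocks_zero₁₂, hb, hc', star_mul]
  ring

theorem Herm.det_ne_zero (hB : Herm B) {ι : Type} [Fintype ι] [DecidableEq ι]
    (b : Module.Basis ι L V) : (gram B b).det ≠ 0 := by
  intro h
  obtain ⟨v, hv, h0⟩ := Matrix.exists_mulVec_eq_zero_iff.2 h
  apply hv
  have : (∑ i, v i • b i) = 0 := by
    apply hB.nondeg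
    intro w
    apply hB.orth
    have : ∀ j, B (b j) (∑ i, v i • b i) = 0 := by
      intro j
      have := congrFun h0 j
      simp only [Matrix.mulVec, dotProduct, gram, Matrix.of_apply, Pi.zero_apply] at this
      simpa [map_sum, mul_comm] using this
    generalize (∑ i, v i • b i) = u at this ⊢
    rw [← b.sum_repr w]
    simp only [map_sum, LinearMap.sum_apply, map_smulₛₗ, LinearMap.smul_apply]
    apply Finset.sum_eq_zero
    intro i _
    rw [this]; simp
  have := (Fintype.linearIndependent_iff.1 b.linearIndependent) v this
  funext i; simpa using this i

/-- splitting with respect to a unitary operator of finite order -/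
theorem split [CharZero L] {u : V →ₗ[L] V} (hu : Unit' B u) {m : ℕ} (hm : 0 < m)
    (hum : u ^ m = 1) :
    IsCompl (LinearMap.ker (u - 1)) (LinearMap.ker (∑ i ∈ Finset.range m, u ^ i)) ∧
    ∀ v ∈ LinearMap.ker (u - 1), ∀ w ∈ LinearMap.ker (∑ i ∈ Finset.range m, u ^ i), B v w = 0 := by
  have hm0 : (m : L) ≠ 0 := Nat.cast_ne_zero.2 hm.ne'
  have hfix : ∀ v ∈ LinearMap.ker (u - 1), ∀ i, (u ^ i) v = v := by
    intro v hv i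
    have hv' : u v = v := by
      rw [LinearMap.mem_ker, LinearMap.sub_apply, sub_eq_zero] at hv; exact hv
    induction i with
    | zero => rfl
    | succ n ih => rw [pow_succ, Module.End.mul_apply, hv', ih]
  refine ⟨⟨?_, ?_⟩, ?_⟩
  · rw [Submodule.disjoint_def]
    intro v hv hv2
    rw [LinearMap.mem_ker, LinearMap.sum_apply] at hv2
    rw [Finset.sum_congr rfl (fun i _ => hfix v hv i)] at hv2
    simp only [Finset.sum_const, Finset.card_range, ← Nat.cast_smul_eq_nsmul L] at hv2
    exact (smul_eq_zero.1 hv2).resolve_left hm0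
  · rw [codisjoint_iff, eq_top_iff]
    intro v _
    rw [Submodule.mem_sup]
    set S := ∑ i ∈ Finset.range m, u ^ i with hS
    have h1 : (u - 1) * S = 0 := by
      rw [hS, mul_geom_sum, hum, sub_self]
    have hfS : S v ∈ LinearMap.ker (u - 1) := by
      rw [LinearMap.mem_ker, ← Module.End.mul_apply, h1]; rfl
    have hSS : S (S v) = (m : L) • S v := by
      conv_lhs => rw [hS]
      rw [LinearMap.sum_apply, Finset.sum_congr rfl (fun i _ => hfix _ hfS i)]
      simp [← Nat.cast_smul_eq_nsmul L]
    refine ⟨(m : L)⁻¹ • S v, Submodule.smul_mem _ _ hfS, v - (m : L)⁻¹ • S v, ?_, by abel⟩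
    rw [LinearMap.mem_ker, map_sub, map_smul, hSS, smul_smul, inv_mul_cancel₀ hm0, one_smul,
      sub_self]
  · intro v hv w hw
    have hpow : ∀ i, ∀ w, B v ((u ^ i) w) = B v w := by
      intro i
      induction i with
      | zero => intro w; rfl
      | succ n ih =>
        intro w
        rw [pow_succ, Module.End.mul_apply, ih]
        have := hu v w
        have h1 := hfix v hv 1
        rw [pow_one] at h1
        rwa [h1] at this
    have h2 : B v ((∑ i ∈ Finset.range m, u ^ i) w) = (m : L) * B v w := by
      rw [LinearMap.sum_apply, map_sum, Finset.sum_congr rfl (fun i _ => hpow i w)]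
      simp
    rw [LinearMap.mem_ker.1 hw, map_zero] at h2
    exact (mul_eq_zero.1 h2.symm).resolve_left hm0

end

/-- determinant of a block matrix with commuting lower blocks -/
theorem det_blocks_comm {R ι : Type} [CommRing R] [Fintype ι] [DecidableEq ι]
    (A B C D : Matrix ι ι R) (h : C * D = D * C) :
    (Matrix.fromBlocks A B C D).det = (A * D - B * C).det := by
  have key : ∀ {S : Type} [CommRing S] (A B C D : Matrix ι ι S) (h : C * D = D * C),
      (Matrix.fromBlocks A B C D).det * D.det = (A * D - B * C).det * D.det := by
    intro S _ A B C D h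
    have : Matrix.fromBlocks A B C D * Matrix.fromBlocks D 0 (-C) 1 =
        Matrix.fromBlocks (A * D - B * C) B 0 D := by
      rw [Matrix.fromBlocks_multiply]
      simp [h, sub_eq_add_neg]
    have h2 := congrArg Matrix.det this
    rw [Matrix.det_mul, Matrix.det_fromBlocks_zero₁₂, Matrix.det_fromBlocks_zero₂₁] at h2
    simpa using h2
  let f : R →+* Polynomial R := Polynomial.C
  let D' : Matrix ι ι (Polynomial R) := Matrix.charmatrix (-D)
  have hD' : D' = Matrix.scalar ι Polynomial.X + f.mapMatrix D := by
    simp only [D', Matrix.charmatrix, map_neg, sub_neg_eq_add]; rfl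
  have hcomm : f.mapMatrix C * D' = D' * f.mapMatrix C := by
    rw [hD', mul_add, add_mul, ← map_mul, ← map_mul, h]
    congr 1
    exact ((Matrix.scalar_commute _ (fun r => Commute.all _ r) _).eq).symm
  have h1 := key (f.mapMatrix A) (f.mapMatrix B) (f.mapMatrix C) D' hcomm
  have hmon : D'.det.Monic := Matrix.charpoly_monic (-D)
  have h2 := hmon.isRegular.right h1
  let g : Polynomial R →+* R := Polynomial.evalRingHom 0
  have hgf : ∀ M : Matrix ι ι R, g.mapMatrix (f.mapMatrix M) = M := by
    intro M; ext i j; simp [g, f]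
  have hgD : g.mapMatrix D' = D := by
    rw [hD', map_add, hgf]
    ext i j
    by_cases hij : i = j
    · subst hij; simp [g]
    · simp [g, hij]
  have h3 := congrArg g h2
  rw [RingHom.map_det, RingHom.map_det] at h3
  simp only [map_sub, map_mul, hgf, hgD] at h3
  rw [← h3]
  congr 1
  ext (i | i) (j | j)
  · simp [g, f]
  · simp [g, f]
  · simp [g, f]
  · have := congrFun (congrFun hgD i) j
    simpa using this.symm
end Paper

namespace Paper

set_option maxHeartbeats 1000000 in
theorem lemA0 {L V : Type} [Field L] [StarRing L] [AddCommGroup V] [Module L V] [CharZero L]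
    {B : V →ₗ⋆[L] V →ₗ[L] L} [FiniteDimensional L V] (hB : Herm B)
    (J D D' κ κi t t' : Module.End L V) (r : L) (hr : r ≠ 0) (hrs : star r = r)
    (hJ : J * J = 1) (hD : Adj B D D) (hDi : Function.Injective D)
    (hDJ : ∀ v w, B (D (J v)) (J w) = - B (D v) w)
    (hκ : κ * κi = 1) (hκ' : κi * κ = 1) (hJκ : J * κ = -(κ * J))
    (hκD : κ * D = D * κ) (hκD' : κ * D' = D' * κ) (hJD : J * D = D' * J)
    (hDD : D * D' = -(r • (t * t'))) (hDD' : D' * D = D * D')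
    (htJ : t * J = J * t) (htJ' : t' * J = J * t')
    (htD : t * D = D * t) (htκ' : t' * κ = κ * t') (htt : Adj B t t') :
    ∃ d, Module.finrank L V = 2 * d ∧ Disc B (r ^ d) := by
  have h2 : (2 : L) ≠ 0 := two_ne_zero
  let F : Submodule L V := LinearMap.ker (J - 1)
  have hF : ∀ v, v ∈ F ↔ J v = v := by
    intro v
    rw [LinearMap.mem_ker, LinearMap.sub_apply, sub_eq_zero]; rfl
  have hJJ : ∀ v, J (J v) = v := fun v => by
    rw [← Module.End.mul_apply, hJ]; rfl
  have hJκv : ∀ v, J (κ v) = -κ (J v) := fun v => by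
    rw [← Module.End.mul_apply, hJκ]; rfl
  have hκκ : ∀ v, κ (κi v) = v := fun v => by
    rw [← Module.End.mul_apply, hκ]; rfl
  have hκκ' : ∀ v, κi (κ v) = v := fun v => by
    rw [← Module.End.mul_apply, hκ']; rfl
  have hJκi : J * κi = -(κi * J) := by
    calc J * κi = κi * (κ * J) * κi := by rw [← mul_assoc, hκ', one_mul]
      _ = -(κi * (J * κ) * κi) := by rw [hJκ]; simp
      _ = _ := by rw [mul_assoc, mul_assoc, hκ, mul_one]
  have hJκiv : ∀ v, J (κi v) = -κi (J v) := fun v => by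
    rw [← Module.End.mul_apply, hJκi]; rfl
  let π : V →ₗ[L] F := LinearMap.codRestrict F ((2 : L)⁻¹ • (1 + J)) (by
    intro v; rw [hF]; simp [hJJ, add_comm])
  have hπ : ∀ v ∈ F, (π v : V) = v := by
    intro v hv
    have := (hF v).1 hv
    simp only [π, LinearMap.codRestrict_apply, LinearMap.smul_apply, LinearMap.add_apply,
      Module.End.one_apply, this]
    rw [← two_smul L v, smul_smul, inv_mul_cancel₀ h2, one_smul]
  let f := Module.finBasis L F
  set d := Module.finrank L F with hd
  let mt : Module.End L V → Matrix (Fin d) (Fin d) L := fun T =>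
    LinearMap.toMatrix f f (π ∘ₗ T ∘ₗ F.subtype)
  have mtE : ∀ T : Module.End L V, T * J = J * T → ∀ j, T (f j) = ∑ i, mt T i j • (f i : V) := by
    intro T hT j
    have h1 : T (f j) ∈ F := by
      rw [hF, ← Module.End.mul_apply, ← hT, Module.End.mul_apply, (hF _).1 (f j).2]
    have h3 := f.sum_repr (π (T (f j)))
    have h4 := congrArg (fun v : F => (v : V)) h3
    simp only [hπ _ h1] at h4
    rw [← h4]
    simp only [Submodule.coe_sum, Submodule.coe_smul]
    refine Finset.sum_congr rfl fun i _ => ?_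
    simp [mt, LinearMap.toMatrix_apply]
  have mtM : ∀ S T : Module.End L V, T * J = J * T → mt (S * T) = mt S * mt T := by
    intro S T hT
    simp only [mt]
    rw [← LinearMap.toMatrix_mul]
    congr 1
    ext v
    simp only [LinearMap.comp_apply, Module.End.mul_apply, Submodule.subtype_apply]
    have hTv : T v ∈ F := by
      rw [hF, ← Module.End.mul_apply, ← hT, Module.End.mul_apply, (hF _).1 v.2]
    rw [hπ _ hTv]
  have mtS : ∀ (c : L) T, mt (c • T) = c • mt T := by
    intro c T
    simp only [mt]
    rw [← map_smul]
    congr 1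
    ext v; simp
  have mtA : ∀ S T, mt (S - T) = mt S - mt T := by
    intro S T
    simp only [mt]
    rw [← map_sub]
    congr 1
    ext v; simp
  let e0 : (F × F) →ₗ[L] V := F.subtype.coprod (κ ∘ₗ F.subtype)
  have he0 : Function.Bijective e0 := by
    constructor
    · rw [← LinearMap.ker_eq_bot, LinearMap.ker_eq_bot']
      rintro ⟨a, b⟩ hab
      have h1 : (a : V) + κ b = 0 := by simpa [e0] using hab
      have h3 : (a : V) - κ b = 0 := by
        have := congrArg J h1
        rw [map_add, hJκv, (hF _).1 a.2, (hF _).1 b.2, map_zero] at this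
        rw [sub_eq_add_neg]; exact this
      have h4 : (2 : L) • (a : V) = 0 := by
        rw [two_smul]
        calc (a : V) + a = ((a : V) + κ b) + (a - κ b) := by abel
          _ = 0 := by rw [h1, h3, add_zero]
      have ha : (a : V) = 0 := (smul_eq_zero.1 h4).resolve_left h2
      have hb : (b : V) = 0 := by
        rw [ha, zero_add] at h1
        rw [← hκκ' b, h1, map_zero]
      ext <;> simp [ha, hb]
    · intro v
      refine ⟨(⟨(2 : L)⁻¹ • (v + J v), ?_⟩, ⟨(2 : L)⁻¹ • κi (v - J v), ?_⟩), ?_⟩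
      · rw [hF]; simp [hJJ, add_comm]
      · rw [hF, map_smul, hJκiv, map_sub, hJJ]; simp
      · simp only [e0, LinearMap.coprod_apply, Submodule.subtype_apply, LinearMap.comp_apply,
          map_smul, hκκ]
        rw [← smul_add]
        rw [show v + J v + (v - J v) = (2 : L) • v by rw [two_smul]; abel, smul_smul,
          inv_mul_cancel₀ h2, one_smul]
  let e := LinearEquiv.ofBijective e0 he0
  let b : Module.Basis (Fin d ⊕ Fin d) L V := (f.prod f).map e
  have hb1 : ∀ i, b (Sum.inl i) = f i := by intro i; simp [b, e, e0]
  have hb2 : ∀ i, b (Sum.inr i) = κ (f i) := by intro i; simp [b, e, e0]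
  have hfJ : ∀ i, J (f i) = f i := fun i => (hF _).1 (f i).2
  refine ⟨d, ?_, ?_⟩
  · rw [Module.finrank_eq_card_basis b]; simp [two_mul]
  -- J commutation facts
  have hJD' : J * D' = D * J := by
    have : J * (J * D) * J = J * (D' * J) * J := by rw [hJD]
    rw [← mul_assoc, hJ, one_mul, mul_assoc, mul_assoc, hJ, mul_one] at this
    exact this.symm
  let P : Module.End L V := (2 : L)⁻¹ • (D + D')
  let D2 : Module.End L V := (2 : L)⁻¹ • (D - D')
  let E : Module.End L V := κi * D2
  let K : Module.End L V := κ * κ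
  have hPJ : P * J = J * P := by
    simp only [P, smul_mul_assoc, mul_smul_comm, add_mul, mul_add, hJD, hJD', add_comm]
  have hD2J : D2 * J = -(J * D2) := by
    simp only [D2, smul_mul_assoc, mul_smul_comm, sub_mul, mul_sub, hJD, hJD', ← smul_neg, neg_sub]
  have hEJ : E * J = J * E := by
    simp only [E]
    rw [← mul_assoc, hJκi, mul_assoc, hD2J, neg_mul, mul_neg, mul_assoc]
  have hKJ : K * J = J * K := by
    simp only [K]
    rw [← mul_assoc, hJκ, neg_mul, mul_assoc κ J κ, hJκ, mul_neg, neg_neg, mul_assoc]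
  have hκD2 : κ * D2 = D2 * κ := by
    simp only [D2, smul_mul_assoc, mul_smul_comm, sub_mul, mul_sub, hκD, hκD']
  have hκP : κ * P = P * κ := by
    simp only [P, smul_mul_assoc, mul_smul_comm, add_mul, mul_add, hκD, hκD']
  have kicomm : ∀ T : Module.End L V, κ * T = T * κ → κi * T = T * κi := by
    intro T hT
    calc κi * T = κi * (T * κ) * κi := by rw [mul_assoc, mul_assoc, hκ, mul_one]
      _ = κi * (κ * T) * κi := by rw [hT]
      _ = _ := by rw [← mul_assoc, hκ', one_mul]
  have hPD2 : P * D2 = D2 * P := by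
    have h1 : (D + D') * (D - D') = (D - D') * (D + D') := by
      rw [add_mul, mul_sub, mul_sub, sub_mul, mul_add, mul_add, hDD']; abel
    simp only [P, D2, smul_mul_smul_comm, h1]
  have hEP : E * P = P * E := by
    simp only [E]
    rw [mul_assoc, ← hPD2, ← mul_assoc, kicomm P hκP, mul_assoc]
  have hDs : D = P + D2 := by
    simp only [P, D2]
    rw [← smul_add, show D + D' + (D - D') = (2 : L) • D by rw [two_smul]; abel, smul_smul,
      inv_mul_cancel₀ h2, one_smul]
  have hκE : κ * E = D2 := by simp only [E]; rw [← mul_assoc, hκ, one_mul]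
  have hDmat : D = Matrix.toLin b b (Matrix.fromBlocks (mt P) (mt K * mt E) (mt E) (mt P)) := by
    apply b.ext
    rintro (j | j)
    · rw [Matrix.toLin_self, Fintype.sum_sum_type]
      simp only [hb1, hb2, Matrix.fromBlocks_apply₁₁, Matrix.fromBlocks_apply₂₁]
      simp only [← map_smul]
      rw [← map_sum, ← mtE P hPJ, ← mtE E hEJ, ← Module.End.mul_apply κ, hκE]
      conv_lhs => rw [hDs]
      rfl
    · rw [Matrix.toLin_self, Fintype.sum_sum_type]
      simp only [hb1, hb2, Matrix.fromBlocks_apply₁₂, Matrix.fromBlocks_apply₂₂]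
      simp only [← map_smul]
      rw [← map_sum, ← mtE P hPJ, ← mtM K E hEJ,
        ← mtE (K * E) (by rw [mul_assoc, hEJ, ← mul_assoc, hKJ, mul_assoc])]
      rw [← Module.End.mul_apply, ← Module.End.mul_apply, ← LinearMap.add_apply]
      congr 1
      simp only [K]
      rw [mul_assoc κ κ E, hκE, hDs, add_mul, ← hκD2, ← hκP, add_comm]
  have hcommE : mt E * mt P = mt P * mt E := by
    rw [← mtM _ _ hPJ, ← mtM _ _ hEJ, hEP]
  have hPPKEE : P * P - K * E * E = D * D' := by
    have h1 : K * E * E = D2 * D2 := by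
      simp only [K]
      rw [mul_assoc κ κ E, hκE, hκD2, mul_assoc, hκE]
    rw [h1]
    have h5 : D' = P - D2 := by
      simp only [P, D2]
      rw [← smul_sub, show D + D' - (D - D') = (2 : L) • D' by rw [two_smul]; abel, smul_smul,
        inv_mul_cancel₀ h2, one_smul]
    rw [h5]; conv_rhs => rw [hDs]
    rw [add_mul, mul_sub, mul_sub, hPD2]; abel
  have hdetD : LinearMap.det D = (-r) ^ d * ((mt t).det * (mt t').det) := by
    conv_lhs => rw [hDmat]
    rw [LinearMap.det_toLin, det_blocks_comm _ _ _ _ hcommE]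
    rw [← mtM _ _ hPJ, ← mtM _ _ hEJ, ← mtM _ _ hEJ, ← mtA, hPPKEE, hDD,
      show -(r • (t * t')) = (-r) • (t * t') by rw [neg_smul], mtS, mtM _ _ htJ',
      Matrix.det_smul, Matrix.det_mul]
    simp
  -- the form B(D.,.)
  have hD0 : ∀ v w, J v = v → J w = w → B (D v) w = 0 := by
    intro v w hv hw
    have := hDJ v w
    rw [hv, hw] at this
    have h3 : (2 : L) * B (D v) w = 0 := by rw [two_mul]; nth_rewrite 1 [this]; ring
    exact (mul_eq_zero.1 h3).resolve_left h2
  have hD1 : ∀ v w, J v = -v → J w = -w → B (D v) w = 0 := by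
    intro v w hv hw
    have := hDJ v w
    rw [hv, hw] at this
    simp only [map_neg, LinearMap.neg_apply, neg_neg] at this
    have h3 : (2 : L) * B (D v) w = 0 := by rw [two_mul]; nth_rewrite 1 [this]; ring
    exact (mul_eq_zero.1 h3).resolve_left h2
  let M : Matrix (Fin d) (Fin d) L := Matrix.of fun i j => B (D (f i)) (κ (f j))
  have hJkf : ∀ i, J (κ (f i)) = -κ (f i) := fun i => by rw [hJκv, hfJ]
  have hGD : (Matrix.of fun i j => B (D (b i)) (b j)) = Matrix.fromBlocks 0 M Mᴴ 0 := by
    ext (i | i) (j | j)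
    · simpa [hb1] using hD0 _ _ (hfJ i) (hfJ j)
    · simp [hb1, hb2, M]
    · simp only [hb1, hb2, Matrix.of_apply, Matrix.fromBlocks_apply₂₁, M,
        Matrix.conjTranspose_apply]
      rw [hD, ← hB.symm]
    · simpa [hb2] using hD1 _ _ (hJkf i) (hJkf j)
  have hGD2 : (Matrix.of fun i j => B (D (b i)) (b j)) = gram B b * LinearMap.toMatrix b b D := by
    ext i j
    simp only [Matrix.of_apply, Matrix.mul_apply, gram]
    rw [hD]
    conv_lhs => rw [← b.sum_repr (D (b j))]
    rw [map_sum]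
    refine Finset.sum_congr rfl fun l _ => ?_
    rw [map_smul, smul_eq_mul, mul_comm, LinearMap.toMatrix_apply]
  have hdetM : (Matrix.fromBlocks 0 M Mᴴ 0 : Matrix (Fin d ⊕ Fin d) (Fin d ⊕ Fin d) L).det =
      (-1) ^ d * (M.det * star M.det) := by
    rw [det_blocks_comm _ _ _ _ (by simp)]
    rw [zero_mul, zero_sub, Matrix.det_neg, Matrix.det_mul, Matrix.det_conjTranspose]; simp
  have hdet : (gram B b).det * LinearMap.det D = (-1) ^ d * (M.det * star M.det) := by
    rw [← hdetM, ← hGD, hGD2, Matrix.det_mul, LinearMap.det_toMatrix]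
  have hDne : LinearMap.det D ≠ 0 := by
    have : IsUnit D := (Module.End.isUnit_iff D).2 ⟨hDi, LinearMap.injective_iff_surjective.1 hDi⟩
    exact (LinearMap.isUnit_det D this).ne_zero
  have hgne : (gram B b).det ≠ 0 := hB.det_ne_zero b
  have hMne : M.det ≠ 0 := by
    intro h
    rw [h, zero_mul, mul_zero] at hdet
    exact (mul_ne_zero hgne hDne) hdet
  have hTM : (mt t)ᴴ * M = M * mt t' := by
    have h1 : (mt t)ᴴ * M = Matrix.of fun i j => B (D (t (f i))) (κ (f j)) := by
      ext i j
      simp only [Matrix.mul_apply, Matrix.conjTranspose_apply, M, Matrix.of_apply]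
      rw [mtE t htJ]
      simp only [map_sum, LinearMap.sum_apply, map_smulₛₗ, LinearMap.smul_apply, smul_eq_mul,
        RingHom.id_apply, starRingEnd_apply]
    have h3 : M * mt t' = Matrix.of fun i j => B (D (f i)) (κ (t' (f j))) := by
      ext i j
      simp only [Matrix.mul_apply, M, Matrix.of_apply]
      rw [mtE t' htJ']
      simp only [map_sum, map_smul, smul_eq_mul]
      exact Finset.sum_congr rfl fun l _ => mul_comm _ _
    rw [h1, h3]
    ext i j
    simp only [Matrix.of_apply]
    rw [← Module.End.mul_apply D t, ← htD, Module.End.mul_apply, htt, ← Module.End.mul_apply t',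
      htκ', Module.End.mul_apply]
  have hdt : (mt t').det = star (mt t).det := by
    have := congrArg Matrix.det hTM
    rw [Matrix.det_mul, Matrix.det_mul, Matrix.det_conjTranspose, mul_comm] at this
    exact (mul_left_cancel₀ hMne this).symm
  rw [hdetD, hdt] at hdet
  have htne : (mt t).det ≠ 0 := by
    intro h
    rw [hdetD, h] at hDne; simp at hDne
  have hstne : star (mt t).det ≠ 0 := star_ne_zero.2 htne
  refine ⟨_, inferInstance, inferInstance, b, M.det * (mt t).det⁻¹ * (r ^ d)⁻¹,
    mul_ne_zero (mul_ne_zero hMne (inv_ne_zero htne)) (inv_ne_zero (pow_ne_zero _ hr)), ?_⟩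
  rw [neg_pow, mul_assoc, mul_left_comm] at hdet
  have hdet' := mul_left_cancel₀ (pow_ne_zero d (by norm_num : (-1 : L) ≠ 0)) hdet
  simp only [star_mul, star_inv₀, star_pow, hrs]
  have hrd := pow_ne_zero d hr
  field_simp
  linear_combination hdet'

end Paper

namespace Paper

theorem cyc_dom {D : Type} [CommRing D] [IsDomain D] {p m : ℕ} (hp : p = 2 * m + 1)
    {ω : D} (h : IsPrimitiveRoot ω p) :
    ∏ i ∈ Finset.range m, ((Polynomial.X - Polynomial.C (ω ^ (i + 1))) *
      (Polynomial.X - Polynomial.C (ω ^ (p - (i + 1))))) =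
      ∑ i ∈ Finset.range p, (Polynomial.X : Polynomial D) ^ i := by
  have hp0 : 0 < p := by omega
  have : NeZero p := ⟨hp0.ne'⟩
  have h1 : ∏ i ∈ Finset.range p, (Polynomial.X - Polynomial.C (ω ^ i)) =
      (Polynomial.X : Polynomial D) ^ p - 1 := by
    rw [Polynomial.X_pow_sub_one_eq_prod hp0 h]
    symm
    refine Finset.prod_bij' (i := fun μ hμ => (h.eq_pow_of_pow_eq_one
      ((Polynomial.mem_nthRootsFinset hp0 (1 : D)).1 hμ)).choose) (j := fun i _ => ω ^ i)
      ?_ ?_ ?_ ?_ ?_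
    · intro μ hμ
      have := (h.eq_pow_of_pow_eq_one
        ((Polynomial.mem_nthRootsFinset hp0 (1 : D)).1 hμ)).choose_spec
      exact Finset.mem_range.2 this.1
    · intro i hi
      rw [Polynomial.mem_nthRootsFinset hp0, ← pow_mul, mul_comm, pow_mul, h.pow_eq_one, one_pow]
    · intro μ hμ
      exact (h.eq_pow_of_pow_eq_one
        ((Polynomial.mem_nthRootsFinset hp0 (1 : D)).1 hμ)).choose_spec.2
    · intro i hi
      have hm : ω ^ i ∈ Polynomial.nthRootsFinset p (1 : D) := by
        rw [Polynomial.mem_nthRootsFinset hp0, ← pow_mul, mul_comm, pow_mul, h.pow_eq_one, one_pow]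
      have := (h.eq_pow_of_pow_eq_one
        ((Polynomial.mem_nthRootsFinset hp0 (1 : D)).1 hm)).choose_spec
      exact h.pow_inj this.1 (Finset.mem_range.1 hi) this.2
    · intro μ hμ
      rw [(h.eq_pow_of_pow_eq_one
        ((Polynomial.mem_nthRootsFinset hp0 (1 : D)).1 hμ)).choose_spec.2]
  have h2 : (Polynomial.X : Polynomial D) - 1 ≠ 0 := by
    have := Polynomial.X_sub_C_ne_zero (1 : D)
    simpa using this
  apply mul_right_cancel₀ h2
  rw [geom_sum_mul, ← h1]
  have h3 : ∏ i ∈ Finset.range p, ((Polynomial.X : Polynomial D) - Polynomial.C (ω ^ i)) =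
     (∏ i ∈ Finset.range (2 * m), (Polynomial.X - Polynomial.C (ω ^ (i + 1)))) *
      (Polynomial.X - 1) := by
    rw [hp, Finset.prod_range_succ']; simp
  rw [h3]
  congr 1
  rw [two_mul, Finset.prod_range_add, Finset.prod_mul_distrib]
  congr 1
  rw [← Finset.prod_range_reflect]
  apply Finset.prod_congr rfl
  intro i hi
  have := Finset.mem_range.1 hi
  rw [show p - (m - 1 - i + 1) = m + i + 1 by omega]

theorem cyc_ring {R : Type} [CommRing R] {p m : ℕ} (hpp : p.Prime) (hp : p = 2 * m + 1)
    {x xi : R} (hx : x * xi = 1) (hs : ∑ i ∈ Finset.range p, x ^ i = 0) (Y : R) :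
    (∏ i ∈ Finset.range m, (Y * xi ^ (i + 1) - x ^ (i + 1))) *
      (∏ i ∈ Finset.range m, (Y * x ^ (i + 1) - xi ^ (i + 1))) = ∑ i ∈ Finset.range p, Y ^ i := by
  have : Fact p.Prime := ⟨hpp⟩
  have hxp : x ^ p = 1 := by
    have := geom_sum_mul x p
    rw [hs, zero_mul] at this
    exact (sub_eq_zero.1 this.symm)
  let D := AdjoinRoot (Polynomial.cyclotomic p ℤ)
  have hpr : Prime (Polynomial.cyclotomic p ℤ) :=
    (Polynomial.cyclotomic.irreducible hpp.pos).prime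
  have : IsDomain D := AdjoinRoot.isDomain_of_prime hpr
  let ζ : D := AdjoinRoot.root _
  have hζs : ∑ i ∈ Finset.range p, ζ ^ i = 0 := by
    have := AdjoinRoot.eval₂_root (Polynomial.cyclotomic p ℤ)
    have h2 : ∀ g : Polynomial ℤ, g = Polynomial.cyclotomic p ℤ →
        Polynomial.eval₂ (AdjoinRoot.of (Polynomial.cyclotomic p ℤ)) ζ g = 0 := by
      rintro g rfl; exact this
    have h3 := h2 _ (Polynomial.cyclotomic_prime ℤ p).symm
    simpa [Polynomial.eval₂_finsetSum] using h3
  have hζp : ζ ^ p = 1 := by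
    have := geom_sum_mul ζ p
    rw [hζs, zero_mul] at this
    exact (sub_eq_zero.1 this.symm)
  have hdeg : (Polynomial.cyclotomic p ℤ).degree ≠ 0 := by
    rw [Polynomial.degree_cyclotomic]
    simp [Nat.totient_prime hpp]
    have := hpp.one_lt; omega
  have : CharZero D := by
    have hinj : Function.Injective (AdjoinRoot.of (Polynomial.cyclotomic p ℤ)) :=
      AdjoinRoot.of.injective_of_degree_ne_zero hdeg
    exact charZero_of_injective_ringHom hinj
  have hζ1 : ζ ≠ 1 := by
    intro h
    rw [h] at hζs
    simp at hζs
    exact hpp.ne_zero hζs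
  have hζ : IsPrimitiveRoot ζ p := by
    exact IsPrimitiveRoot.iff_orderOf.2 (orderOf_eq_prime hζp hζ1)
  have hω : IsPrimitiveRoot (ζ ^ 2) p := by
    apply hζ.pow_of_coprime
    rw [Nat.coprime_primes Nat.prime_two hpp]; omega
  have key := cyc_dom hp hω
  let f : D →+* R := AdjoinRoot.lift (Int.castRingHom R) x (by
    rw [Polynomial.cyclotomic_prime]
    simpa [Polynomial.eval₂_finsetSum] using hs)
  have hf : f ζ = x := AdjoinRoot.lift_root _
  have k2 := congrArg (Polynomial.eval₂ f Y) key
  rw [Polynomial.eval₂_finsetProd, Polynomial.eval₂_finsetSum] at k2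
  simp only [Polynomial.eval₂_mul, Polynomial.eval₂_sub, Polynomial.eval₂_X, Polynomial.eval₂_C,
    Polynomial.eval₂_pow, map_pow, hf] at k2
  rw [← k2, ← Finset.prod_mul_distrib]
  apply Finset.prod_congr rfl
  intro i hi
  have hi' := Finset.mem_range.1 hi
  have e1 : x ^ (i + 1) * xi ^ (i + 1) = 1 := by rw [← mul_pow, hx, one_pow]
  have e2 : (x ^ 2) ^ (p - (i + 1)) = xi ^ (i + 1) * xi ^ (i + 1) := by
    have e3 : (x ^ 2) ^ (p - (i + 1)) * (x ^ (i + 1) * x ^ (i + 1)) = 1 := by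
      rw [← pow_add, ← pow_mul, ← pow_add,
        show 2 * (p - (i + 1)) + (i + 1 + (i + 1)) = p * 2 by omega, pow_mul, hxp, one_pow]
    calc _ = (x ^ 2) ^ (p - (i + 1)) * ((x ^ (i + 1) * xi ^ (i + 1)) * (x ^ (i + 1) * xi ^ (i + 1))) := by
            rw [e1]; simp
      _ = (x ^ 2) ^ (p - (i + 1)) * (x ^ (i + 1) * x ^ (i + 1)) * (xi ^ (i + 1) * xi ^ (i + 1)) := by ring
      _ = _ := by rw [e3, one_mul]
  rw [e2, ← pow_mul, mul_comm 2, pow_mul]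
  generalize x ^ (i + 1) = a at *
  generalize xi ^ (i + 1) = b at *
  linear_combination (Y ^ 2 - a * b) * e1

end Paper

namespace Paper

def cf {R : Type} [CommRing R] (x xi : R) (m : ℕ) (Y : R) : R :=
  ∏ i ∈ Finset.range m, (Y * xi ^ (i + 1) - x ^ (i + 1))

def bf {R : Type} [CommRing R] (x xi : R) (m p k : ℕ) (y : R) : R :=
  ∏ j ∈ Finset.range k, cf x xi m (y ^ (p ^ j))

theorem bf_mul {R : Type} [CommRing R] {p m : ℕ} (hpp : p.Prime) (hp : p = 2 * m + 1)
    {x xi : R} (hx : x * xi = 1) (hs : ∑ i ∈ Finset.range p, x ^ i = 0) (y : R) (k : ℕ) :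
    (y - 1) * (bf x xi m p k y * bf xi x m p k y) = y ^ (p ^ k) - 1 := by
  induction k with
  | zero => simp [bf]
  | succ k ih =>
    unfold bf at ih ⊢
    rw [Finset.prod_range_succ, Finset.prod_range_succ]
    have h := cyc_ring hpp hp hx hs (y ^ p ^ k)
    have h2 : cf x xi m (y ^ p ^ k) * cf xi x m (y ^ p ^ k) =
      ∑ i ∈ Finset.range p, (y ^ p ^ k) ^ i := h
    have h3 := geom_sum_mul (y ^ p ^ k) p
    rw [← h2] at h3
    rw [pow_succ p, pow_mul, ← h3, ← ih]
    ring

theorem cf_adj {R : Type} [CommRing R] {x xi Y Yi : R} (hx : x * xi = 1) (hY : Y * Yi = 1)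
    (m : ℕ) : cf xi x m Yi = (-Yi) ^ m * cf x xi m Y := by
  unfold cf
  rw [← Finset.card_range m, ← Finset.prod_const, Finset.card_range, ← Finset.prod_mul_distrib]
  refine Finset.prod_congr rfl fun i _ => ?_
  linear_combination (xi ^ (i + 1)) * hY

theorem bf_adj {R : Type} [CommRing R] {x xi y yi : R} (hx : x * xi = 1) (hY : y * yi = 1)
    {m p : ℕ} (hp : p = 2 * m + 1) (k h : ℕ) (hh : 2 * h + 1 = p ^ k) :
    bf xi x m p k yi = (-yi) ^ h * bf x xi m p k y := by
  have hh' : h = ∑ j ∈ Finset.range k, p ^ j * m := by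
    have : ∀ k, 2 * (∑ j ∈ Finset.range k, p ^ j * m) + 1 = p ^ k := by
      intro k
      induction k with
      | zero => simp
      | succ k ih =>
        rw [Finset.sum_range_succ, pow_succ, ← ih]
        nth_rewrite 4 [hp]
        ring
    have := this k
    omega
  unfold bf
  rw [hh', ← Finset.prod_pow_eq_pow_sum, ← Finset.prod_mul_distrib]
  refine Finset.prod_congr rfl fun j _ => ?_
  have hodd : Odd (p ^ j) := Odd.pow ⟨m, hp⟩
  rw [cf_adj (Y := y ^ p ^ j) hx (by rw [← mul_pow, hY, one_pow]), pow_mul, hodd.neg_pow]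

theorem Adj.symm {L V : Type} [Field L] [StarRing L] [AddCommGroup V] [Module L V]
    {B : V →ₗ⋆[L] V →ₗ[L] L} (hB : Herm B) {f g : V →ₗ[L] V} (h : Adj B f g) : Adj B g f := by
  intro v w
  rw [← hB.symm, ← h, hB.symm]

section
variable {L V R : Type} [Field L] [StarRing L] [AddCommGroup V] [Module L V] [CommRing R]
  [Algebra L R] {B : V →ₗ⋆[L] V →ₗ[L] L} (φ : R →ₐ[L] Module.End L V)

theorem adj_mul {a a' b b' : R} (h1 : Adj B (φ a) (φ a')) (h2 : Adj B (φ b) (φ b')) :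
    Adj B (φ (a * b)) (φ (a' * b')) := by
  intro v w
  rw [mul_comm a' b', map_mul, map_mul, Module.End.mul_apply, Module.End.mul_apply, h1, h2]

theorem adj_one : Adj B (φ 1) (φ 1) := by
  intro v w
  rw [map_one]; rfl

theorem adj_sub {a a' b b' : R} (h1 : Adj B (φ a) (φ a')) (h2 : Adj B (φ b) (φ b')) :
    Adj B (φ (a - b)) (φ (a' - b')) := by
  intro v w
  simp [h1 v w, h2 v w]

theorem adj_add {a a' b b' : R} (h1 : Adj B (φ a) (φ a')) (h2 : Adj B (φ b) (φ b')) :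
    Adj B (φ (a + b)) (φ (a' + b')) := by
  intro v w
  simp [h1 v w, h2 v w]

theorem adj_smul {a a' : R} (h1 : Adj B (φ a) (φ a')) (c : L) :
    Adj B (φ (c • a)) (φ (star c • a')) := by
  intro v w
  rw [map_smul, map_smul, LinearMap.smul_apply, LinearMap.smul_apply, map_smulₛₗ, map_smul,
    LinearMap.smul_apply, h1]
  rfl

theorem adj_pow {a a' : R} (h1 : Adj B (φ a) (φ a')) (n : ℕ) :
    Adj B (φ (a ^ n)) (φ (a' ^ n)) := by
  induction n with
  | zero => simpa using adj_one φ
  | succ n ih => rw [pow_succ, pow_succ]; exact adj_mul φ ih h1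

theorem adj_prod {ι : Type} {f f' : ι → R} (s : Finset ι) (h : ∀ i, Adj B (φ (f i)) (φ (f' i))) :
    Adj B (φ (∏ i ∈ s, f i)) (φ (∏ i ∈ s, f' i)) := by
  classical
  induction s using Finset.induction_on with
  | empty => simpa using adj_one φ
  | insert a s ha ih => rw [Finset.prod_insert ha, Finset.prod_insert ha]; exact adj_mul φ (h a) ih

theorem adj_cf {x xi Y Yi : R} (h1 : Adj B (φ x) (φ xi)) (h2 : Adj B (φ xi) (φ x))
    (h3 : Adj B (φ Y) (φ Yi)) (m : ℕ) : Adj B (φ (cf x xi m Y)) (φ (cf xi x m Yi)) :=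
  adj_prod φ _ fun _ => adj_sub φ (adj_mul φ h3 (adj_pow φ h2 _)) (adj_pow φ h1 _)

theorem adj_bf {x xi Y Yi : R} (h1 : Adj B (φ x) (φ xi)) (h2 : Adj B (φ xi) (φ x))
    (h3 : Adj B (φ Y) (φ Yi)) (m p k : ℕ) : Adj B (φ (bf x xi m p k Y)) (φ (bf xi x m p k Yi)) :=
  adj_prod φ _ fun _ => adj_cf φ h1 h2 (adj_pow φ h3 _) _

/-- `s` intertwines -/
def Sw (s : Module.End L V) (a a' : R) : Prop := s * φ a = φ a' * s

variable {φ} {s : Module.End L V}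

set_option linter.unusedSectionVars false
theorem Sw.mul {a a' b b' : R} (h1 : Sw φ s a a') (h2 : Sw φ s b b') : Sw φ s (a * b) (a' * b') := by
  unfold Sw at *
  rw [map_mul, map_mul, ← mul_assoc, h1, mul_assoc, h2, mul_assoc]

theorem Sw.sub {a a' b b' : R} (h1 : Sw φ s a a') (h2 : Sw φ s b b') : Sw φ s (a - b) (a' - b') := by
  unfold Sw at *
  rw [map_sub, map_sub, mul_sub, sub_mul, h1, h2]

theorem Sw.smul {a a' : R} (h1 : Sw φ s a a') (c : L) : Sw φ s (c • a) (c • a') := by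
  unfold Sw at *
  rw [map_smul, map_smul, mul_smul_comm, smul_mul_assoc, h1]

theorem Sw.one : Sw φ s 1 1 := by
  unfold Sw
  rw [map_one, one_mul, mul_one]

theorem Sw.pow {a a' : R} (h1 : Sw φ s a a') (n : ℕ) : Sw φ s (a ^ n) (a' ^ n) := by
  induction n with
  | zero => simpa using Sw.one
  | succ n ih => rw [pow_succ, pow_succ]; exact ih.mul h1

theorem Sw.prod {ι : Type} {f f' : ι → R} (t : Finset ι) (h : ∀ i, Sw φ s (f i) (f' i)) :
    Sw φ s (∏ i ∈ t, f i) (∏ i ∈ t, f' i) := by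
  classical
  induction t using Finset.induction_on with
  | empty => simpa using Sw.one
  | insert a t ha ih => rw [Finset.prod_insert ha, Finset.prod_insert ha]; exact (h a).mul ih

theorem Sw.cf {x xi Y : R} (h1 : Sw φ s x xi) (h2 : Sw φ s xi x) (h3 : Sw φ s Y Y) (m : ℕ) :
    Sw φ s (cf x xi m Y) (Paper.cf xi x m Y) :=
  Sw.prod _ fun _ => (h3.mul (h2.pow _)).sub (h1.pow _)

theorem Sw.bf {x xi Y : R} (h1 : Sw φ s x xi) (h2 : Sw φ s xi x) (h3 : Sw φ s Y Y) (m p k : ℕ) :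
    Sw φ s (bf x xi m p k Y) (Paper.bf xi x m p k Y) :=
  Sw.prod _ fun _ => Sw.cf h1 h2 (h3.pow _) _

end

set_option maxHeartbeats 1000000 in
theorem lemA1 {L V R : Type} [Field L] [StarRing L] [AddCommGroup V] [Module L V] [CommRing R]
    [Algebra L R] [CharZero L] [FiniteDimensional L V] {B : V →ₗ⋆[L] V →ₗ[L] L} (hB : Herm B)
    (φ : R →ₐ[L] Module.End L V) {p m k h : ℕ} (hpp : p.Prime) (hp : p = 2 * m + 1)
    (hh : 2 * h + 1 = p ^ k) {x xi z zi : R} (hx : x * xi = 1)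
    (hs : ∑ i ∈ Finset.range p, x ^ i = 0) (hz : z * zi = 1)
    {μ : L} (hμ : μ * μ = 1) (hμs : star μ = μ) (hzμ : z ^ (h + 1) = μ • (1 : R))
    (hzinj : ∀ a : R, (z + 1) * a = 0 → a = 0) (hzinj' : Function.Injective (φ (z + 1)))
    (s : Module.End L V) (hsz : s * s = φ z) (hsx : Sw φ s x xi) (hsx' : Sw φ s xi x)
    (hsz' : Sw φ s z z) (hszi : Sw φ s zi zi)
    (hsu : Unit' B s) (hxa : Adj B (φ x) (φ xi)) (hza : Adj B (φ z) (φ zi))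
    {e : L} (he : e ≠ 0) (hes : star e = -e) {r : L} (hr : r ≠ 0) (hrs : star r = r)
    {k0 : R} (hk0 : -(μ • (k0 * k0)) = r • (1 : R)) (hk0s : Sw φ s k0 (-(μ • k0)))
    (hk0a : Adj B (φ k0) (φ (-(μ • k0)))) :
    ∃ d, Module.finrank L V = 2 * d ∧ Disc B (r ^ d) := by
  have hxi : xi * x = 1 := by rw [mul_comm, hx]
  have hxp : x ^ p = 1 := by
    have := geom_sum_mul x p
    rw [hs, zero_mul] at this
    exact (sub_eq_zero.1 this.symm)
  have hxa' := hxa.symm hB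
  have hza' := hza.symm hB
  have hneg : ∀ a : R, -a = (-1 : L) • a := fun a => by simp
  have ha1 : ∀ {a a' : R}, Adj B (φ a) (φ a') → Adj B (φ (-a)) (φ (-a')) := by
    intro a a' h1
    intro v w
    simp [h1 v w]
  -- b b' = z
  have hmumu : (μ • (1 : R)) * (μ • 1) = 1 := by
    rw [smul_mul_smul_comm, hμ, one_mul, one_smul]
  have hyq : (-zi) ^ (p ^ k) = -z := by
    have hodd : Odd (p ^ k) := ⟨h, by omega⟩
    rw [hodd.neg_pow]
    congr 1
    have h1 : z ^ (p ^ k) * z = 1 := by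
      rw [← pow_succ, show p ^ k + 1 = (h + 1) + (h + 1) by omega, pow_add, hzμ, hmumu]
    calc zi ^ (p ^ k) = zi ^ (p ^ k) * (z ^ (p ^ k) * z) := by rw [h1, mul_one]
      _ = (z * zi) ^ (p ^ k) * z := by rw [mul_pow]; ring
      _ = z := by rw [hz, one_pow, one_mul]
  set b := bf x xi m p k (-zi) with hb
  set b' := bf xi x m p k (-zi) with hb'
  have hbb : b * b' = z := by
    have h1 := bf_mul hpp hp hx hs (-zi) k
    rw [hyq, ← hb, ← hb'] at h1
    have h2 : (z + 1) * (b * b' - z) = 0 := by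
      linear_combination (-z) * h1 - b * b' * hz
    exact sub_eq_zero.1 (hzinj _ h2)
  have hyy : (-zi) * (-z) = 1 := by rw [neg_mul_neg, mul_comm, hz]
  have hzh : z ^ h = μ • zi := by
    calc z ^ h = z ^ (h + 1) * zi := by rw [pow_succ, mul_assoc, hz, mul_one]
      _ = _ := by rw [hzμ, smul_mul_assoc, one_mul]
  have hba : Adj B (φ b) (φ (μ • zi * b)) := by
    have h1 := adj_bf φ hxa hxa' (ha1 hza') m p k
    rw [bf_adj hx hyy hp k h hh, neg_neg, hzh] at h1
    exact h1
  have hba' : Adj B (φ b') (φ (μ • zi * b')) := by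
    have h1 := adj_bf φ hxa' hxa (ha1 hza') m p k
    rw [bf_adj hxi hyy hp k h hh, neg_neg, hzh] at h1
    exact h1
  have hsb : Sw φ s b b' := Sw.bf hsx hsx' (by rw [hneg]; exact hszi.smul _) m p k
  have hsb' : Sw φ s b' b := Sw.bf hsx' hsx (by rw [hneg]; exact hszi.smul _) m p k
  clear_value b b'
  set k0' : R := -(μ • k0) with hk0'
  have hk0k : k0 * k0' = r • (1 : R) := by rw [hk0', mul_neg, mul_smul_comm, hk0]
  have hmk : -(μ • k0') = k0 := by rw [hk0', smul_neg, neg_neg, smul_smul, hμ, one_smul]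
  have hk0s' : Sw φ s k0' k0 := by
    have h1 := (hk0s.smul (-μ))
    rw [neg_smul, neg_smul, ← hk0', hmk] at h1
    exact h1
  let t : R := e • (1 + zi)
  let t' : R := star e • (1 + z)
  have hta : Adj B (φ t) (φ t') := adj_smul φ (adj_add φ (adj_one φ) hza') e
  have hst : Sw φ s t t := by
    have : Sw φ s (1 + zi) (1 + zi) := by
      have h1 := (Sw.one (φ := φ) (s := s)).sub (hszi.smul (-1 : L))
      simpa using h1
    exact this.smul e
  have hst' : Sw φ s t' t' := by
    have : Sw φ s (1 + z) (1 + z) := by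
      have h1 := (Sw.one (φ := φ) (s := s)).sub (hsz'.smul (-1 : L))
      simpa using h1
    exact this.smul _
  have htt' : t' = -(z * t) := by
    simp only [t, t', hes]
    rw [mul_smul_comm, neg_smul, mul_add, hz, mul_one, add_comm]
  let D : R := t * k0 * b
  let D' : R := t * k0' * b'
  let j : R := b' * zi
  let J : Module.End L V := φ j * s
  have hJr : ∀ {a a' : R}, Sw φ s a a' → J * φ a = φ a' * J := by
    intro a a' h1
    simp only [J]
    rw [mul_assoc, h1, ← mul_assoc, ← mul_assoc, ← map_mul, ← map_mul, mul_comm]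
  -- kappa
  have hκinj : Function.Injective (φ (x - xi)) := by
    rw [← LinearMap.ker_eq_bot, LinearMap.ker_eq_bot']
    intro v hv
    have h0 : φ x v = φ xi v := by
      rw [map_sub, LinearMap.sub_apply, sub_eq_zero] at hv; exact hv
    have h1 : φ (x ^ 2) v = v := by
      rw [pow_two, map_mul, Module.End.mul_apply, h0, ← Module.End.mul_apply, ← map_mul, hx,
        map_one]; rfl
    have h2 : ∀ n, φ (x ^ (2 * n)) v = v := by
      intro n
      induction n with
      | zero => simp
      | succ n ih => rw [mul_add, pow_add, mul_one, map_mul, Module.End.mul_apply, h1, ih]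
    have h3 : φ x v = v := by
      have h4 : x * x ^ (2 * m) = 1 := by rw [← pow_succ', ← hp, hxp]
      have := h2 m
      conv_lhs => rw [← this]
      rw [← Module.End.mul_apply, ← map_mul, h4, map_one]; rfl
    have h5 : ∀ n, φ (x ^ n) v = v := by
      intro n
      induction n with
      | zero => simp
      | succ n ih => rw [pow_succ, map_mul, Module.End.mul_apply, h3, ih]
    have h6 : φ (∑ i ∈ Finset.range p, x ^ i) v = (p : L) • v := by
      rw [map_sum, LinearMap.sum_apply, Finset.sum_congr rfl (fun i _ => h5 i)]
      simp [← Nat.cast_smul_eq_nsmul L]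
    rw [hs, map_zero] at h6
    exact (smul_eq_zero.1 h6.symm).resolve_left (Nat.cast_ne_zero.2 hpp.ne_zero)
  obtain ⟨κi, hκ1, hκ2⟩ : ∃ κi, φ (x - xi) * κi = 1 ∧ κi * φ (x - xi) = 1 := by
    have : IsUnit (φ (x - xi)) :=
      (Module.End.isUnit_iff _).2 ⟨hκinj, LinearMap.injective_iff_surjective.1 hκinj⟩
    obtain ⟨u, hu⟩ := this
    exact ⟨(u⁻¹ : _), by rw [← hu]; simp, by rw [← hu]; simp⟩
  have hcomm : ∀ a c : R, φ a * φ c = φ c * φ a := fun a c => by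
    rw [← map_mul, ← map_mul, mul_comm]
  refine lemA0 hB J (φ D) (φ D') (φ (x - xi)) κi (φ t) (φ t') r hr hrs ?_ ?_ ?_ ?_ hκ1 hκ2 ?_
    (hcomm _ _) (hcomm _ _) ?_ ?_ (hcomm _ _) (hJr hst).symm (hJr hst').symm
    (hcomm _ _) (hcomm _ _) hta
  · have h1 : J * J = J * φ j * s := by simp only [J]; rw [← mul_assoc]
    rw [h1, hJr (hsb'.mul hszi)]
    simp only [J]
    rw [mul_assoc, mul_assoc, hsz, ← map_mul, ← map_mul,
      show b * zi * (j * z) = (b * b') * zi * (z * zi) by simp only [j]; ring, hbb, hz,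
      mul_one, map_one]
  · have h1 := adj_mul φ (adj_mul φ hta hk0a) hba
    have h2 : t' * k0' * (μ • zi * b) = D := by
      simp only [D]
      rw [htt']
      calc -(z * t) * k0' * (μ • zi * b) = (z * zi) * (t * (-(μ • k0')) * b) := by
            simp only [smul_mul_assoc, mul_smul_comm, mul_neg, neg_mul, smul_neg]
            congr 2; ring
        _ = _ := by rw [hz, one_mul, hmk]
    rw [h2] at h1
    exact h1
  · rw [← LinearMap.ker_eq_bot, LinearMap.ker_eq_bot']
    intro v hv
    have h1 : φ (k0' * b' * D) v = 0 := by
      rw [map_mul, Module.End.mul_apply, hv, map_zero]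
    have h2 : k0' * b' * D = (e * r) • (z + 1) := by
      calc k0' * b' * D = (k0 * k0') * (b * b') * t := by simp only [D]; ring
        _ = _ := by
          rw [hk0k, hbb]
          simp only [t, smul_mul_assoc, mul_smul_comm, one_mul, mul_add, hz, mul_one]
          rw [mul_smul, smul_add r]
    rw [h2, map_smul, LinearMap.smul_apply] at h1
    have h3 := (smul_eq_zero.1 h1).resolve_left (mul_ne_zero he hr)
    apply hzinj'
    rw [h3, map_zero]
  · intro v w
    have hja : Adj B (φ j) (φ (μ • zi * b' * z)) := adj_mul φ hba' hza'
    have hjz : μ • zi * b' * z = μ • b' := by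
      rw [smul_mul_assoc, smul_mul_assoc, show zi * b' * z = (z * zi) * b' by ring, hz, one_mul]
    rw [hjz] at hja
    have hja' := hja.symm hB
    simp only [J, Module.End.mul_apply]
    rw [← hja']
    rw [← Module.End.mul_apply (φ D), ← map_mul, ← Module.End.mul_apply (φ (μ • b')), ← map_mul]
    have h1 : μ • b' * (D * j) = μ • (b' * t * k0) := by
      rw [smul_mul_assoc]
      congr 1
      calc b' * (D * j) = b' * t * k0 * (b * b') * zi := by simp only [D, j]; ring
        _ = _ := by rw [hbb, mul_assoc, hz, mul_one]
    have h2 : Sw φ s (μ • (b * t * k0')) (μ • (b' * t * k0)) := ((hsb.mul hst).mul hk0s').smul _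
    rw [h1, ← Module.End.mul_apply _ s, ← h2, Module.End.mul_apply, hsu]
    have h3 : μ • (b * t * k0') = -D := by
      simp only [D]
      rw [← hmk]
      simp only [smul_mul_assoc, mul_smul_comm, mul_neg, neg_mul, neg_neg]
      congr 1; ring
    rw [h3]
    simp
  · have h1 : Sw φ s (x - xi) (-(x - xi)) := by
      have := hsx.sub hsx'
      rwa [neg_sub]
    rw [hJr h1, map_neg, neg_mul]
  · exact hJr ((hst.mul hk0s).mul hsb)
  · rw [← map_mul, ← map_mul, ← map_smul, ← map_neg]
    congr 1
    calc D * D' = t * t * (k0 * k0') * (b * b') := by simp only [D, D']; ring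
      _ = _ := by
        rw [hk0k, hbb, htt']
        simp only [smul_mul_assoc, mul_smul_comm, mul_neg, neg_mul, neg_neg, smul_neg, mul_one]
        congr 1; ring

end Paper

namespace Paper

theorem Unit'.adj {L V : Type} [Field L] [StarRing L] [AddCommGroup V] [Module L V]
    {B : V →ₗ⋆[L] V →ₗ[L] L} {f g : Module.End L V} (h : Unit' B f) (hfg : f * g = 1) :
    Adj B f g := by
  intro v w
  rw [← h v (g w), ← Module.End.mul_apply f g, hfg]; rfl

set_option maxHeartbeats 1000000 in
theorem lemA {L V : Type} [Field L] [StarRing L] [AddCommGroup V] [Module L V]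
    [CharZero L] [FiniteDimensional L V] {B : V →ₗ⋆[L] V →ₗ[L] L} (hB : Herm B)
    {p m k h : ℕ} (hpp : p.Prime) (hp : p = 2 * m + 1)
    (hh : 2 * h + 1 = p ^ k) {x s : Module.End L V} (hxu : Unit' B x) (hsu : Unit' B s)
    (hs : ∑ i ∈ Finset.range p, x ^ i = 0) (hsx : s * x = x ^ (p - 1) * s)
    {μ r : L} (hsμ : s ^ (2 * h + 2) = μ • (1 : Module.End L V))
    (hinj : Function.Injective (s * s + 1 : Module.End L V))
    (hμr : (μ = -1 ∧ r = 1) ∨ (μ = 1 ∧ p % 4 = 3 ∧ r = p))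
    {e : L} (he : e ≠ 0) (hes : star e = -e) :
    ∃ d, Module.finrank L V = 2 * d ∧ Disc B (r ^ d) := by
  have hxp : x ^ p = 1 := by
    have := geom_sum_mul x p
    rw [hs, zero_mul] at this
    exact (sub_eq_zero.1 this.symm)
  have hp2 : 2 ≤ p := hpp.two_le
  have hxx : x * x ^ (p - 1) = 1 := by rw [← pow_succ', show p - 1 + 1 = p by omega, hxp]
  have hxx' : x ^ (p - 1) * x = 1 := by rw [← pow_succ, show p - 1 + 1 = p by omega, hxp]
  have hpow : ∀ n, s * x ^ n = (x ^ (p - 1)) ^ n * s := by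
    intro n
    induction n with
    | zero => simp
    | succ n ih => rw [pow_succ, ← mul_assoc, ih, mul_assoc, hsx, ← mul_assoc, ← pow_succ]
  have hxpp : (x ^ (p - 1)) ^ (p - 1) = x := by
    obtain ⟨n, rfl⟩ : ∃ n, p = n + 2 := ⟨p - 2, by omega⟩
    rw [← pow_mul, show (n + 2 - 1) * (n + 2 - 1) = (n + 2) * n + 1 by simp; ring, pow_succ,
      pow_mul, hxp, one_pow, one_mul]
  have hsx' : s * x ^ (p - 1) = x * s := by rw [hpow, hxpp]
  have hc : s * s * x = x * (s * s) := by
    rw [mul_assoc, hsx, ← mul_assoc, hsx', mul_assoc]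
  let S := Algebra.adjoin L ({x, s * s} : Set (Module.End L V))
  have hcomm : ∀ a ∈ ({x, s * s} : Set (Module.End L V)),
      ∀ b ∈ ({x, s * s} : Set (Module.End L V)), a * b = b * a := by
    rintro a (rfl | rfl) b (rfl | rfl)
    · rfl
    · exact hc.symm
    · exact hc
    · rfl
  letI : CommRing S := Algebra.adjoinCommRingOfComm L hcomm
  let φ : S →ₐ[L] Module.End L V := S.val
  have hφ : Function.Injective φ := Subtype.val_injective
  have hxS : x ∈ S := Algebra.subset_adjoin (by simp)
  have hzS : s * s ∈ S := Algebra.subset_adjoin (by simp)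
  let X : S := ⟨x, hxS⟩
  let Z : S := ⟨s * s, hzS⟩
  have hμμ : μ * μ = 1 := by rcases hμr with ⟨h1, -⟩ | ⟨h1, -⟩ <;> rw [h1] <;> ring
  have hμs : star μ = μ := by rcases hμr with ⟨h1, -⟩ | ⟨h1, -⟩ <;> rw [h1] <;> simp
  have hX : X * X ^ (p - 1) = 1 := hφ (by simpa [φ, X] using hxx)
  have hZμ : Z ^ (h + 1) = μ • (1 : S) := hφ (by
    have : (s * s) ^ (h + 1) = μ • (1 : Module.End L V) := by
      rw [← pow_two, ← pow_mul, mul_add, mul_one, hsμ]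
    rw [map_pow, map_smul, map_one]
    exact this)
  have hZ : Z * (μ • Z ^ h) = 1 := by
    rw [mul_smul_comm, ← pow_succ', hZμ, smul_smul, hμμ, one_smul]
  have hzinj : ∀ a : S, (Z + 1) * a = 0 → a = 0 := by
    intro a ha
    apply hφ
    have h1 := congrArg φ ha
    rw [map_mul, map_add, map_one, map_zero] at h1
    rw [map_zero]
    ext v
    apply hinj
    have := congrArg (fun f : Module.End L V => f v) h1
    simpa [φ, Z] using this
  have hSx : Sw φ s X (X ^ (p - 1)) := by
    unfold Sw; rw [map_pow]; exact hsx
  have hSx' : Sw φ s (X ^ (p - 1)) X := by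
    unfold Sw; rw [map_pow]; exact hsx'
  have hSz : Sw φ s Z Z := by
    unfold Sw; exact (mul_assoc _ _ _).symm
  have hSzi : Sw φ s (μ • Z ^ h) (μ • Z ^ h) := (hSz.pow h).smul μ
  have hXa : Adj B (φ X) (φ (X ^ (p - 1))) :=
    Unit'.adj hxu (by rw [map_pow]; exact hxx)
  have hZa : Adj B (φ Z) (φ (μ • Z ^ h)) := by
    refine Unit'.adj (fun v w => ?_) (by rw [← map_mul, hZ, map_one])
    have : φ Z = s * s := rfl
    rw [this, Module.End.mul_apply, Module.End.mul_apply, hsu, hsu]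
  have hSs : ∑ i ∈ Finset.range p, X ^ i = 0 := hφ (by
    rw [map_sum, map_zero, ← hs]
    refine Finset.sum_congr rfl fun i _ => ?_
    rw [map_pow]; rfl)
  have hXi : X ^ (p - 1) * X = 1 := by rw [mul_comm, hX]
  rcases hμr with ⟨rfl, rfl⟩ | ⟨rfl, hp4, rfl⟩
  · refine lemA1 (k0 := (1 : S)) hB φ hpp hp hh hX hSs hZ hμμ hμs hZμ hzinj hinj s rfl hSx hSx' hSz
      hSzi hsu hXa hZa he hes one_ne_zero (by simp) (by simp) ?_ ?_
    · simpa using Sw.one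
    · simpa using adj_one φ
  · have hm : Odd m := by rw [Nat.odd_iff]; omega
    have hk1 : cf (X ^ (p - 1)) X m 1 = -cf X (X ^ (p - 1)) m 1 := by
      have := cf_adj (Y := 1) (Yi := 1) hX (by simp) m
      rw [this, hm.neg_one_pow]; simp
    have hk2 := cyc_ring hpp hp hX hSs 1
    have hk2' : cf X (X ^ (p - 1)) m 1 * cf (X ^ (p - 1)) X m 1 = (p : S) := by
      unfold cf; rw [hk2]; simp
    refine lemA1 (k0 := cf X (X ^ (p - 1)) m 1) hB φ hpp hp hh hX hSs hZ hμμ hμs hZμ hzinj hinj s rfl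
      hSx hSx' hSz hSzi hsu hXa hZa he hes (Nat.cast_ne_zero.2 hpp.ne_zero) (by simp) ?_ ?_ ?_
    · rw [one_smul, ← mul_neg, ← hk1, hk2', Algebra.smul_def, mul_one, map_natCast]
    · rw [one_smul, ← hk1]
      exact Sw.cf hSx hSx' Sw.one m
    · rw [one_smul, ← hk1]
      exact adj_cf φ hXa (hXa.symm hB) (adj_one φ) m

end Paper

namespace Paper

theorem invCompl {L V : Type} [Field L] [StarRing L] [AddCommGroup V] [Module L V]
    [FiniteDimensional L V] {B : V →ₗ⋆[L] V →ₗ[L] L} (hB : Herm B) {W₁ W₂ : Submodule L V}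
    (hc : IsCompl W₁ W₂) (ho : ∀ v ∈ W₁, ∀ w ∈ W₂, B v w = 0) {s : Module.End L V}
    (hs : Unit' B s) (h1 : ∀ v ∈ W₁, s v ∈ W₁) : ∀ v ∈ W₂, s v ∈ W₂ := by
  intro w hw
  have hsinj : Function.Injective s := by
    rw [← LinearMap.ker_eq_bot, LinearMap.ker_eq_bot']
    intro v hv
    apply hB.nondeg
    intro w
    rw [← hs, hv, map_zero]; rfl
  have hsurj : ∀ v ∈ W₁, ∃ v' ∈ W₁, s v' = v := by
    have hi : Function.Injective (s.restrict h1) := by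
      intro a b hab
      apply Subtype.ext
      apply hsinj
      exact congrArg Subtype.val hab
    have := LinearMap.injective_iff_surjective.1 hi
    intro v hv
    obtain ⟨v', hv'⟩ := this ⟨v, hv⟩
    exact ⟨v', v'.2, congrArg Subtype.val hv'⟩
  obtain ⟨a, ha, b, hb, hab⟩ : ∃ a ∈ W₁, ∃ b ∈ W₂, a + b = s w := by
    have : s w ∈ W₁ ⊔ W₂ := by rw [hc.sup_eq_top]; trivial
    exact Submodule.mem_sup.1 this
  have ha0 : (⟨a, ha⟩ : W₁) = 0 := by
    apply (hB.restr hc ho).nondeg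
    intro v
    rw [rB_apply]
    apply hB.orth
    obtain ⟨v', hv', hv''⟩ := hsurj v v.2
    have h3 : B v (s w) = 0 := by
      rw [← hv'', hs]; exact ho _ hv' _ hw
    rw [← hab, map_add, ho _ v.2 _ hb, add_zero] at h3
    exact h3
  have : a = 0 := congrArg Subtype.val ha0
  rw [← hab, this, zero_add]; exact hb

/-- the operator data of the dihedral situation -/
structure Dat {L V A : Type} [Field L] [StarRing L] [AddCommGroup V] [Module L V]
    (p h : ℕ) (μ : L) (B : V →ₗ⋆[L] V →ₗ[L] L) (X : A → Module.End L V) (s : Module.End L V) :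
    Prop where
  herm : Herm B
  Xu : ∀ a, Unit' B (X a)
  su : Unit' B s
  comm : ∀ a b, X a * X b = X b * X a
  Xp : ∀ a, X a ^ p = 1
  sX : ∀ a, s * X a = X a ^ (p - 1) * s
  sμ : s ^ (2 * h + 2) = μ • (1 : Module.End L V)

section
variable {L V A : Type} [Field L] [StarRing L] [AddCommGroup V] [Module L V]
    {p h : ℕ} {μ : L} {B : V →ₗ⋆[L] V →ₗ[L] L} {X : A → Module.End L V} {s : Module.End L V}

theorem restrict_pow_coe {W : Submodule L V} {f : Module.End L V} (hf : ∀ v ∈ W, f v ∈ W) (n : ℕ)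
    (w : W) : (((f.restrict hf) ^ n) w : V) = (f ^ n) w := by
  induction n generalizing w with
  | zero => rfl
  | succ n ih => rw [pow_succ, pow_succ, Module.End.mul_apply, Module.End.mul_apply, ih]; rfl

theorem Dat.restr (hD : Dat p h μ B X s) {W₁ W₂ : Submodule L V}
    (hc : IsCompl W₁ W₂) (ho : ∀ v ∈ W₁, ∀ w ∈ W₂, B v w = 0)
    (hX : ∀ a, ∀ v ∈ W₁, X a v ∈ W₁) (hs : ∀ v ∈ W₁, s v ∈ W₁) :
    Dat p h μ (rB B W₁) (fun a => (X a).restrict (hX a)) (s.restrict hs) := by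
  refine ⟨hD.herm.restr hc ho, ?_, ?_, ?_, ?_, ?_, ?_⟩
  · intro a v w; exact hD.Xu a v w
  · intro v w; exact hD.su v w
  · intro a b
    ext v
    exact congrArg (fun f : Module.End L V => f v) (hD.comm a b)
  · intro a
    ext v
    rw [restrict_pow_coe, hD.Xp]; rfl
  · intro a
    ext v
    rw [Module.End.mul_apply, Module.End.mul_apply, restrict_pow_coe]
    exact congrArg (fun f : Module.End L V => f v) (hD.sX a)
  · ext v
    rw [restrict_pow_coe, hD.sμ]; rfl

theorem Dat.Xpow (hD : Dat p h μ B X s) (a : A) (v : V) (hv : X a v = v) (n : ℕ) :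
    (X a ^ n) v = v := by
  induction n with
  | zero => rfl
  | succ n ih => rw [pow_succ, Module.End.mul_apply, hv, ih]

theorem Dat.ssX (hD : Dat p h μ B X s) (hp2 : 2 ≤ p) (a : A) : s * s * X a = X a * (s * s) := by
  have hpow : ∀ n, s * X a ^ n = (X a ^ (p - 1)) ^ n * s := by
    intro n
    induction n with
    | zero => simp
    | succ n ih => rw [pow_succ, ← mul_assoc, ih, mul_assoc, hD.sX, ← mul_assoc, ← pow_succ]
  have hxpp : (X a ^ (p - 1)) ^ (p - 1) = X a := by
    obtain ⟨n, rfl⟩ : ∃ n, p = n + 2 := ⟨p - 2, by omega⟩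
    rw [← pow_mul, show (n + 2 - 1) * (n + 2 - 1) = (n + 2) * n + 1 by simp; ring, pow_succ,
      pow_mul, hD.Xp, one_pow, one_mul]
  rw [mul_assoc, hD.sX, ← mul_assoc, hpow, hxpp, mul_assoc]

theorem Dat.Xs (hD : Dat p h μ B X s) (hp2 : 2 ≤ p) (a : A) : X a * s = s * X a ^ (p - 1) := by
  have hpow : ∀ n, s * X a ^ n = (X a ^ (p - 1)) ^ n * s := by
    intro n
    induction n with
    | zero => simp
    | succ n ih => rw [pow_succ, ← mul_assoc, ih, mul_assoc, hD.sX, ← mul_assoc, ← pow_succ]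
  have hxpp : (X a ^ (p - 1)) ^ (p - 1) = X a := by
    obtain ⟨n, rfl⟩ : ∃ n, p = n + 2 := ⟨p - 2, by omega⟩
    rw [← pow_mul, show (n + 2 - 1) * (n + 2 - 1) = (n + 2) * n + 1 by simp; ring, pow_succ,
      pow_mul, hD.Xp, one_pow, one_mul]
  rw [hpow, hxpp]

end

theorem mem_ker_sub_one {L V : Type} [Field L] [AddCommGroup V] [Module L V]
    (u : Module.End L V) (v : V) : v ∈ LinearMap.ker (u - 1) ↔ u v = v := by
  rw [LinearMap.mem_ker, LinearMap.sub_apply, sub_eq_zero]; rfl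

theorem Disc.zero {L V : Type} [Field L] [StarRing L] [AddCommGroup V] [Module L V]
    {B : V →ₗ⋆[L] V →ₗ[L] L} (hV : ∀ v : V, v = 0) : Disc B 1 := by
  have : Subsingleton V := ⟨fun a b => by rw [hV a, hV b]⟩
  refine ⟨Empty, inferInstance, inferInstance, Module.Basis.empty V, 1, one_ne_zero, ?_⟩
  simp

set_option maxHeartbeats 1000000 in
theorem thmA1 {L A : Type} [Field L] [StarRing L] [CharZero L]
    {p m k h : ℕ} (hpp : p.Prime) (hp : p = 2 * m + 1) (hh : 2 * h + 1 = p ^ k)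
    {μ r : L} (hμr : (μ = -1 ∧ r = 1) ∨ (μ = 1 ∧ p % 4 = 3 ∧ r = p))
    {e : L} (he : e ≠ 0) (hes : star e = -e) (T : Finset A) :
    ∀ (V : Type) [AddCommGroup V] [Module L V] [FiniteDimensional L V]
      (B : V →ₗ⋆[L] V →ₗ[L] L) (X : A → Module.End L V) (s : Module.End L V),
      Dat p h μ B X s → Function.Injective (s * s + 1 : Module.End L V) →
      (∀ v, (∀ a ∈ T, X a v = v) → v = 0) →
      ∃ d, Module.finrank L V = 2 * d ∧ Disc B (r ^ d) := by
  classical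
  induction T using Finset.induction_on with
  | empty =>
    intro V _ _ _ B X s hD hinj hfix
    have hV : ∀ v : V, v = 0 := fun v => hfix v (by simp)
    refine ⟨0, ?_, by rw [pow_zero]; exact Disc.zero hV⟩
    have : Subsingleton V := ⟨fun a b => by rw [hV a, hV b]⟩
    simp [Module.finrank_zero_of_subsingleton]
  | insert a T ha ih =>
    intro V _ _ _ B X s hD hinj hfix
    have hp2 := hpp.two_le
    obtain ⟨hc, ho⟩ := split (hD.Xu a) hpp.pos (hD.Xp a)
    set W₁ := LinearMap.ker (X a - 1) with hW₁
    set W₂ := LinearMap.ker (∑ i ∈ Finset.range p, X a ^ i) with hW₂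
    have hX1 : ∀ b, ∀ v ∈ W₁, X b v ∈ W₁ := by
      intro b v hv
      rw [hW₁, mem_ker_sub_one] at hv ⊢
      rw [← Module.End.mul_apply, hD.comm, Module.End.mul_apply, hv]
    have hs1 : ∀ v ∈ W₁, s v ∈ W₁ := by
      intro v hv
      rw [hW₁, mem_ker_sub_one] at hv ⊢
      rw [← Module.End.mul_apply, hD.Xs hp2, Module.End.mul_apply, hD.Xpow a v hv]
    have hX2 : ∀ b, ∀ v ∈ W₂, X b v ∈ W₂ := fun b => invCompl hD.herm hc ho (hD.Xu b) (hX1 b)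
    have hs2 : ∀ v ∈ W₂, s v ∈ W₂ := invCompl hD.herm hc ho hD.su hs1
    have ho' : ∀ v ∈ W₂, ∀ w ∈ W₁, B v w = 0 := fun v hv w hw => hD.herm.orth (ho w hw v hv)
    have hD1 := hD.restr hc ho hX1 hs1
    have hD2 := hD.restr hc.symm ho' hX2 hs2
    have hinj' : ∀ (W : Submodule L V) (hs : ∀ v ∈ W, s v ∈ W),
        Function.Injective (s.restrict hs * s.restrict hs + 1 : Module.End L W) := by
      intro W hs x y hxy
      apply Subtype.ext
      apply hinj
      exact congrArg Subtype.val hxy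
    obtain ⟨d1, hd1, hdd1⟩ := ih W₁ (rB B W₁) _ _ hD1 (hinj' W₁ hs1) (by
      intro v hv
      apply Subtype.ext
      apply hfix
      intro b hb
      rw [Finset.mem_insert] at hb
      rcases hb with rfl | hb
      · exact (mem_ker_sub_one _ _).1 v.2
      · exact congrArg Subtype.val (hv b hb))
    obtain ⟨d2, hd2, hdd2⟩ := lemA hD2.herm hpp hp hh (hD2.Xu a) hD2.su (by
      ext v
      rw [LinearMap.sum_apply, Submodule.coe_sum]
      simp only [restrict_pow_coe]
      have : (∑ i ∈ Finset.range p, X a ^ i) (v : V) = 0 := LinearMap.mem_ker.1 v.2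
      rw [LinearMap.sum_apply] at this
      exact this) (hD2.sX a) hD2.sμ (hinj' W₂ hs2) hμr he hes
    refine ⟨d1 + d2, ?_, ?_⟩
    · rw [← Submodule.finrank_add_eq_of_isCompl hc, hd1, hd2]; ring
    · rw [pow_add]; exact Disc.sum hD.herm hc ho hdd1 hdd2

set_option maxHeartbeats 1000000 in
theorem thmA {L A V : Type} [Field L] [StarRing L] [CharZero L] [Fintype A]
    {p m k h : ℕ} (hpp : p.Prime) (hp : p = 2 * m + 1) (hh : 2 * h + 1 = p ^ k)
    {μ r : L} (hμr : (μ = -1 ∧ r = 1) ∨ (μ = 1 ∧ p % 4 = 3 ∧ r = p))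
    {w : L} (hw : w * star w = 1) (hwq : w ^ (2 * h + 2) = 1) (hw2 : w ^ 2 ≠ 1)
    [AddCommGroup V] [Module L V] [FiniteDimensional L V]
    {B : V →ₗ⋆[L] V →ₗ[L] L} {X : A → Module.End L V} {s : Module.End L V}
    (hD : Dat p h μ B X s) (hfix : ∀ v, (∀ a, X a v = v) → v = 0) :
    ∃ d, Module.finrank L V = 2 * d ∧ Disc B (r ^ d) := by
  have hp2 := hpp.two_le
  have hw0 : w ≠ 0 := fun h => by simp [h] at hw
  have hsw0 : star w ≠ 0 := star_ne_zero.2 hw0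
  have he : w - star w ≠ 0 := by
    intro h0
    rw [← sub_eq_zero.1 h0, ← pow_two] at hw
    exact hw2 hw
  have hes : star (w - star w) = -(w - star w) := by rw [star_sub, star_star]; ring
  let u : Module.End L V := -(s * s)
  have huu : Unit' B u := by
    intro v w
    simp only [u, LinearMap.neg_apply, map_neg, neg_neg, Module.End.mul_apply]
    rw [hD.su, hD.su]
  have hμμ : μ * μ = 1 := by rcases hμr with ⟨h1, -⟩ | ⟨h1, -⟩ <;> rw [h1] <;> ring
  have hum : u ^ (2 * (h + 1)) = 1 := by
    simp only [u]
    rw [pow_mul, neg_sq, ← pow_mul, ← pow_two, ← pow_mul,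
      show 2 * (2 * (h + 1)) = (2 * h + 2) * 2 by ring, pow_mul, hD.sμ, pow_two,
      smul_mul_smul_comm, hμμ, one_smul, one_mul]
  obtain ⟨hc, ho⟩ := split huu (by omega) hum
  set W₁ := LinearMap.ker (u - 1) with hW₁
  set W₂ := LinearMap.ker (∑ i ∈ Finset.range (2 * (h + 1)), u ^ i) with hW₂
  have hX1 : ∀ b, ∀ v ∈ W₁, X b v ∈ W₁ := by
    intro b v hv
    rw [hW₁, mem_ker_sub_one] at hv ⊢
    have : u * X b = X b * u := by
      simp only [u]; rw [neg_mul, hD.ssX hp2, mul_neg]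
    rw [← Module.End.mul_apply, this, Module.End.mul_apply, hv]
  have hs1 : ∀ v ∈ W₁, s v ∈ W₁ := by
    intro v hv
    rw [hW₁, mem_ker_sub_one] at hv ⊢
    have : u * s = s * u := by
      simp only [u]; rw [neg_mul, mul_neg, mul_assoc]
    rw [← Module.End.mul_apply, this, Module.End.mul_apply, hv]
  have hX2 : ∀ b, ∀ v ∈ W₂, X b v ∈ W₂ := fun b => invCompl hD.herm hc ho (hD.Xu b) (hX1 b)
  have hs2 : ∀ v ∈ W₂, s v ∈ W₂ := invCompl hD.herm hc ho hD.su hs1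
  have ho' : ∀ v ∈ W₂, ∀ w ∈ W₁, B v w = 0 := fun v hv w hw => hD.herm.orth (ho w hw v hv)
  have hD1 := hD.restr hc ho hX1 hs1
  have hD2 := hD.restr hc.symm ho' hX2 hs2
  obtain ⟨d2, hd2, hdd2⟩ := thmA1 hpp hp hh hμr he hes Finset.univ W₂ (rB B W₂) _ _ hD2 (by
    rw [← LinearMap.ker_eq_bot, LinearMap.ker_eq_bot']
    intro v hv
    have h1 : s (s v) + v = 0 := congrArg Subtype.val hv
    have h2 : (v : V) ∈ W₁ := by
      rw [hW₁, mem_ker_sub_one]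
      simp only [u, LinearMap.neg_apply, Module.End.mul_apply]
      exact (eq_neg_of_add_eq_zero_right h1).symm
    exact Subtype.ext ((Submodule.disjoint_def.1 hc.disjoint) v h2 v.2)) (by
    intro v hv
    apply Subtype.ext
    apply hfix
    intro b
    exact congrArg Subtype.val (hv b (Finset.mem_univ _)))
  have hss1 : ∀ v : W₁, s.restrict hs1 (s.restrict hs1 v) = -v := by
    intro v
    have := (mem_ker_sub_one _ _).1 v.2
    apply Subtype.ext
    show s (s v) = -(v : V)
    simp only [u, LinearMap.neg_apply, Module.End.mul_apply] at this
    exact neg_eq_iff_eq_neg.1 this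
  have hD1' : Dat p h μ (rB B W₁) (fun a => (X a).restrict (hX1 a)) (w • s.restrict hs1) := by
    refine ⟨hD1.herm, hD1.Xu, ?_, hD1.comm, hD1.Xp, ?_, ?_⟩
    · intro v v'
      have h5 := hD1.su v v'
      simp only [LinearMap.smul_apply, map_smulₛₗ, RingHom.id_apply, smul_eq_mul,
        starRingEnd_apply] at h5 ⊢
      rw [h5, ← mul_assoc, hw, one_mul]
    · intro a
      rw [smul_mul_assoc, hD1.sX, mul_smul_comm]
    · rw [smul_pow, hwq, one_smul, hD1.sμ]
  obtain ⟨d1, hd1, hdd1⟩ := thmA1 hpp hp hh hμr he hes Finset.univ W₁ (rB B W₁) _ _ hD1' (by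
    rw [← LinearMap.ker_eq_bot, LinearMap.ker_eq_bot']
    intro v hv
    rw [LinearMap.add_apply, Module.End.mul_apply, LinearMap.smul_apply, LinearMap.smul_apply,
      map_smul, smul_smul, hss1, Module.End.one_apply, smul_neg] at hv
    have h3 : (1 - w * w) • v = 0 := by rw [sub_smul, one_smul, ← hv]; abel
    refine (smul_eq_zero.1 h3).resolve_left ?_
    intro h4
    apply hw2
    rw [pow_two]; exact (sub_eq_zero.1 h4).symm) (by
    intro v hv
    apply Subtype.ext
    apply hfix
    intro b
    exact congrArg Subtype.val (hv b (Finset.mem_univ _)))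
  refine ⟨d1 + d2, ?_, ?_⟩
  · rw [← Submodule.finrank_add_eq_of_isCompl hc, hd1, hd2]; ring
  · rw [pow_add]; exact Disc.sum hD.herm hc ho hdd1 hdd2

end Paper

namespace Paper

theorem detM {L ι : Type} [Field L] [CharZero L] [Fintype ι] [DecidableEq ι] {N : ℕ} (hN : 0 < N)
    (hc : Fintype.card ι = N) :
    (Matrix.of fun a b : ι => if a = b then (1 : L) else -(1 / N)).det =
      ((N + 1) / N) ^ N * (1 / (N + 1)) := by
  have hN0 : (N : L) ≠ 0 := Nat.cast_ne_zero.2 hN.ne'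
  have hN1 : (N : L) + 1 ≠ 0 := by exact_mod_cast Nat.succ_ne_zero N
  have h1 : (Matrix.of fun a b : ι => if a = b then (1 : L) else -(1 / N)) =
      (((N : L) + 1) / N) • (1 + Matrix.replicateCol Unit (fun _ : ι => -(1 / ((N : L) + 1))) *
        Matrix.replicateRow Unit (fun _ : ι => (1 : L))) := by
    ext a b
    simp only [Matrix.of_apply, Matrix.smul_apply, Matrix.add_apply, Matrix.one_apply,
      Matrix.mul_apply, Matrix.replicateCol_apply, Matrix.replicateRow_apply, smul_eq_mul]
    simp only [Finset.univ_unique, Finset.sum_const, Finset.card_singleton, one_smul]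
    split_ifs
    · field_simp; ring
    · field_simp; ring
  rw [h1, Matrix.det_smul, hc, Matrix.det_one_add_replicateCol_mul_replicateRow]
  congr 1
  simp only [dotProduct, Finset.sum_const, Finset.card_univ, hc, nsmul_eq_mul]
  field_simp; ring

theorem gram_li {L V ι : Type} [Field L] [StarRing L] [AddCommGroup V] [Module L V]
    {B : V →ₗ⋆[L] V →ₗ[L] L} [Fintype ι] [DecidableEq ι] (b : ι → V) (h : (gram B b).det ≠ 0) :
    LinearIndependent L b := by
  rw [Fintype.linearIndependent_iff]
  intro g hg
  have : (gram B b).mulVec g = 0 := by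
    ext i
    have : B (b i) (∑ j, g j • b j) = 0 := by rw [hg, map_zero]
    rw [map_sum] at this
    simp only [map_smul, smul_eq_mul] at this
    simp only [Matrix.mulVec, dotProduct, gram, Matrix.of_apply, Pi.zero_apply]
    rw [← this]
    exact Finset.sum_congr rfl fun j _ => mul_comm _ _
  have h2 : g = 0 := by
    by_contra hne
    exact h (Matrix.exists_mulVec_eq_zero_iff.1 ⟨g, hne, this⟩)
  intro i; rw [h2]; rfl

section
variable {L V A : Type} [Field L] [StarRing L] [CharZero L] [AddCommGroup V] [Module L V]
    [FiniteDimensional L V] [AddCommGroup A] [Fintype A] [DecidableEq A]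

set_option maxHeartbeats 1000000 in
theorem lemB {B : V →ₗ⋆[L] V →ₗ[L] L} (hB : Herm B) {N : ℕ} (hN : 0 < N) (hNe : Even N)
    (hA : Fintype.card A = N + 1) {X : A → Module.End L V} {s : Module.End L V}
    (hXu : ∀ a, Unit' B (X a)) (hsu : Unit' B s) (hX0 : X 0 = 1)
    (hXa : ∀ a b, X (a + b) = X a * X b) (hXs : ∑ a, X a = 0) (hs : s ^ N = 1)
    (π : AddMonoid.End A) (hsX : ∀ a, s * X a = X (π a) * s) (hπ0 : ∀ a, π a = 0 → a = 0)
    (hπ : ∀ i, 0 < i → i < N → ∀ a, (π ^ i) a = a → a = 0) :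
    ∃ d, Module.finrank L V = N * d ∧ Disc B (((N : L) + 1) ^ d) := by
  classical
  have hN0 : (N : L) ≠ 0 := Nat.cast_ne_zero.2 hN.ne'
  have hN1 : (N : L) + 1 ≠ 0 := by exact_mod_cast Nat.succ_ne_zero N
  obtain ⟨hc, ho⟩ := split hsu hN hs
  set E := LinearMap.ker (s - 1) with hE
  have hE1 : ∀ v ∈ E, s v = v := fun v hv => (mem_ker_sub_one _ _).1 hv
  have hHE := hB.restr hc ho
  have hXneg : ∀ a, X a * X (-a) = 1 := by
    intro a; rw [← hXa, add_neg_cancel, hX0]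
  have hpi0 : ∀ i a, (π ^ i) a = 0 → a = 0 := by
    intro i
    induction i with
    | zero => intro a h; exact h
    | succ n ih =>
      intro a h
      rw [pow_succ] at h
      exact hπ0 a (ih _ h)
  have hinj : ∀ a, a ≠ 0 → ∀ i < N, ∀ j < N, i < j → (π ^ i) a ≠ (π ^ j) a := by
    intro a ha i hi j hj hij h
    obtain ⟨m, rfl⟩ : ∃ m, j = i + m := ⟨j - i, by omega⟩
    rw [pow_add] at h
    have h2 : (π ^ i) ((π ^ m) a - a) = 0 := by
      rw [map_sub, h, sub_eq_zero]; rfl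
    exact ha (hπ m (by omega) (by omega) a (sub_eq_zero.1 (hpi0 i _ h2)))
  have hsum : ∀ a, a ≠ 0 → ∑ i ∈ Finset.range N, X ((π ^ i) a) = -1 := by
    intro a ha
    have hi : Set.InjOn (fun i => (π ^ i) a) (Finset.range N : Set ℕ) := by
      intro i hi j hj hij
      simp only [Finset.coe_range, Set.mem_Iio] at hi hj
      rcases lt_trichotomy i j with h | h | h
      · exact absurd hij (hinj a ha i hi j hj h)
      · exact h
      · exact absurd hij.symm (hinj a ha j hj i hi h)
    have him : (Finset.range N).image (fun i => (π ^ i) a) = Finset.univ.erase 0 := by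
      apply Finset.eq_of_subset_of_card_le
      · intro b hb
        rw [Finset.mem_image] at hb
        obtain ⟨i, -, rfl⟩ := hb
        rw [Finset.mem_erase]
        exact ⟨fun h => ha (hpi0 i a h), Finset.mem_univ _⟩
      · rw [Finset.card_image_of_injOn hi, Finset.card_erase_of_mem (Finset.mem_univ _),
          Finset.card_univ, hA, Finset.card_range]; simp
    rw [← Finset.sum_image hi (f := X), him]
    rw [← Finset.add_sum_erase _ _ (Finset.mem_univ 0), hX0] at hXs
    exact (neg_eq_of_add_eq_zero_right hXs).symm
  have hsiX : ∀ i a, s ^ i * X a = X ((π ^ i) a) * s ^ i := by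
    intro i
    induction i with
    | zero => intro a; simp
    | succ n ih =>
      intro a
      rw [pow_succ, mul_assoc, hsX, ← mul_assoc, ih, pow_succ, mul_assoc]; rfl
  have hsiE : ∀ i, ∀ v ∈ E, (s ^ i) v = v := by
    intro i v hv
    induction i with
    | zero => rfl
    | succ n ih => rw [pow_succ, Module.End.mul_apply, hE1 v hv, ih]
  have hsiu : ∀ i, Unit' B (s ^ i) := by
    intro i
    induction i with
    | zero => intro v w; rfl
    | succ n ih =>
      intro v w
      rw [pow_succ, Module.End.mul_apply, Module.End.mul_apply, ih, hsu]
  have hBX : ∀ c, c ≠ 0 → ∀ v ∈ E, ∀ w ∈ E, B v (X c w) = -(1 / N) * B v w := by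
    intro c hc0 v hv w hw
    have h1 : ∀ i ∈ Finset.range N, B v (X ((π ^ i) c) w) = B v (X c w) := by
      intro i _
      rw [← hsiu i v (X c w), hsiE i v hv, ← Module.End.mul_apply, hsiX, Module.End.mul_apply,
        hsiE i w hw]
    have h2 := Finset.sum_congr rfl h1
    rw [← map_sum, ← LinearMap.sum_apply, hsum c hc0] at h2
    simp only [Finset.sum_const, Finset.card_range, nsmul_eq_mul, LinearMap.neg_apply, map_neg,
      Module.End.one_apply] at h2
    field_simp
    rw [mul_comm, ← h2]
  have hBXX : ∀ a b, ∀ v ∈ E, ∀ w ∈ E, B (X a v) (X b w) =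
      (if a = b then (1 : L) else -(1 / N)) * B v w := by
    intro a b v hv w hw
    split_ifs with h
    · rw [h, hXu, one_mul]
    · rw [← hBX (b - a) (sub_ne_zero.2 (Ne.symm h)) v hv w hw, ← hXu a v, ← Module.End.mul_apply,
        ← hXa, add_sub_cancel]
  -- spanning
  have hspan : ∀ v, ∃ e : A → E, v = ∑ a, X a (e a) := by
    intro v
    set S := ∑ i ∈ Finset.range N, s ^ i with hS
    have hSE : ∀ v, S v ∈ E := by
      intro v
      rw [hE, LinearMap.mem_ker, ← Module.End.mul_apply, hS, mul_geom_sum, hs, sub_self]; rfl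
    have hkey : ∑ a, X a * S * X (-a) = ((N : L) + 1) • (1 : Module.End L V) := by
      have h1 : ∀ i ∈ Finset.range N, ∑ a, X a * s ^ i * X (-a) =
          if i = 0 then ((N : L) + 1) • (1 : Module.End L V) else 0 := by
        intro i hi
        rw [Finset.mem_range] at hi
        split_ifs with h0
        · subst h0
          simp only [pow_zero, mul_one, hXneg, Finset.sum_const, Finset.card_univ, hA]
          rw [← Nat.cast_smul_eq_nsmul L]; push_cast; rfl
        · have h2 : ∀ a, X a * s ^ i * X (-a) = X (a - (π ^ i) a) * s ^ i := by
            intro a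
            rw [mul_assoc, hsiX, ← mul_assoc, ← hXa, map_neg, sub_eq_add_neg]
          simp only [h2]
          rw [← Finset.sum_mul]
          have hinj2 : Function.Injective (fun a => a - (π ^ i) a) := by
            intro a b hab
            simp only at hab
            rw [← sub_eq_zero]
            apply hπ i (by omega) hi
            rw [map_sub]
            have := sub_eq_sub_iff_sub_eq_sub.1 hab
            exact this.symm
          have hbij : Function.Bijective (fun a => a - (π ^ i) a) :=
            Finite.injective_iff_bijective.1 hinj2
          rw [Function.Bijective.sum_comp hbij X, hXs, zero_mul]
      simp only [hS, Finset.mul_sum, Finset.sum_mul]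
      rw [Finset.sum_comm, Finset.sum_congr rfl h1]
      simp [Finset.sum_ite_eq', hN]
    refine ⟨fun a => ((N : L) + 1)⁻¹ • ⟨S (X (-a) v), hSE _⟩, ?_⟩
    have h3 := congrArg (fun f : Module.End L V => ((N : L) + 1)⁻¹ • f v) hkey
    simp only [LinearMap.smul_apply, smul_smul, inv_mul_cancel₀ hN1, one_smul,
      Module.End.one_apply, LinearMap.sum_apply, Module.End.mul_apply, Finset.smul_sum] at h3
    refine h3.symm.trans ?_
    refine Finset.sum_congr rfl fun a _ => ?_
    simp
  let e := Module.finBasis L E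
  let d := Module.finrank L E
  let b : {a : A // a ≠ 0} × Fin d → V := fun x => X x.1 (e x.2)
  have hcard : Fintype.card {a : A // a ≠ 0} = N := by
    rw [Fintype.card_subtype_compl, hA]; simp
  have hgram : gram B b = Matrix.kroneckerMap (· * ·)
      (Matrix.of fun a b : {a : A // a ≠ 0} => if a = b then (1 : L) else -(1 / N))
      (gram (rB B E) e) := by
    ext ⟨a, i⟩ ⟨a', j⟩
    simp only [gram, b, Matrix.of_apply, Matrix.kroneckerMap_apply, rB_apply]
    rw [hBXX _ _ _ (e i).2 _ (e j).2]
    simp only [Subtype.ext_iff]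
  have hdet : (gram B b).det = (((N + 1) / N) ^ N * (1 / (N + 1))) ^ d *
      (gram (rB B E) e).det ^ N := by
    rw [hgram, Matrix.det_kronecker, detM hN hcard, hcard, Fintype.card_fin]
  have hne : (gram B b).det ≠ 0 := by
    rw [hdet]
    exact mul_ne_zero (pow_ne_zero _ (mul_ne_zero (pow_ne_zero _ (div_ne_zero hN1 hN0))
      (one_div_ne_zero hN1))) (pow_ne_zero _ (hHE.det_ne_zero e))
  have hli := gram_li b hne
  have htop : ⊤ ≤ Submodule.span L (Set.range b) := by
    have h1 : ∀ a : A, a ≠ 0 → ∀ v : E, X a v ∈ Submodule.span L (Set.range b) := by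
      intro a ha v
      rw [← e.sum_repr v, Submodule.coe_sum, map_sum]
      refine Submodule.sum_mem _ fun i _ => ?_
      rw [Submodule.coe_smul, map_smul]
      exact Submodule.smul_mem _ _ (Submodule.subset_span ⟨(⟨a, ha⟩, i), rfl⟩)
    intro v _
    obtain ⟨f, rfl⟩ := hspan v
    refine Submodule.sum_mem _ fun a _ => ?_
    by_cases ha : a = 0
    · have h2 : X a = -∑ c ∈ Finset.univ.erase 0, X c := by
        rw [eq_neg_iff_add_eq_zero, ha, Finset.add_sum_erase _ _ (Finset.mem_univ _), hXs]
      rw [h2, LinearMap.neg_apply, LinearMap.sum_apply]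
      refine Submodule.neg_mem _ (Submodule.sum_mem _ fun c hc => h1 c (Finset.ne_of_mem_erase hc) _)
    · exact h1 a ha _
  let bb := Module.Basis.mk hli htop
  have hbb : (bb : _ → V) = b := Module.Basis.coe_mk _ _
  refine ⟨d, ?_, ?_⟩
  · rw [Module.finrank_eq_card_basis bb, Fintype.card_prod, hcard, Fintype.card_fin]
  · obtain ⟨M, hM⟩ := hNe
    have hst : star (gram (rB B E) e).det = (gram (rB B E) e).det := by
      rw [← Matrix.det_conjTranspose]
      congr 1
      ext i j
      exact hHE.symm _ _
    set D := (gram (rB B E) e).det with hD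
    refine ⟨_, inferInstance, inferInstance, bb,
      ((((N : L) + 1) / N) ^ M * (1 / (N + 1))) ^ d * D ^ M, ?_, ?_⟩
    · exact mul_ne_zero (pow_ne_zero _ (mul_ne_zero (pow_ne_zero _ (div_ne_zero hN1 hN0))
        (one_div_ne_zero hN1))) (pow_ne_zero _ (hHE.det_ne_zero e))
    · rw [hbb, hdet]
      have hst2 : star (((((N : L) + 1) / N) ^ M * (1 / (N + 1))) ^ d * D ^ M) =
          ((((N : L) + 1) / N) ^ M * (1 / (N + 1))) ^ d * D ^ M := by
        simp [hst, mul_comm]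
      rw [hst2]
      have h9 : ((((N : L) + 1) / N) ^ N * (1 / (N + 1))) = (N + 1) *
          (((((N : L) + 1) / N) ^ M * (1 / (N + 1))) * ((((N : L) + 1) / N) ^ M * (1 / (N + 1)))) := by
        rw [show (((N : L) + 1) / N) ^ N = (((N : L) + 1) / N) ^ M * (((N : L) + 1) / N) ^ M by
          rw [← pow_add, ← hM]]
        field_simp
      rw [h9, show D ^ N = D ^ M * D ^ M by rw [← pow_add, ← hM], mul_pow, mul_pow]
      ring
end
end Paper

namespace Paper

theorem schur {G : Type} [Group G] {n : ℕ} {ρ : G →* GL (Fin n) ℂ} (h : IsIrredRep ρ)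
    (M : Matrix (Fin n) (Fin n) ℂ)
    (hM : ∀ g, M * (ρ g : Matrix (Fin n) (Fin n) ℂ) = (ρ g : Matrix (Fin n) (Fin n) ℂ) * M) :
    ∃ c : ℂ, M = c • (1 : Matrix (Fin n) (Fin n) ℂ) := by
  have : Nonempty (Fin n) := ⟨⟨0, h.1⟩⟩
  obtain ⟨c, hc⟩ := Module.End.exists_eigenvalue (Matrix.toLin' M)
  obtain ⟨v, hv⟩ := hc.exists_hasEigenvector
  refine ⟨c, ?_⟩
  have hinv := h.2 (Module.End.eigenspace (Matrix.toLin' M) c) (by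
    intro g w hw
    rw [Module.End.mem_eigenspace_iff, Matrix.toLin'_apply] at hw ⊢
    rw [Matrix.mulVec_mulVec, hM, ← Matrix.mulVec_mulVec, hw, Matrix.mulVec_smul])
  rcases hinv with h0 | h1
  · exact absurd h0 (hc)
  · apply Matrix.toLin'.injective
    ext1 i
    ext1
    have : (Pi.single i 1 : Fin n → ℂ) ∈ Module.End.eigenspace (Matrix.toLin' M) c := by
      rw [h1]; trivial
    rw [Module.End.mem_eigenspace_iff] at this
    simp only [LinearMap.comp_apply, LinearMap.single_apply, this, map_smul, LinearMap.smul_apply,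
      Matrix.toLin'_one, LinearMap.id_apply]

/-- trace of an idempotent matrix -/
theorem idem_trace {n : ℕ} (M : Matrix (Fin n) (Fin n) ℂ) (h : M * M = M) :
    ∃ m : ℕ, M.trace = m := by
  have h2 : IsIdempotentElem (Matrix.toLin' M) := by
    show Matrix.toLin' M * Matrix.toLin' M = _
    rw [Module.End.mul_eq_comp, ← Matrix.toLin'_mul, h]
  refine ⟨Module.finrank ℂ (LinearMap.range (Matrix.toLin' M)), ?_⟩
  rw [← ((LinearMap.isProj_range_iff_isIdempotentElem _).2 h2).trace]
  exact (Matrix.trace_toLin'_eq M).symm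

theorem idem_zero {n : ℕ} {K : Type} [Field K] [CharZero K] (M : Matrix (Fin n) (Fin n) K)
    (h : M * M = M) (h0 : M.trace = 0) : M = 0 := by
  have h2 : IsIdempotentElem (Matrix.toLin' M) := by
    show Matrix.toLin' M * Matrix.toLin' M = _
    rw [Module.End.mul_eq_comp, ← Matrix.toLin'_mul, h]
  apply Matrix.toLin'.injective
  rw [map_zero]
  apply LinearMap.IsIdempotentElem.eq_zero_of_trace_eq_zero h2
  rw [Matrix.trace_toLin'_eq, h0]

theorem parseval {A : Type} [AddCommGroup A] [Fintype A] (f : A → ℂ) (hf : ∀ a, f a * f (-a) = 1)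
    (he : Even (Fintype.card A))
    (hi : ∀ ψ : AddChar A ℂ, ∃ m : ℤ, ∑ a, f a * ψ (-a) = Fintype.card A * m) (a : A) :
    f a ^ Fintype.card A = 1 := by
  classical
  set N := Fintype.card A with hN
  have hN0 : (N : ℂ) ≠ 0 := by rw [hN]; exact_mod_cast Fintype.card_ne_zero
  choose m hm using hi
  have horth : ∀ a : A, ∑ ψ : AddChar A ℂ, ψ a = if a = 0 then (N : ℂ) else 0 := by
    intro a
    rw [AddChar.sum_apply_eq_ite]
  have hinv : ∀ a, f a = ∑ ψ : AddChar A ℂ, m ψ * ψ a := by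
    intro a
    have : (N : ℂ) * ∑ ψ : AddChar A ℂ, m ψ * ψ a = N * f a := by
      rw [Finset.mul_sum]
      calc ∑ ψ : AddChar A ℂ, (N : ℂ) * (m ψ * ψ a) = ∑ ψ : AddChar A ℂ, ∑ b, f b * ψ (a - b) := by
            refine Finset.sum_congr rfl fun ψ _ => ?_
            rw [← mul_assoc, ← hm, Finset.sum_mul]
            refine Finset.sum_congr rfl fun b _ => ?_
            rw [mul_assoc, ← AddChar.map_add_eq_mul]; congr 2; abel
        _ = ∑ b, f b * ∑ ψ : AddChar A ℂ, ψ (a - b) := by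
            rw [Finset.sum_comm]
            refine Finset.sum_congr rfl fun b _ => ?_
            rw [Finset.mul_sum]
        _ = N * f a := by
            simp only [horth, sub_eq_zero, mul_ite, mul_zero]
            rw [Finset.sum_ite_eq]; simp [mul_comm]
    exact (mul_left_cancel₀ hN0 this).symm
  have hsq : ∑ ψ : AddChar A ℂ, (m ψ) ^ 2 = 1 := by
    have h1 : (N : ℂ) * ∑ ψ : AddChar A ℂ, (m ψ : ℂ) ^ 2 = N := by
      calc (N : ℂ) * ∑ ψ : AddChar A ℂ, (m ψ : ℂ) ^ 2
          = ∑ ψ : AddChar A ℂ, ∑ a, f a * (m ψ * ψ (-a)) := by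
            rw [Finset.mul_sum]
            refine Finset.sum_congr rfl fun ψ _ => ?_
            rw [pow_two, ← mul_assoc, ← hm, Finset.sum_mul]
            refine Finset.sum_congr rfl fun b _ => ?_
            ring
        _ = ∑ a, f a * f (-a) := by
            rw [Finset.sum_comm]
            refine Finset.sum_congr rfl fun b _ => ?_
            rw [hinv (-b), Finset.mul_sum]
        _ = N := by simp [hf, hN]
    have h2 := mul_left_cancel₀ hN0 (h1.trans (mul_one _).symm)
    exact_mod_cast h2
  obtain ⟨ψ, hψ⟩ : ∃ ψ, m ψ ≠ 0 := by
    by_contra h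
    push Not at h
    simp [h] at hsq
  rw [← Finset.add_sum_erase _ _ (Finset.mem_univ ψ)] at hsq
  have hnn : 0 ≤ ∑ φ ∈ Finset.univ.erase ψ, (m φ) ^ 2 := Finset.sum_nonneg fun _ _ => sq_nonneg _
  have hpos : 0 < m ψ ^ 2 := by positivity
  have h0 : ∑ φ ∈ Finset.univ.erase ψ, (m φ) ^ 2 = 0 := by omega
  have h1 : m ψ ^ 2 = 1 := by omega
  rw [Finset.sum_eq_zero_iff_of_nonneg (fun _ _ => sq_nonneg _)] at h0
  have hfa : f a = m ψ * ψ a := by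
    rw [hinv, Finset.sum_eq_single ψ]
    · intro φ _ hφ
      have := h0 φ (Finset.mem_erase.2 ⟨hφ, Finset.mem_univ _⟩)
      rw [pow_eq_zero_iff two_ne_zero] at this
      simp [this]
    · simp
  obtain ⟨M, hM⟩ := he
  rw [hfa, mul_pow, ← AddChar.map_nsmul_eq_pow, hN, card_nsmul_eq_zero, AddChar.map_zero_eq_one,
    mul_one, ← hN, hM, ← two_mul, pow_mul]
  have : ((m ψ : ℂ)) ^ 2 = 1 := by exact_mod_cast h1
  rw [this, one_pow]

end Paper

namespace Paper

/-- trace zero elements -/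
def ZZ {F : Type} [Field F] (σ : F →+* F) : AddSubgroup F where
  carrier := {b | σ b = -b}
  zero_mem' := by simp
  add_mem' := by
    intro a b ha hb
    simp only [Set.mem_setOf_eq] at *
    rw [map_add, ha, hb]; ring
  neg_mem' := by
    intro a ha
    simp only [Set.mem_setOf_eq] at *
    rw [map_neg, ha]

/-- norm one elements -/
def CC {F : Type} [Field F] (σ : F →+* F) : Subgroup Fˣ where
  carrier := {τ | (τ : F) * σ τ = 1}
  one_mem' := by simp
  mul_mem' := by
    intro a b ha hb
    simp only [Set.mem_setOf_eq, Units.val_mul, map_mul] at *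
    linear_combination (b : F) * σ b * ha + hb
  inv_mem' := by
    intro a ha
    simp only [Set.mem_setOf_eq, Units.val_inv_eq_inv_val, map_inv₀] at *
    rw [← mul_inv, ha, inv_one]

instance {F : Type} [Field F] [Fintype F] (σ : F →+* F) : Fintype (ZZ σ) := Fintype.ofFinite _
instance {F : Type} [Field F] [Fintype F] (σ : F →+* F) : Fintype (CC σ) := Fintype.ofFinite _

theorem mem_ZZ {F : Type} [Field F] {σ : F →+* F} {b : F} : b ∈ ZZ σ ↔ σ b = -b := Iff.rfl
theorem mem_CC {F : Type} [Field F] {σ : F →+* F} {b : Fˣ} : b ∈ CC σ ↔ (b : F) * σ b = 1 := Iff.rfl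

/-- the finite field with its Frobenius -/
structure QF (q : ℕ) (F : Type) [Field F] [Fintype F] (σ : F →+* F) : Prop where
  odd : Odd q
  one : 1 < q
  card : Fintype.card F = q ^ 2
  frob : ∀ y, σ y = y ^ q

section
variable {q : ℕ} {F : Type} [Field F] [Fintype F] {σ : F →+* F}

theorem QF.ss (h : QF q F σ) (y : F) : σ (σ y) = y := by
  rw [h.frob, h.frob, ← pow_mul, ← pow_two, ← h.card, FiniteField.pow_card]

theorem QF.two (h : QF q F σ) : (2 : F) ≠ 0 := by
  intro h2
  have h3 : ringChar F = 2 := by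
    have : ringChar F ∣ 2 := ringChar.dvd (by exact_mod_cast h2)
    exact ((Nat.prime_dvd_prime_iff_eq (CharP.char_is_prime F (ringChar F)) Nat.prime_two).1 this)
  have := FiniteField.even_card_of_char_two h3
  rw [h.card] at this
  have ho := h.odd.pow (n := 2)
  rw [Nat.odd_iff] at ho
  omega

theorem QF.cardU (h : QF q F σ) : Nat.card Fˣ = (q - 1) * (q + 1) := by
  classical
  rw [Nat.card_eq_fintype_card, Fintype.card_units, h.card]
  obtain ⟨m, rfl⟩ : ∃ m, q = m + 1 := ⟨q - 1, by have := h.one; omega⟩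
  rw [pow_two, Nat.add_sub_cancel]
  have : (m + 1) * (m + 1) = m * (m + 1 + 1) + 1 := by ring
  omega

theorem QF.gen (h : QF q F σ) : ∃ g : Fˣ, orderOf g = (q - 1) * (q + 1) ∧ ∀ y, ∃ j : ℕ, y = g ^ j := by
  obtain ⟨g, hg⟩ := IsCyclic.exists_monoid_generator (α := Fˣ)
  refine ⟨g, ?_, fun y => ?_⟩
  · rw [orderOf_eq_card_of_forall_mem_powers hg, h.cardU]
  · obtain ⟨j, hj⟩ := hg y
    exact ⟨j, hj.symm⟩

theorem QF.sU (h : QF q F σ) (y : Fˣ) : σ y = ((y ^ q : Fˣ) : F) := by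
  rw [h.frob]; simp

theorem QF.normU (h : QF q F σ) (y : Fˣ) : (y : F) * σ y = ((y ^ (q + 1) : Fˣ) : F) := by
  rw [h.sU, ← Units.val_mul, ← pow_succ']

theorem QF.norm_surj (h : QF q F σ) (r : F) (hr : r ≠ 0) (hs : σ r = r) :
    ∃ κ : Fˣ, (κ : F) * σ κ = r := by
  obtain ⟨g, hg, hgen⟩ := h.gen
  obtain ⟨j, hj⟩ := hgen (Units.mk0 r hr)
  have h1 : (g ^ j) ^ (q - 1) = 1 := by
    have h2 : (Units.mk0 r hr) ^ q = Units.mk0 r hr := by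
      apply Units.ext
      simp [← h.frob, hs]
    rw [← hj]
    have h3 : (Units.mk0 r hr) ^ (q - 1) * Units.mk0 r hr = Units.mk0 r hr := by
      rw [← pow_succ, Nat.sub_add_cancel h.one.le, h2]
    exact mul_eq_right.1 h3
  rw [← pow_mul, ← orderOf_dvd_iff_pow_eq_one, hg, mul_comm j] at h1
  have hq := h.one
  obtain ⟨i, rfl⟩ := Nat.dvd_of_mul_dvd_mul_left (by omega) h1
  refine ⟨g ^ i, ?_⟩
  rw [h.normU, ← pow_mul, mul_comm i, ← hj]; rfl

theorem QF.delta (h : QF q F σ) : ∃ δ : Fˣ, δ ^ (q - 1) = -1 ∧ orderOf δ = 2 * (q - 1) := by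
  obtain ⟨g, hg, hgen⟩ := h.gen
  obtain ⟨m, hm⟩ := h.odd
  have hq := h.one
  have ho : orderOf (g ^ (m + 1)) = 2 * (q - 1) := by
    rw [orderOf_pow' _ (by omega), hg, show (q - 1) * (q + 1) = (m + 1) * (2 * (q - 1)) by
      rw [hm]; ring, Nat.gcd_comm, Nat.gcd_mul_right_right, Nat.mul_div_cancel_left _ (by omega)]
  refine ⟨g ^ (m + 1), ?_, ho⟩
  have h2 : (g ^ (m + 1)) ^ (q - 1) ≠ 1 := by
    intro h3
    have := Nat.le_of_dvd (by omega) (orderOf_dvd_of_pow_eq_one h3)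
    omega
  have h3 : ((g ^ (m + 1)) ^ (q - 1)) ^ 2 = 1 := by
    rw [← pow_mul, mul_comm, ← ho, pow_orderOf_eq_one]
  rw [Ne, ← Units.val_inj] at h2
  rw [← Units.val_inj]
  have h4 := congrArg Units.val h3
  rw [Units.val_pow_eq_pow_val, Units.val_one, sq_eq_one_iff] at h4
  exact h4.resolve_left h2

theorem QF.sdelta (h : QF q F σ) {δ : Fˣ} (hδ : δ ^ (q - 1) = -1) : σ δ = -δ := by
  rw [h.sU, ← Nat.sub_add_cancel h.one.le, pow_succ, hδ]; simp

theorem QF.card_pow (h : QF q F σ) {d : ℕ} (hd : d ∣ (q - 1) * (q + 1)) :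
    Nat.card {y : Fˣ // y ^ d = 1} = d := by
  classical
  obtain ⟨g, hg, hgen⟩ := h.gen
  have hpos : 0 < (q - 1) * (q + 1) := by have := h.one; exact Nat.mul_pos (by omega) (by omega)
  obtain ⟨e, he⟩ := hd
  have hd0 : d ≠ 0 := by rintro rfl; rw [zero_mul] at he; omega
  have : NeZero d := ⟨hd0⟩
  have h1 : IsPrimitiveRoot (g : F) ((q - 1) * (q + 1)) := by
    rw [IsPrimitiveRoot.coe_units_iff, ← hg]; exact IsPrimitiveRoot.orderOf g
  have h2 := h1.pow hpos (he.trans (mul_comm _ _))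
  refine Eq.trans ?_ h2.card_rootsOfUnity
  exact Nat.card_congr (Equiv.subtypeEquivRight fun y => (mem_rootsOfUnity _ _).symm)

theorem QF.cardC (h : QF q F σ) : Fintype.card (CC σ) = q + 1 := by
  rw [← h.card_pow (Dvd.intro_left _ rfl : q + 1 ∣ (q - 1) * (q + 1)), ← Nat.card_eq_fintype_card]
  refine Nat.card_congr (Equiv.subtypeEquivRight fun y => ?_)
  rw [mem_CC, h.normU, Units.val_eq_one]

theorem QF.cardZ (h : QF q F σ) : Fintype.card (ZZ σ) = q := by
  classical
  obtain ⟨δ, hδ, -⟩ := h.delta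
  have hs := h.sdelta hδ
  have e : {b : ZZ σ // b ≠ 0} ≃ {y : Fˣ // y ^ (q - 1) = 1} := by
    have hb : ∀ b : {b : ZZ σ // b ≠ 0}, ((b : ZZ σ) : F) ≠ 0 := by
      intro b h0
      exact b.2 (Subtype.ext h0)
    refine ⟨fun b => ⟨Units.mk0 ((b : ZZ σ) : F) (hb b) / δ, ?_⟩,
      fun y => ⟨⟨((y : Fˣ) : F) * δ, ?_⟩, ?_⟩, ?_, ?_⟩
    · have h2 : (Units.mk0 ((b : ZZ σ) : F) (hb b)) ^ q = -Units.mk0 ((b : ZZ σ) : F) (hb b) := by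
        apply Units.ext
        simp only [Units.val_pow_eq_pow_val, Units.val_mk0, ← h.frob, Units.val_neg]
        exact b.1.2
      have h3 : (Units.mk0 ((b : ZZ σ) : F) (hb b)) ^ (q - 1) = -1 := by
        apply mul_right_cancel (b := Units.mk0 ((b : ZZ σ) : F) (hb b))
        rw [← pow_succ, Nat.sub_add_cancel h.one.le, h2, neg_one_mul]
      rw [div_pow, h3, hδ, div_self']
    · rw [mem_ZZ, map_mul, hs, h.sU]
      have h2 : (y : Fˣ) ^ q = y := by
        obtain ⟨y, hy⟩ := y
        show y ^ q = y
        have := pow_succ y (q - 1)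
        rwa [Nat.sub_add_cancel h.one.le, hy, one_mul] at this
      rw [h2]; ring
    · intro h0
      have := congrArg Subtype.val h0
      simp at this
    · intro b; apply Subtype.ext; apply Subtype.ext; simp
    · intro y; apply Subtype.ext; apply Units.ext; simp
  have h1 := Nat.card_congr e
  rw [h.card_pow (Dvd.intro _ rfl), Nat.card_eq_fintype_card, Fintype.card_subtype_compl] at h1
  simp only [Fintype.card_subtype_eq] at h1
  have : 0 < Fintype.card (ZZ σ) := Fintype.card_pos
  have := h.one
  omega

end
end Paper

namespace Paper

/-- generators and relations of the Borel subgroup -/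
structure BStr {F G : Type} [Field F] [Group G] (σ : F →+* F) (x : ZZ σ → G) (t : Fˣ → G)
    (v : F → G) : Prop where
  x_add : ∀ a b, x (a + b) = x a * x b
  t_mul : ∀ a b, t (a * b) = t a * t b
  vx : ∀ a b, v a * x b = x b * v a
  vv : ∀ a a' (b : ZZ σ), (b : F) = (a' * σ a - a * σ a') / 2 → v a * v a' = x b * v (a + a')
  tx : ∀ (τ : Fˣ) (b b' : ZZ σ), (b' : F) = τ * σ τ * b → t τ * x b = x b' * t τ
  tv : ∀ τ a, t τ * v a = v (τ ^ 2 / σ τ * a) * t τ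
  gen : ∀ g, ∃ b a τ, g = x b * v a * t τ

section
variable {q : ℕ} {F G : Type} [Field F] [Fintype F] [Group G] {σ : F →+* F} {x : ZZ σ → G}
  {t : Fˣ → G} {v : F → G}

theorem BStr.x0 (hB : BStr σ x t v) : x 0 = 1 := by
  have := hB.x_add 0 0
  rw [add_zero] at this
  exact (mul_eq_left.1 this.symm)

theorem BStr.t1 (hB : BStr σ x t v) : t 1 = 1 := by
  have := hB.t_mul 1 1
  rw [mul_one] at this
  exact (mul_eq_left.1 this.symm)

theorem BStr.v0 (hB : BStr σ x t v) : v 0 = 1 := by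
  have := hB.vv 0 0 0 (by simp)
  rw [hB.x0, one_mul, add_zero] at this
  exact (mul_eq_left.1 this)

theorem BStr.vneg (hB : BStr σ x t v) (a : F) : v a * v (-a) = 1 := by
  have := hB.vv a (-a) 0 (by simp)
  rw [hB.x0, one_mul, add_neg_cancel, hB.v0] at this
  exact this

theorem BStr.xneg (hB : BStr σ x t v) (a : ZZ σ) : x a * x (-a) = 1 := by
  rw [← hB.x_add, add_neg_cancel, hB.x0]

theorem BStr.xcomm (hB : BStr σ x t v) (a b : ZZ σ) : x a * x b = x b * x a := by
  rw [← hB.x_add, add_comm, hB.x_add]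

theorem BStr.tcomm (hB : BStr σ x t v) (a b : Fˣ) : t a * t b = t b * t a := by
  rw [← hB.t_mul, mul_comm, hB.t_mul]

theorem BStr.tinv (hB : BStr σ x t v) (a : Fˣ) : t a * t a⁻¹ = 1 := by
  rw [← hB.t_mul, mul_inv_cancel, hB.t1]

/-- the commutator element in the centre -/
def bet (h : QF q F σ) (a a' : F) : ZZ σ :=
  ⟨(a' * σ a - a * σ a') / 2, by
    rw [mem_ZZ, map_div₀, map_sub, map_mul, map_mul, h.ss, h.ss, map_ofNat]
    field_simp; ring⟩

theorem BStr.vv' (hB : BStr σ x t v) (h : QF q F σ) (a a' : F) :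
    v a * v a' = x (bet h a a') * v (a + a') := hB.vv _ _ _ rfl

/-- scaling -/
def scl (r : F) (hr0 : r ≠ 0) (hr : σ r = r) : ZZ σ ≃ ZZ σ where
  toFun b := ⟨r * b, by rw [mem_ZZ, map_mul, hr, mem_ZZ.1 b.2]; ring⟩
  invFun b := ⟨r⁻¹ * b, by rw [mem_ZZ, map_mul, map_inv₀, hr, mem_ZZ.1 b.2]; ring⟩
  left_inv b := by apply Subtype.ext; simp [hr0]
  right_inv b := by apply Subtype.ext; simp [hr0]

theorem nm_fix (h : QF q F σ) (τ : F) : σ (τ * σ τ) = τ * σ τ := by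
  rw [map_mul, h.ss, mul_comm]

theorem nm_ne (τ : Fˣ) : (τ : F) * σ τ ≠ 0 := mul_ne_zero τ.ne_zero (by simp)

variable {n : ℕ} {R : G →* Matrix (Fin n) (Fin n) ℂ}

/-- generation: commuting with generators is enough -/
theorem BStr.comm_all (hB : BStr σ x t v) (M : Matrix (Fin n) (Fin n) ℂ)
    (h1 : ∀ b, M * R (x b) = R (x b) * M) (h2 : ∀ a, M * R (v a) = R (v a) * M)
    (h3 : ∀ τ, M * R (t τ) = R (t τ) * M) (g : G) : M * R g = R g * M := by
  obtain ⟨b, a, τ, rfl⟩ := hB.gen g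
  rw [map_mul, map_mul, ← mul_assoc, ← mul_assoc, h1, mul_assoc (R (x b)), h2, ← mul_assoc,
    mul_assoc _ M, h3, ← mul_assoc]

theorem BStr.SZ_comm (hB : BStr σ x t v) (h : QF q F σ) (g : G) :
    (∑ b, R (x b)) * R g = R g * ∑ b, R (x b) := by
  refine hB.comm_all _ ?_ ?_ ?_ g
  · intro b
    rw [Finset.sum_mul, Finset.mul_sum]
    exact Finset.sum_congr rfl fun c _ => by rw [← map_mul, hB.xcomm, map_mul]
  · intro a
    rw [Finset.sum_mul, Finset.mul_sum]
    exact Finset.sum_congr rfl fun c _ => by rw [← map_mul, ← hB.vx, map_mul]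
  · intro τ
    rw [Finset.sum_mul, Finset.mul_sum]
    rw [← Equiv.sum_comp (scl ((τ : F) * σ τ) (nm_ne τ) (nm_fix h τ))]
    refine Finset.sum_congr rfl fun c _ => ?_
    rw [← map_mul, ← map_mul, ← hB.tx]; rfl

theorem BStr.SZ_x (hB : BStr σ x t v) (b : ZZ σ) :
    R (x b) * (∑ b, R (x b)) = ∑ b, R (x b) := by
  rw [Finset.mul_sum, ← Equiv.sum_comp (Equiv.addLeft b) (fun b => R (x b))]
  refine Finset.sum_congr rfl fun c _ => ?_
  rw [← map_mul, ← hB.x_add]; rfl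

set_option maxHeartbeats 400000 in
theorem BStr.SZ_zero (hB : BStr σ x t v) (h : QF q F σ)
    (hS : ∀ M : Matrix (Fin n) (Fin n) ℂ, (∀ g, M * R g = R g * M) →
      ∃ c : ℂ, M = c • (1 : Matrix (Fin n) (Fin n) ℂ)) (hn : 1 < n)
    (ht : (R (t (-1))).trace ≠ 0) : ∑ b, R (x b) = 0 := by
  obtain ⟨μ, hμ⟩ := hS _ (hB.SZ_comm h)
  by_cases hμ0 : μ = 0
  · rw [hμ, hμ0, zero_smul]
  exfalso
  have hx1 : ∀ b, R (x b) = 1 := by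
    intro b
    have := hB.SZ_x (R := R) b
    rw [hμ, mul_smul_comm, mul_one] at this
    exact smul_right_injective _ hμ0 this
  have hvv : ∀ a a', R (v a) * R (v a') = R (v (a + a')) := by
    intro a a'
    rw [← map_mul, hB.vv' h, map_mul, hx1, one_mul]
  have hT : ∀ g, (∑ a, R (v a)) * R g = R g * ∑ a, R (v a) := by
    refine hB.comm_all _ ?_ ?_ ?_
    · intro b; rw [hx1, one_mul, mul_one]
    · intro a
      rw [Finset.sum_mul, Finset.mul_sum]
      exact Finset.sum_congr rfl fun c _ => by rw [hvv, add_comm, hvv]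
    · intro τ
      rw [Finset.sum_mul, Finset.mul_sum]
      have hne : (τ : F) ^ 2 / σ τ ≠ 0 := div_ne_zero (pow_ne_zero _ τ.ne_zero) (by simp)
      rw [← Equiv.sum_comp (Equiv.mulLeft₀ _ hne)]
      refine Finset.sum_congr rfl fun c _ => ?_
      rw [← map_mul, ← map_mul, hB.tv]; rfl
  obtain ⟨ν, hν⟩ := hS _ hT
  by_cases hν0 : ν = 0
  · have h1 : ∀ a, (R (v (2 * a)) * R (t (-1))).trace = (R (t (-1))).trace := by
      intro a
      have h2 : t (-1) * v (-a) = v a * t (-1) := by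
        rw [hB.tv]; congr 2; simp
      have h3 : R (v (2 * a)) * R (t (-1)) = R (v a) * R (t (-1)) * R (v (-a)) := by
        rw [mul_assoc (R (v a)) (R (t (-1))), ← map_mul R (t (-1)), h2, map_mul, ← mul_assoc, hvv,
          two_mul]
      rw [h3, Matrix.trace_mul_comm, ← mul_assoc, hvv, neg_add_cancel, hB.v0, map_one, one_mul]
    have h2 := Finset.sum_congr (rfl : (Finset.univ : Finset F) = _) fun a _ => h1 a
    have h8 : ∑ a, R (v (2 * a)) = ∑ a, R (v a) :=
      Equiv.sum_comp (Equiv.mulLeft₀ (2 : F) h.two) (fun a => R (v a))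
    rw [← Matrix.trace_sum, ← Finset.sum_mul, h8, hν, hν0, zero_smul,
      zero_mul, Matrix.trace_zero] at h2
    simp only [Finset.sum_const, Finset.card_univ, nsmul_eq_mul] at h2
    rcases mul_eq_zero.1 h2.symm with h3 | h3
    · exact Fintype.card_ne_zero (by exact_mod_cast h3)
    · exact ht h3
  · have hv1 : ∀ a, R (v a) = 1 := by
      intro a
      have : R (v a) * (∑ b, R (v b)) = ∑ b, R (v b) := by
        rw [Finset.mul_sum, ← Equiv.sum_comp (Equiv.addLeft a) (fun b => R (v b))]
        exact Finset.sum_congr rfl fun c _ => hvv _ _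
      rw [hν, mul_smul_comm, mul_one] at this
      exact smul_right_injective _ hν0 this
    have hRt : ∀ τ, ∃ c : ℂ, R (t τ) = c • (1 : Matrix (Fin n) (Fin n) ℂ) := by
      intro τ
      apply hS
      refine hB.comm_all _ ?_ ?_ ?_
      · intro b; rw [hx1, one_mul, mul_one]
      · intro b; rw [hv1, one_mul, mul_one]
      · intro τ'; rw [← map_mul, hB.tcomm, map_mul]
    obtain ⟨c, hc⟩ := hS (Matrix.single ⟨0, by omega⟩ ⟨1, hn⟩ 1) (by
      refine hB.comm_all _ ?_ ?_ ?_
      · intro b; rw [hx1, one_mul, mul_one]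
      · intro b; rw [hv1, one_mul, mul_one]
      · intro τ
        obtain ⟨c, hc⟩ := hRt τ
        rw [hc, mul_smul_comm, smul_mul_assoc, one_mul, mul_one])
    have := congrFun (congrFun hc ⟨0, by omega⟩) ⟨1, hn⟩
    simp [Matrix.one_apply] at this

/-- the character at elements of nontrivial norm -/
theorem BStr.chi1 (hB : BStr σ x t v) (h : QF q F σ) (hZ : ∑ b, R (x b) = 0) (b : ZZ σ) (a : F)
    (τ : Fˣ) (hτ : (τ : F) * σ τ ≠ 1) : (R (x b * v a * t τ)).trace = 0 := by
  have hr : σ (1 - (τ : F) * σ τ) = 1 - (τ : F) * σ τ := by rw [map_sub, nm_fix h, map_one]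
  let e := scl _ (sub_ne_zero.2 hτ.symm) hr
  have h1 : ∀ c, (R (x (e c)) * R (x b * v a * t τ)).trace = (R (x b * v a * t τ)).trace := by
    intro c
    let e' := scl _ (nm_ne τ) (nm_fix h τ)
    have h2 : e c = c + e' (-c) := by
      apply Subtype.ext
      show (1 - (τ : F) * σ τ) * c = c + (τ : F) * σ τ * (-c)
      ring
    have h3 : x (e' (-c)) * (x b * v a * t τ) = (x b * v a * t τ) * x (-c) := by
      rw [mul_assoc _ (t τ), hB.tx τ (-c) (e' (-c)) rfl, ← mul_assoc (x b * v a), mul_assoc (x b) (v a) (x _),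
        hB.vx, ← mul_assoc (x b), hB.xcomm b]
      simp only [mul_assoc]
    rw [h2, hB.x_add, map_mul, mul_assoc, ← map_mul R (x (e' (-c))), h3, map_mul R _ (x (-c)),
      ← mul_assoc, Matrix.trace_mul_comm, ← mul_assoc, ← map_mul R (x (-c)), hB.xcomm, hB.xneg,
      map_one, one_mul]
  have h2 := Finset.sum_congr (rfl : (Finset.univ : Finset (ZZ σ)) = _) fun a _ => h1 a
  rw [← Matrix.trace_sum, ← Finset.sum_mul, Equiv.sum_comp e (fun a => R (x a)), hZ, zero_mul,
    Matrix.trace_zero] at h2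
  simp only [Finset.sum_const, Finset.card_univ, nsmul_eq_mul] at h2
  rcases mul_eq_zero.1 h2.symm with h3 | h3
  · exact absurd (by exact_mod_cast h3) (Fintype.card_ne_zero (α := ZZ σ))
  · exact h3

/-- the character on noncentral unipotent elements -/
theorem BStr.chi2 (hB : BStr σ x t v) (h : QF q F σ) (hZ : ∑ b, R (x b) = 0) (b : ZZ σ) (a : F)
    (ha : a ≠ 0) : (R (x b * v a)).trace = 0 := by
  have hsa : σ a ≠ 0 := by simpa using ha
  have h2' := h.two
  have h1 : ∀ c : ZZ σ, (R (x c) * R (x b * v a)).trace = (R (x b * v a)).trace := by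
    intro c
    let a' : F := -(c : F) / (2 * σ a)
    have hsa' : σ a' = (c : F) / (2 * a) := by
      simp only [a', map_div₀, map_neg, map_mul, map_ofNat, h.ss, mem_ZZ.1 c.2, neg_neg]
    have h5 : v a' * v a = x c * (v a * v a') := by
      rw [hB.vv' h a a', hB.vv' h a' a, ← mul_assoc, ← hB.x_add, add_comm a]
      congr 2
      apply Subtype.ext
      show (a * σ a' - a' * σ a) / 2 = c + (a' * σ a - a * σ a') / 2
      rw [hsa']
      simp only [a']
      field_simp
      ring
    have h6 : x c * (x b * v a) = v a' * (x b * v a) * v (-a') := by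
      rw [← mul_assoc (v a'), hB.vx, mul_assoc (x b), h5, mul_assoc, mul_assoc, mul_assoc,
        hB.vneg, mul_one, ← mul_assoc, hB.xcomm, mul_assoc]
    have h7 : v (-a') * v a' = 1 := by have := hB.vneg (-a'); rwa [neg_neg] at this
    rw [← map_mul, h6, map_mul, Matrix.trace_mul_comm, ← map_mul, ← mul_assoc, h7, one_mul]
  have h2 := Finset.sum_congr (rfl : (Finset.univ : Finset (ZZ σ)) = _) fun a _ => h1 a
  rw [← Matrix.trace_sum, ← Finset.sum_mul, hZ, zero_mul,
    Matrix.trace_zero] at h2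
  simp only [Finset.sum_const, Finset.card_univ, nsmul_eq_mul] at h2
  rcases mul_eq_zero.1 h2.symm with h3 | h3
  · exact absurd (by exact_mod_cast h3) (Fintype.card_ne_zero (α := ZZ σ))
  · exact h3

/-- the character on `x b * t τ` -/
theorem BStr.chi3 (hB : BStr σ x t v) (h : QF q F σ) (hZ : ∑ b, R (x b) = 0) (b : ZZ σ)
    (hb : b ≠ 0) (τ : Fˣ) :
    ((q : ℂ) - 1) * (R (x b * t τ)).trace = -(R (t τ)).trace := by
  classical
  have h1 : ∀ c ∈ Finset.univ.erase (0 : ZZ σ), (R (x c) * R (t τ)).trace = (R (x b * t τ)).trace := by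
    intro c hc
    have hc0 : (c : F) ≠ 0 := fun h0 => Finset.ne_of_mem_erase hc (Subtype.ext h0)
    have hb0 : (b : F) ≠ 0 := fun h0 => hb (Subtype.ext h0)
    obtain ⟨κ, hκ⟩ := h.norm_surj ((c : F) / b) (div_ne_zero hc0 hb0) (by
      rw [map_div₀, mem_ZZ.1 b.2, mem_ZZ.1 c.2, neg_div_neg_eq])
    have h2 : t κ * x b = x c * t κ := hB.tx _ _ _ (by rw [hκ]; field_simp)
    have h3 : x c * t τ = t κ * (x b * t τ) * t κ⁻¹ := by
      rw [← mul_assoc, h2, mul_assoc (x c), hB.tcomm, mul_assoc, mul_assoc, hB.tinv, mul_one]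
    rw [← map_mul, h3, map_mul, Matrix.trace_mul_comm, ← map_mul, ← mul_assoc, ← hB.t_mul,
      inv_mul_cancel, hB.t1, one_mul]
  have h2 := Finset.sum_congr rfl h1
  have h3 : ∑ c ∈ Finset.univ.erase (0 : ZZ σ), (R (x c) * R (t τ)).trace + (R (t τ)).trace = 0 := by
    rw [← zero_mul (R (t τ)).trace]
    have := Finset.sum_erase_add Finset.univ (fun c => (R (x c) * R (t τ)).trace)
      (Finset.mem_univ (0 : ZZ σ))
    rw [hB.x0, map_one, one_mul] at this
    rw [this, ← Matrix.trace_sum, ← Finset.sum_mul, hZ]; simp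
  rw [h2, Finset.sum_const, Finset.card_erase_of_mem (Finset.mem_univ _), Finset.card_univ, h.cardZ,
    nsmul_eq_mul, Nat.cast_sub h.one.le, Nat.cast_one] at h3
  exact eq_neg_of_add_eq_zero_left h3

end
end Paper

namespace Paper

theorem sum_char {A : Type} [AddCommGroup A] [Fintype A] {n : ℕ}
    (P : A → Matrix (Fin n) (Fin n) ℂ) (hP : ∀ a b, P (a + b) = P a * P b) (l : AddChar A ℂ) :
    (∑ a, l (-a) • P a) * (∑ a, l (-a) • P a) =
      (Fintype.card A : ℂ) • ∑ a, l (-a) • P a := by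
  rw [Finset.sum_mul]
  have h1 : ∀ a ∈ Finset.univ, (l (-a) • P a) * (∑ a, l (-a) • P a) = ∑ a, l (-a) • P a := by
    intro a _
    conv_rhs => rw [← Equiv.sum_comp (Equiv.addLeft a) (fun a => l (-a) • P a)]
    rw [Finset.mul_sum]
    refine Finset.sum_congr rfl fun b _ => ?_
    simp only [Equiv.coe_addLeft]
    rw [hP, neg_add, AddChar.map_add_eq_mul, smul_mul_smul_comm]
  rw [Finset.sum_congr rfl h1, Finset.sum_const, Finset.card_univ, ← Nat.cast_smul_eq_nsmul ℂ]

section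
variable {q : ℕ} {F G : Type} [Field F] [Fintype F] [Group G] {σ : F →+* F} {x : ZZ σ → G}
  {t : Fˣ → G} {v : F → G} {n : ℕ} {R : G →* Matrix (Fin n) (Fin n) ℂ}

theorem sum_mulLeft {M : Type} [AddCommMonoid M] (c : F) (hc : c ≠ 0) (f : F → M) :
    ∑ a, f (c * a) = ∑ a, f a := Equiv.sum_comp (Equiv.mulLeft₀ c hc) f

theorem CC_cube {τ : Fˣ} (hτ : (τ : F) * σ τ = 1) : (τ : F) ^ 2 / σ τ = (τ : F) ^ 3 := by
  have h0 : σ (τ : F) ≠ 0 := by simp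
  rw [div_eq_iff h0]
  linear_combination -(τ : F) ^ 2 * hτ

theorem BStr.chi4 (hB : BStr σ x t v) (h : QF q F σ) (b : ZZ σ) (a : F) (τ : Fˣ)
    (hτ : (τ : F) * σ τ = 1) (h3 : τ ^ 3 ≠ 1) :
    ∃ b', (R (x b * v a * t τ)).trace = (R (x b' * t τ)).trace := by
  have h3' : (τ : F) ^ 3 - 1 ≠ 0 := by
    intro h0
    apply h3
    apply Units.ext
    simpa using sub_eq_zero.1 h0
  let c : F := a / ((τ : F) ^ 3 - 1)
  have hc : c + a + (τ : F) ^ 3 * (-c) = 0 := by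
    have : c * ((τ : F) ^ 3 - 1) = a := by simp only [c]; field_simp
    linear_combination -this
  have h7 : v (-c) * v c = 1 := by have := hB.vneg (-c); rwa [neg_neg] at this
  refine ⟨b + bet h c a + bet h (c + a) ((τ : F) ^ 3 * (-c)), ?_⟩
  have h5 : v c * (x b * v a * t τ) * v (-c) =
      x (b + bet h c a + bet h (c + a) ((τ : F) ^ 3 * (-c))) * t τ := by
    calc v c * (x b * v a * t τ) * v (-c) = (v c * x b) * v a * (t τ * v (-c)) := by
          simp only [mul_assoc]
      _ = x b * (v c * v a) * v ((τ : F) ^ 3 * (-c)) * t τ := by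
          rw [hB.vx, hB.tv, CC_cube hτ]; simp only [mul_assoc]
      _ = x b * x (bet h c a) * (v (c + a) * v ((τ : F) ^ 3 * (-c))) * t τ := by
          rw [hB.vv' h]; simp only [mul_assoc]
      _ = _ := by
          rw [hB.vv' h (c + a), hc, hB.v0, mul_one, ← hB.x_add, ← hB.x_add]
  rw [← h5, map_mul R _ (v (-c)), Matrix.trace_mul_comm, ← map_mul, ← mul_assoc, h7, one_mul]

theorem BStr.chi5 (hB : BStr σ x t v)
    (hS : ∀ M : Matrix (Fin n) (Fin n) ℂ, (∀ g, M * R g = R g * M) →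
      ∃ c : ℂ, M = c • (1 : Matrix (Fin n) (Fin n) ℂ)) (hn : n ≠ 0) (τ : Fˣ)
    (hτ : (τ : F) * σ τ = 1) (h3 : τ ^ 3 = 1) :
    R (t τ) = ((R (t τ)).trace / n) • (1 : Matrix (Fin n) (Fin n) ℂ) := by
  obtain ⟨c, hc⟩ := hS (R (t τ)) (by
    refine hB.comm_all _ ?_ ?_ ?_
    · intro b; rw [← map_mul, hB.tx τ b b (by rw [hτ, one_mul]), map_mul]
    · intro a
      have : (τ : F) ^ 3 = 1 := by
        have := congrArg Units.val h3
        simpa using this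
      rw [← map_mul, hB.tv, CC_cube hτ, this, one_mul, map_mul]
    · intro τ'; rw [← map_mul, hB.tcomm, map_mul])
  have hn' : (n : ℂ) ≠ 0 := Nat.cast_ne_zero.2 hn
  have : (R (t τ)).trace / n = c := by
    rw [hc, Matrix.trace_smul, Matrix.trace_one, Fintype.card_fin, smul_eq_mul]
    field_simp
  rw [this, ← hc]

set_option maxHeartbeats 800000 in
theorem BStr.chi6 (hB : BStr σ x t v) (h : QF q F σ)
    (hS : ∀ M : Matrix (Fin n) (Fin n) ℂ, (∀ g, M * R g = R g * M) →
      ∃ c : ℂ, M = c • (1 : Matrix (Fin n) (Fin n) ℂ))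
    (hn : n ≠ 0) (hZ : ∑ b, R (x b) = 0) (τ : Fˣ)
    (hτ : (τ : F) * σ τ = 1) (h3 : τ ^ 3 ≠ 1) :
    (q : ℂ) ^ 2 * ((R (t τ)).trace * (R (t τ⁻¹)).trace) = n ^ 2 := by
  have h3' : (τ : F) ^ 3 - 1 ≠ 0 := by
    intro h0
    apply h3
    apply Units.ext
    simpa using sub_eq_zero.1 h0
  have hvn : ∀ c, v (-c) * v c = 1 := by
    intro c; have := hB.vneg (-c); rwa [neg_neg] at this
  have htx : ∀ b, t τ * x b = x b * t τ := fun b => hB.tx τ b b (by rw [hτ, one_mul])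
  have hconj : ∀ c a, v c * (v a * t τ * v (-a)) = (v (c + a) * t τ * v (-(c + a))) * v c := by
    intro c a
    have h1 : v (-a) * v (-c) * x (bet h c a) = v (-(c + a)) := by
      rw [hB.vv' h, mul_assoc, hB.vx, ← mul_assoc, ← hB.x_add]
      have : bet h (-a) (-c) + bet h c a = 0 := by
        apply Subtype.ext
        show (-c * σ (-a) - -a * σ (-c)) / 2 + (a * σ c - c * σ a) / 2 = 0
        rw [map_neg, map_neg]; ring
      rw [this, hB.x0, one_mul]; congr 1; ring
    have h2 : v (c + a) = x (-bet h c a) * (v c * v a) := by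
      rw [hB.vv' h, ← mul_assoc, ← hB.x_add, neg_add_cancel, hB.x0, one_mul]
    rw [← h1, h2]
    calc v c * (v a * t τ * v (-a))
        = x (-bet h c a) * x (bet h c a) * (v c * (v a * t τ * v (-a))) := by
          rw [← hB.x_add, neg_add_cancel, hB.x0, one_mul]
      _ = x (-bet h c a) * ((x (bet h c a) * v c) * v a * t τ * v (-a)) := by
          simp only [mul_assoc]
      _ = x (-bet h c a) * (v c * (x (bet h c a) * v a) * t τ * v (-a)) := by
          rw [← hB.vx]; simp only [mul_assoc]
      _ = x (-bet h c a) * (v c * v a * (x (bet h c a) * t τ) * v (-a)) := by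
          rw [← hB.vx]; simp only [mul_assoc]
      _ = x (-bet h c a) * (v c * v a * t τ * (x (bet h c a) * v (-a))) := by
          rw [← htx]; simp only [mul_assoc]
      _ = x (-bet h c a) * (v c * v a * t τ * (v (-a) * x (bet h c a) * (v (-c) * v c))) := by
          rw [← hB.vx, hvn, mul_one]
      _ = x (-bet h c a) * (v c * v a * t τ * (v (-a) * (x (bet h c a) * v (-c)) * v c)) := by
          simp only [mul_assoc]
      _ = x (-bet h c a) * (v c * v a) * t τ * (v (-a) * v (-c) * x (bet h c a)) * v c := by
          rw [← hB.vx]; simp only [mul_assoc]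
  obtain ⟨α, hα⟩ := hS (∑ a, R (v a * t τ * v (-a))) (by
    refine hB.comm_all _ ?_ ?_ ?_
    · intro b
      rw [Finset.sum_mul, Finset.mul_sum]
      refine Finset.sum_congr rfl fun a _ => ?_
      rw [← map_mul, ← map_mul, mul_assoc, hB.vx, ← mul_assoc, mul_assoc (v a), htx, ← mul_assoc,
        hB.vx]
      simp only [mul_assoc]
    · intro c
      rw [Finset.sum_mul, Finset.mul_sum,
        ← Equiv.sum_comp (Equiv.addLeft c) (fun a => R (v a * t τ * v (-a)) * R (v c))]
      refine Finset.sum_congr rfl fun a _ => ?_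
      simp only [Equiv.coe_addLeft]
      rw [← map_mul, ← map_mul, hconj]
    · intro κ
      have hne : (κ : F) ^ 2 / σ κ ≠ 0 := div_ne_zero (pow_ne_zero _ κ.ne_zero) (by simp)
      rw [Finset.sum_mul, Finset.mul_sum,
        ← sum_mulLeft _ hne (fun a => R (v a * t τ * v (-a)) * R (t κ))]
      refine Finset.sum_congr rfl fun a _ => ?_
      rw [← map_mul, ← map_mul, mul_assoc (v _ * t τ), ← mul_neg, ← hB.tv, mul_assoc (v _),
        ← mul_assoc (t τ), hB.tcomm τ, ← mul_assoc, ← mul_assoc, ← hB.tv]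
      simp only [mul_assoc])
  have htr : (q : ℂ) ^ 2 * (R (t τ)).trace = α * n := by
    have h1 := congrArg Matrix.trace hα
    rw [Matrix.trace_sum, Matrix.trace_smul, Matrix.trace_one, Fintype.card_fin, smul_eq_mul] at h1
    rw [← h1]
    have h2 : ∀ a ∈ Finset.univ, (R (v a * t τ * v (-a))).trace = (R (t τ)).trace := by
      intro a _
      rw [map_mul, Matrix.trace_mul_comm, ← map_mul, ← mul_assoc, hvn, one_mul]
    rw [Finset.sum_congr rfl h2, Finset.sum_const, Finset.card_univ, h.card, nsmul_eq_mul]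
    push_cast; rfl
  have htr2 : α * (R (t τ⁻¹)).trace = n := by
    have h1 := congrArg (fun M => (M * R (t τ⁻¹)).trace) hα
    simp only [smul_mul_assoc, one_mul, Matrix.trace_smul, smul_eq_mul] at h1
    rw [← h1, Finset.sum_mul, Matrix.trace_sum, Finset.sum_eq_single 0]
    · rw [neg_zero, hB.v0, one_mul, mul_one, ← map_mul, hB.tinv, map_one, Matrix.trace_one,
        Fintype.card_fin]
    · intro a _ ha
      have h2 : v a * t τ * v (-a) * t τ⁻¹ =
          x (bet h a ((τ : F) ^ 3 * (-a))) * v (a + (τ : F) ^ 3 * (-a)) := by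
        rw [mul_assoc (v a), hB.tv, CC_cube hτ, ← mul_assoc, mul_assoc _ (t τ), hB.tinv, mul_one,
          hB.vv' h]
      rw [← map_mul, h2]
      apply hB.chi2 h hZ
      have : a + (τ : F) ^ 3 * (-a) = -(a * ((τ : F) ^ 3 - 1)) := by ring
      rw [this]
      exact neg_ne_zero.2 (mul_ne_zero ha h3')
    · simp
  calc (q : ℂ) ^ 2 * ((R (t τ)).trace * (R (t τ⁻¹)).trace)
      = n * (α * (R (t τ⁻¹)).trace) := by rw [← mul_assoc, htr]; ring
    _ = n ^ 2 := by rw [htr2]; ring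

end
end Paper

namespace Paper

section
variable {q : ℕ} {F G : Type} [Field F] [Fintype F] [Group G] {σ : F →+* F} {x : ZZ σ → G}
  {t : Fˣ → G} {v : F → G} {n : ℕ} {R : G →* Matrix (Fin n) (Fin n) ℂ}

open Classical in
/-- the normalized character value on the torus -/
def Ph (q : ℕ) (t : Fˣ → G) (R : G →* Matrix (Fin n) (Fin n) ℂ) (τ : Fˣ) : ℂ :=
  if τ ^ 3 = 1 then (R (t τ)).trace / n else -(R (t τ)).trace / ((q : ℂ) - 1)

theorem Ph_cube (τ : Fˣ) (h3 : τ ^ 3 = 1) : Ph q t R τ = (R (t τ)).trace / n := if_pos h3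
theorem Ph_ncube (τ : Fˣ) (h3 : ¬ τ ^ 3 = 1) : Ph q t R τ = -(R (t τ)).trace / ((q : ℂ) - 1) :=
  if_neg h3

theorem BStr.Ph_inv (hB : BStr σ x t v) (h : QF q F σ)
    (hS : ∀ M : Matrix (Fin n) (Fin n) ℂ, (∀ g, M * R g = R g * M) →
      ∃ c : ℂ, M = c • (1 : Matrix (Fin n) (Fin n) ℂ))
    (hn : (n : ℂ) = q * (q - 1)) (hn0 : n ≠ 0) (hZ : ∑ b, R (x b) = 0) (τ : Fˣ)
    (hτ : (τ : F) * σ τ = 1) : Ph q t R τ * Ph q t R τ⁻¹ = 1 := by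
  have hn0' : (n : ℂ) ≠ 0 := Nat.cast_ne_zero.2 hn0
  by_cases h3 : τ ^ 3 = 1
  · have h3' : τ⁻¹ ^ 3 = 1 := by rw [inv_pow, h3, inv_one]
    rw [Ph_cube _ h3, Ph_cube _ h3']
    have e1 := hB.chi5 hS hn0 τ hτ h3
    have e2 := hB.chi5 hS hn0 τ⁻¹ ((CC σ).inv_mem hτ) h3'
    have e3 : R (t τ) * R (t τ⁻¹) = 1 := by rw [← map_mul, hB.tinv, map_one]
    rw [e1, e2, smul_mul_smul_comm, mul_one] at e3
    have e4 := congrArg Matrix.trace e3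
    rw [Matrix.trace_smul, Matrix.trace_one, Fintype.card_fin, smul_eq_mul] at e4
    exact mul_right_cancel₀ hn0' (e4.trans (one_mul _).symm)
  · have h3' : ¬ τ⁻¹ ^ 3 = 1 := by rwa [inv_pow, inv_eq_one]
    rw [Ph_ncube _ h3, Ph_ncube _ h3']
    have e1 := hB.chi6 h hS hn0 hZ τ hτ h3
    rw [hn] at e1 hn0'
    have hq0 : (q : ℂ) ≠ 0 := left_ne_zero_of_mul hn0'
    have hq1 : (q : ℂ) - 1 ≠ 0 := right_ne_zero_of_mul hn0'
    rw [mul_pow] at e1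
    have e2 := mul_left_cancel₀ (pow_ne_zero 2 hq0) e1
    rw [div_mul_div_comm, neg_mul_neg, e2]
    field_simp

theorem BStr.int1 (hB : BStr σ x t v) (h : QF q F σ) (hZ : ∑ b, R (x b) = 0)
    (ψ : AddChar (Additive (CC σ)) ℂ) :
    ∃ m : ℕ, ∑ a : Additive (CC σ), (R (t (a.toMul : CC σ))).trace * ψ (-a) =
      ((q : ℂ) - 1) * (q + 1) * m := by
  classical
  have hq1 : (q : ℂ) - 1 ≠ 0 := by
    have := h.one
    rw [sub_ne_zero]; exact_mod_cast this.ne'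
  have hq0 : (q : ℂ) ≠ 0 := by have := h.one; exact_mod_cast (by omega : q ≠ 0)
  have hq2 : (q : ℂ) + 1 ≠ 0 := by exact_mod_cast (Nat.succ_ne_zero q)
  have hnt : ∃ c : ZZ σ, c ≠ 0 := by
    have : Nontrivial (ZZ σ) := Fintype.one_lt_card_iff_nontrivial.1 (by rw [h.cardZ]; exact h.one)
    exact exists_ne 0
  obtain ⟨c, hc⟩ := hnt
  obtain ⟨l, hl⟩ := AddChar.exists_apply_ne_zero.2 hc
  have hl0 : ∑ b, l (-b) = 0 := by
    have := AddChar.sum_eq_zero_iff_ne_zero (ψ := l).2 (by rintro rfl; simp at hl)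
    rw [← this]
    exact Equiv.sum_comp (Equiv.neg (ZZ σ)) (fun b => l b)
  set E1 := ∑ b, l (-b) • R (x b) with hE1
  set E2 := ∑ a : Additive (CC σ), ψ (-a) • R (t (a.toMul : CC σ)) with hE2
  have s1 : E1 * E1 = (q : ℂ) • E1 := by
    rw [← h.cardZ]
    exact sum_char (fun b => R (x b)) (fun a b => by rw [hB.x_add, map_mul]) l
  have s2 : E2 * E2 = ((q : ℂ) + 1) • E2 := by
    have := sum_char (fun a : Additive (CC σ) => R (t (a.toMul : CC σ)))
      (fun a b => by rw [toMul_add, Subgroup.coe_mul, hB.t_mul, map_mul]) ψ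
    have h2 : Fintype.card (Additive (CC σ)) = q + 1 := by
      rw [← h.cardC]; exact Fintype.card_congr Additive.toMul
    rw [h2] at this
    push_cast at this
    exact this
  have s3 : E2 * E1 = E1 * E2 := by
    rw [hE1, hE2, Finset.sum_mul_sum, Finset.sum_mul_sum, Finset.sum_comm]
    refine Finset.sum_congr rfl fun b _ => Finset.sum_congr rfl fun a _ => ?_
    rw [smul_mul_smul_comm, smul_mul_smul_comm, mul_comm (ψ _), ← map_mul, ← map_mul,
      hB.tx _ b b (by rw [mem_CC.1 a.toMul.2, one_mul])]
  have s4 : (E1 * E2) * (E1 * E2) = ((q : ℂ) * (q + 1)) • (E1 * E2) := by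
    rw [mul_assoc, ← mul_assoc E2, s3, mul_assoc E1, s2, ← mul_assoc, s1, smul_mul_assoc,
      mul_smul_comm, smul_smul]
  obtain ⟨m, hm⟩ := idem_trace (((q : ℂ) * (q + 1))⁻¹ • (E1 * E2)) (by
    rw [smul_mul_smul_comm, s4, smul_smul]
    congr 1
    field_simp)
  refine ⟨m, ?_⟩
  rw [Matrix.trace_smul, smul_eq_mul] at hm
  have s5 : ((q : ℂ) - 1) * (E1 * E2).trace =
      q * ∑ a : Additive (CC σ), (R (t (a.toMul : CC σ))).trace * ψ (-a) := by
    rw [← s3, hE1, hE2, Finset.sum_mul_sum, Matrix.trace_sum, Finset.mul_sum, Finset.mul_sum]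
    refine Finset.sum_congr rfl fun a _ => ?_
    rw [Matrix.trace_sum, Finset.mul_sum]
    have key : ∀ b, ((q : ℂ) - 1) * (R (x b * t (a.toMul : CC σ))).trace =
        (if b = 0 then (q : ℂ) else 0) * (R (t (a.toMul : CC σ))).trace -
          (R (t (a.toMul : CC σ))).trace := by
      intro b
      by_cases hb : b = 0
      · rw [if_pos hb, hb, hB.x0, one_mul]; ring
      · rw [if_neg hb, hB.chi3 h hZ b hb]; ring
    calc _ = ∑ b, l (-b) * ψ (-a) * (((q : ℂ) - 1) * (R (x b * t (a.toMul : CC σ))).trace) := by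
          refine Finset.sum_congr rfl fun b _ => ?_
          rw [smul_mul_smul_comm, ← map_mul, hB.tx _ b b (by rw [mem_CC.1 a.toMul.2, one_mul]), Matrix.trace_smul, smul_eq_mul]
          ring
      _ = ∑ b, ((if b = 0 then l (-b) * (q * ((R (t (a.toMul : CC σ))).trace * ψ (-a))) else 0) -
            l (-b) * (ψ (-a) * (R (t (a.toMul : CC σ))).trace)) := by
          refine Finset.sum_congr rfl fun b _ => ?_
          rw [key]
          split_ifs <;> ring
      _ = _ := by
          rw [Finset.sum_sub_distrib, ← Finset.sum_mul, hl0, Finset.sum_ite_eq']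
          simp
  have s6 : (E1 * E2).trace = q * (q + 1) * m := by
    rw [← hm]; field_simp
  rw [s6] at s5
  apply mul_left_cancel₀ hq0
  rw [← s5]; ring

theorem BStr.int2 (hB : BStr σ x t v)
    (hS : ∀ M : Matrix (Fin n) (Fin n) ℂ, (∀ g, M * R g = R g * M) →
      ∃ c : ℂ, M = c • (1 : Matrix (Fin n) (Fin n) ℂ)) (hn0 : n ≠ 0)
    (ψ : AddChar (Additive (CC σ)) ℂ) (g : Additive (CC σ) → ℂ)
    (hg1 : ∀ a : Additive (CC σ), ((a.toMul : CC σ) : Fˣ) ^ 3 = 1 →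
      g a = (R (t (a.toMul : CC σ))).trace / n)
    (hg2 : ∀ a : Additive (CC σ), ¬ ((a.toMul : CC σ) : Fˣ) ^ 3 = 1 → g a = 0) :
    ∃ m : ℕ, ∑ a, g a * ψ (-a) = m := by
  classical
  by_cases hall : ∀ a : Additive (CC σ), ((a.toMul : CC σ) : Fˣ) ^ 3 = 1 → g a * ψ (-a) = 1
  · refine ⟨(Finset.univ.filter fun a : Additive (CC σ) =>
      ((a.toMul : CC σ) : Fˣ) ^ 3 = 1).card, ?_⟩
    rw [Finset.natCast_card_filter]
    refine Finset.sum_congr rfl fun a _ => ?_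
    split_ifs with h
    · exact hall a h
    · rw [hg2 a h, zero_mul]
  · push Not at hall
    obtain ⟨c, hc, hc1⟩ := hall
    refine ⟨0, ?_⟩
    have hmul : ∀ a, g (c + a) = g c * g a := by
      intro a
      by_cases ha : ((a.toMul : CC σ) : Fˣ) ^ 3 = 1
      · rw [hg1 c hc, hg1 a ha, hg1 (c + a) (by
          rw [toMul_add, Subgroup.coe_mul, mul_pow, hc, ha, one_mul]), toMul_add, Subgroup.coe_mul,
          hB.t_mul, map_mul]
        nth_rewrite 1 [hB.chi5 hS hn0 _ c.toMul.2 hc]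
        rw [smul_mul_assoc, one_mul, Matrix.trace_smul, smul_eq_mul, mul_div_assoc]
      · rw [hg2 a ha, mul_zero, hg2]
        rwa [toMul_add, Subgroup.coe_mul, mul_pow, hc, one_mul]
    have h1 : g c * ψ (-c) * ∑ a, g a * ψ (-a) = ∑ a, g a * ψ (-a) := by
      conv_rhs => rw [← Equiv.sum_comp (Equiv.addLeft c) (fun a => g a * ψ (-a))]
      rw [Finset.mul_sum]
      refine Finset.sum_congr rfl fun a _ => ?_
      simp only [Equiv.coe_addLeft]
      rw [hmul, neg_add, AddChar.map_add_eq_mul]; ring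
    have h2 : (g c * ψ (-c) - 1) * ∑ a, g a * ψ (-a) = 0 := by
      rw [sub_mul, h1, one_mul, sub_self]
    rcases mul_eq_zero.1 h2 with h3 | h3
    · exact absurd (sub_eq_zero.1 h3) hc1
    · rw [h3]; simp

theorem BStr.Ph_pow (hB : BStr σ x t v) (h : QF q F σ)
    (hS : ∀ M : Matrix (Fin n) (Fin n) ℂ, (∀ g, M * R g = R g * M) →
      ∃ c : ℂ, M = c • (1 : Matrix (Fin n) (Fin n) ℂ))
    (hn : (n : ℂ) = q * (q - 1)) (hn0 : n ≠ 0) (hZ : ∑ b, R (x b) = 0) (τ : Fˣ)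
    (hτ : (τ : F) * σ τ = 1) : Ph q t R τ ^ (q + 1) = 1 := by
  classical
  have hcard : Fintype.card (Additive (CC σ)) = q + 1 := by
    rw [← h.cardC]; exact Fintype.card_congr Additive.toMul
  have hn0' : (n : ℂ) ≠ 0 := Nat.cast_ne_zero.2 hn0
  have hq0 : (q : ℂ) ≠ 0 := by rw [hn] at hn0'; exact left_ne_zero_of_mul hn0'
  have hq1 : (q : ℂ) - 1 ≠ 0 := by rw [hn] at hn0'; exact right_ne_zero_of_mul hn0'
  have := parseval (A := Additive (CC σ)) (fun a => Ph q t R (a.toMul : CC σ))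
    (fun a => hB.Ph_inv h hS hn hn0 hZ _ a.toMul.2) (by rw [hcard]; exact h.odd.add_one) (by
      intro ψ
      obtain ⟨m, hm⟩ := hB.int1 h hZ ψ
      obtain ⟨s, hs⟩ := hB.int2 hS hn0 ψ (fun a : Additive (CC σ) =>
        if ((a.toMul : CC σ) : Fˣ) ^ 3 = 1 then (R (t (a.toMul : CC σ))).trace / n else 0)
        (fun a ha => if_pos ha) (fun a ha => if_neg ha)
      refine ⟨(s : ℤ) - m, ?_⟩
      rw [hcard]
      push_cast
      rw [mul_sub, ← hs]
      have hm' : ((q : ℂ) + 1) * m =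
          ∑ a : Additive (CC σ), ((q : ℂ) - 1)⁻¹ * ((R (t (a.toMul : CC σ))).trace * ψ (-a)) := by
        rw [← Finset.mul_sum, hm]; field_simp
      rw [hm', Finset.mul_sum, ← Finset.sum_sub_distrib]
      refine Finset.sum_congr rfl fun a _ => ?_
      by_cases ha : ((a.toMul : CC σ) : Fˣ) ^ 3 = 1
      · rw [Ph_cube _ ha, if_pos ha, hn]; field_simp; ring
      · rw [Ph_ncube _ ha, if_neg ha]; field_simp; ring) (Additive.ofMul ⟨τ, hτ⟩)
  rw [hcard] at this
  exact this

theorem BStr.nonreal (hB : BStr σ x t v) (h : QF q F σ)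
    (hS : ∀ M : Matrix (Fin n) (Fin n) ℂ, (∀ g, M * R g = R g * M) →
      ∃ c : ℂ, M = c • (1 : Matrix (Fin n) (Fin n) ℂ))
    (hn : (n : ℂ) = q * (q - 1)) (hn0 : n ≠ 0) (hZ : ∑ b, R (x b) = 0) (g : G)
    (hg : ((R g).trace).im ≠ 0) :
    ∃ (τ : Fˣ) (r : ℚ), ((r : ℂ) * (R (t τ)).trace) ^ (q + 1) = 1 ∧
      ((r : ℂ) * (R (t τ)).trace) ^ 2 ≠ 1 := by
  classical
  have hn0' : (n : ℂ) ≠ 0 := Nat.cast_ne_zero.2 hn0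
  have hq1 : (q : ℂ) - 1 ≠ 0 := by rw [hn] at hn0'; exact right_ne_zero_of_mul hn0'
  obtain ⟨b, a, τ, rfl⟩ := hB.gen g
  have hτ : (τ : F) * σ τ = 1 := by
    by_contra h0
    rw [hB.chi1 h hZ b a τ h0] at hg
    simp at hg
  refine ⟨τ, if τ ^ 3 = 1 then (n : ℚ)⁻¹ else -((q : ℚ) - 1)⁻¹, ?_⟩
  have hr : (((if τ ^ 3 = 1 then (n : ℚ)⁻¹ else -((q : ℚ) - 1)⁻¹ : ℚ)) : ℂ) * (R (t τ)).trace
      = Ph q t R τ := by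
    split_ifs with h3
    · rw [Ph_cube _ h3]; push_cast; ring
    · rw [Ph_ncube _ h3]; push_cast; ring
  rw [hr]
  refine ⟨hB.Ph_pow h hS hn hn0 hZ τ hτ, fun h2 => hg ?_⟩
  have hP : ∃ s : ℝ, Ph q t R τ = (s : ℂ) := by
    rcases sq_eq_one_iff.1 h2 with e | e
    · exact ⟨1, by simp [e]⟩
    · exact ⟨-1, by simp [e]⟩
  obtain ⟨s, hs⟩ := hP
  suffices H : ∃ s' : ℝ, (R (x b * v a * t τ)).trace = (s' : ℂ) * Ph q t R τ by
    obtain ⟨s', hs'⟩ := H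
    rw [hs', hs, ← Complex.ofReal_mul, Complex.ofReal_im]
  by_cases h3 : τ ^ 3 = 1
  · have e1 := hB.chi5 hS hn0 τ hτ h3
    rw [← Ph_cube (q := q) τ h3] at e1
    rw [map_mul, e1, mul_smul_comm, mul_one, Matrix.trace_smul, smul_eq_mul, mul_comm]
    by_cases ha : a = 0
    · rw [ha, hB.v0, mul_one]
      by_cases hb : b = 0
      · refine ⟨n, ?_⟩
        rw [hb, hB.x0, map_one, Matrix.trace_one, Fintype.card_fin]; push_cast; rfl
      · refine ⟨-n / ((q : ℝ) - 1), ?_⟩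
        have := hB.chi3 h hZ b hb 1
        rw [hB.t1, mul_one, map_one, Matrix.trace_one, Fintype.card_fin] at this
        push_cast
        rw [← this]; field_simp
    · refine ⟨0, ?_⟩
      rw [hB.chi2 h hZ b a ha]; simp
  · obtain ⟨b', hb'⟩ := hB.chi4 (R := R) h b a τ hτ h3
    rw [hb', Ph_ncube _ h3]
    by_cases hb : b' = 0
    · refine ⟨-((q : ℝ) - 1), ?_⟩
      rw [hb, hB.x0, one_mul]; push_cast; field_simp
    · refine ⟨1, ?_⟩
      rw [← hB.chi3 h hZ b' hb τ]; push_cast; field_simp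

end
end Paper

namespace Paper

section
variable (p k : ℕ) (F : Type) [Field F] [Fintype F] [ExpChar F p]

/-- the involution of the field -/
def sg : F →+* F := iterateFrobenius F p k

variable {p k F}

/-- the underlying matrix -/
def bm (g : Borel p k F) : Matrix (Fin 3) (Fin 3) F :=
  (((g : ↥(SU3 p k F)) : Matrix.SpecialLinearGroup (Fin 3) F) : Matrix (Fin 3) (Fin 3) F)

theorem bm_inj {g g' : Borel p k F} (h : bm g = bm g') : g = g' :=
  Subtype.ext (Subtype.ext (Subtype.ext h))

theorem bm_mul (g g' : Borel p k F) : bm (g * g') = bm g * bm g' := rfl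

theorem Phi_apply (M : Matrix (Fin 3) (Fin 3) F) (i j) : Phi p k F M i j = sg p k F (M i j) := rfl

/-- constructor for elements -/
def mkB (a b c d e f : F) (h1 : a * d * f = 1) (h2 : sg p k F a * f = 1)
    (h3 : sg p k F d * d = 1) (h4 : sg p k F b * f + sg p k F d * e = 0)
    (h5 : sg p k F c * f + sg p k F e * e + sg p k F f * c = 0)
    (hss : ∀ y, sg p k F (sg p k F y) = y) :
    Borel p k F :=
  ⟨⟨⟨!![a, b, c; 0, d, e; 0, 0, f], by simp [Matrix.det_fin_three, h1]⟩, by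
    have h2' : sg p k F f * a = 1 := by
      have := congrArg (sg p k F) h2
      rw [map_mul, hss, map_one] at this
      rw [mul_comm, this]
    have h4' : sg p k F e * d + sg p k F f * b = 0 := by
      have := congrArg (sg p k F) h4
      simp only [map_mul, hss, map_zero, map_add] at this
      linear_combination this
    show (Phi p k F !![a, b, c; 0, d, e; 0, 0, f])ᵀ * Om F * !![a, b, c; 0, d, e; 0, 0, f] = Om F
    ext i j
    fin_cases i <;> fin_cases j <;>
      simp [Matrix.mul_apply, Fin.sum_univ_three, Om, Phi_apply, h2, h3, h2'] <;>
      first | linear_combination h4 | linear_combination h4' | linear_combination h5⟩, by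
    show Matrix.BlockTriangular !![a, b, c; 0, d, e; 0, 0, f] id
    intro i j hij
    fin_cases i <;> fin_cases j <;> simp at hij ⊢⟩

theorem bm_mkB (a b c d e f : F) (h1 h2 h3 h4 h5 hss) :
    bm (mkB (p := p) (k := k) a b c d e f h1 h2 h3 h4 h5 hss) = !![a, b, c; 0, d, e; 0, 0, f] := rfl

theorem bm_cond (hss : ∀ y, sg p k F (sg p k F y) = y) (g : Borel p k F) :
    ∃ a b c d e f, bm g = !![a, b, c; 0, d, e; 0, 0, f] ∧
    a * d * f = 1 ∧ sg p k F a * f = 1 ∧ sg p k F b * f + sg p k F d * e = 0 ∧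
    sg p k F c * f + sg p k F e * e + sg p k F f * c = 0 := by
  have hT : Matrix.BlockTriangular (bm g) id := g.2
  have hU : (Phi p k F (bm g))ᵀ * Om F * bm g = Om F := g.1.2
  have hd : (bm g).det = 1 := g.1.1.2
  have h10 : bm g 1 0 = 0 := hT (by decide)
  have h20 : bm g 2 0 = 0 := hT (by decide)
  have h21 : bm g 2 1 = 0 := hT (by decide)
  have e02 := congrFun (congrFun hU 0) 2
  have e12 := congrFun (congrFun hU 1) 2
  have e22 := congrFun (congrFun hU 2) 2
  simp [Matrix.mul_apply, Fin.sum_univ_three, Om, Phi_apply, h10, h20, h21] at e02 e12 e22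
  rw [Matrix.det_fin_three] at hd
  refine ⟨bm g 0 0, bm g 0 1, bm g 0 2, bm g 1 1, bm g 1 2, bm g 2 2, ?_, ?_, e02, ?_, ?_⟩
  · ext i j
    fin_cases i <;> fin_cases j <;> simp [h10, h20, h21]
  · simp [h10, h20, h21] at hd
    linear_combination hd
  · linear_combination e12
  · linear_combination e22

variable {q : ℕ} (h : QF q F (sg p k F))

/-- root elements -/
def xx (b : ZZ (sg p k F)) : Borel p k F :=
  mkB 1 0 b 1 0 1 (by simp) (by simp) (by simp) (by simp) (by simp [mem_ZZ.1 b.2]) h.ss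

/-- torus elements -/
def tt (τ : Fˣ) : Borel p k F :=
  mkB τ 0 0 (sg p k F τ / τ) 0 (sg p k F τ)⁻¹ (by
      have : sg p k F τ ≠ 0 := by simp
      field_simp) (by
      have : sg p k F τ ≠ 0 := by simp
      field_simp) (by
      have : sg p k F τ ≠ 0 := by simp
      rw [map_div₀, h.ss]
      field_simp) (by simp) (by simp) h.ss

/-- other unipotent elements -/
def vvv (a : F) : Borel p k F :=
  mkB 1 a (-(a * sg p k F a) / 2) 1 (-sg p k F a) 1 (by simp) (by simp) (by simp) (by simp) (by
    have := h.two
    rw [map_div₀, map_ofNat]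
    simp [h.ss]
    field_simp; ring) h.ss

theorem borel_str : BStr (sg p k F) (xx h) (tt h) (vvv h) where
  x_add a b := by
    apply bm_inj
    rw [bm_mul]
    simp only [xx, bm_mkB]
    ext i j
    fin_cases i <;> fin_cases j <;> simp [Matrix.mul_apply, Fin.sum_univ_three, add_comm]
  t_mul a b := by
    apply bm_inj
    rw [bm_mul]
    simp only [tt, bm_mkB]
    ext i j
    fin_cases i <;> fin_cases j <;> simp [Matrix.mul_apply, Fin.sum_univ_three, mul_comm, mul_div_mul_comm]
  vx a b := by
    apply bm_inj
    rw [bm_mul, bm_mul]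
    simp only [xx, vvv, bm_mkB]
    ext i j
    fin_cases i <;> fin_cases j <;> simp [Matrix.mul_apply, Fin.sum_univ_three, add_comm]
  vv a a' b hb := by
    have h2 := h.two
    apply bm_inj
    rw [bm_mul, bm_mul]
    simp only [xx, vvv, bm_mkB, hb]
    ext i j
    fin_cases i <;> fin_cases j <;> simp [Matrix.mul_apply, Fin.sum_univ_three, add_comm]
    field_simp
    ring
  tx τ b b' hb := by
    have : sg p k F τ ≠ 0 := by simp
    apply bm_inj
    rw [bm_mul, bm_mul]
    simp only [xx, tt, bm_mkB, hb]
    ext i j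
    fin_cases i <;> fin_cases j <;> simp [Matrix.mul_apply, Fin.sum_univ_three]
    field_simp
  tv τ a := by
    have : sg p k F τ ≠ 0 := by simp
    have h2 := h.two
    apply bm_inj
    rw [bm_mul, bm_mul]
    simp only [vvv, tt, bm_mkB]
    ext i j
    fin_cases i <;> fin_cases j <;>
      simp [Matrix.mul_apply, Fin.sum_univ_three, h.ss] <;> field_simp
  gen g := by
    obtain ⟨a, b, c, d, e, f, hg, h1, h2, h4, h5⟩ := bm_cond h.ss g
    have ha : a ≠ 0 := by rintro rfl; simp at h1
    have hd : d ≠ 0 := by rintro rfl; simp at h1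
    have hf : f ≠ 0 := by rintro rfl; simp at h1
    have hsa : sg p k F a ≠ 0 := by simpa using ha
    have hsd : sg p k F d ≠ 0 := by simpa using hd
    have hsf : sg p k F f ≠ 0 := by simpa using hf
    have h20 := h.two
    have hfe : f = (sg p k F a)⁻¹ := eq_inv_of_mul_eq_one_right h2
    have hde : d = sg p k F a / a := by
      rw [hfe] at h1
      field_simp at h1 ⊢
      linear_combination h1
    have he : e / f = -sg p k F (b / d) := by
      rw [map_div₀]; field_simp; linear_combination h4
    refine ⟨⟨c / f + (b / d) * sg p k F (b / d) / 2, ?_⟩, b / d, Units.mk0 a ha, ?_⟩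
    · have h6 : sg p k F (c / f) + sg p k F (e / f) * (e / f) + c / f = 0 := by
        rw [map_div₀, map_div₀]; field_simp; linear_combination h5
      rw [he, map_neg, h.ss] at h6
      rw [mem_ZZ, map_add, map_div₀ _ _ (2 : F), map_mul, h.ss, map_ofNat]
      generalize sg p k F (c / f) = y at *
      generalize sg p k F (b / d) = w at *
      have : w * (b / d) = w * (b / d) / 2 * 2 := by field_simp
      linear_combination h6 - this
    · have he' : e = -sg p k F (b / d) * f := by rw [← he]; field_simp
      apply bm_inj
      rw [hg, bm_mul, bm_mul]
      simp only [xx, vvv, tt, bm_mkB, Units.val_mk0]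
      rw [← hfe, ← hde]
      generalize sg p k F (b / d) = w at *
      ext i j
      fin_cases i <;> fin_cases j <;>
        simp [Matrix.mul_apply, Fin.sum_univ_three, he'] <;> field_simp <;> ring

end

theorem qf_of (p k q : ℕ) (hp : p.Prime) (hpodd : Odd p) (hk : 0 < k) (hq : q = p ^ k)
    (F : Type) [Field F] [Fintype F] [ExpChar F p] (hF : Fintype.card F = q ^ 2) :
    QF q F (sg p k F) where
  odd := by rw [hq]; exact hpodd.pow
  one := by rw [hq]; exact Nat.one_lt_pow hk.ne' hp.one_lt
  card := hF
  frob y := by rw [hq]; exact iterateFrobenius_def ..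

theorem t0_eq {p k q : ℕ} {F : Type} [Field F] [Fintype F] [ExpChar F p] (h : QF q F (sg p k F))
    (t₀ : ↥(Borel p k F))
    (ht₀ : (((t₀ : ↥(SU3 p k F)) : Matrix.SpecialLinearGroup (Fin 3) F) :
      Matrix (Fin 3) (Fin 3) F) = Matrix.diagonal ![-1, 1, -1]) : t₀ = tt h (-1) := by
  apply bm_inj
  refine Eq.trans ht₀ ?_
  simp only [tt, bm_mkB]
  ext i j
  fin_cases i <;> fin_cases j <;> simp

end Paper

namespace Paper

/-- the linear data -/
structure TX {L V F : Type} [Field L] [StarRing L] [AddCommGroup V] [Module L V] [Field F]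
    [Fintype F] (σ : F →+* F) (B : V →ₗ⋆[L] V →ₗ[L] L) (X : ZZ σ → Module.End L V)
    (T : Fˣ → Module.End L V) : Prop where
  herm : Herm B
  Xu : ∀ a, Unit' B (X a)
  Tu : ∀ a, Unit' B (T a)
  xa : ∀ a b, X (a + b) = X a * X b
  x0 : X 0 = 1
  ta : ∀ a b, T (a * b) = T a * T b
  t1 : T 1 = 1
  tx : ∀ (τ : Fˣ) (b b' : ZZ σ), (b' : F) = τ * σ τ * b → T τ * X b = X b' * T τ
  xs : ∑ b, X b = 0

section
variable {L V F : Type} [Field L] [StarRing L] [AddCommGroup V] [Module L V] [Field F]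
    [Fintype F] {σ : F →+* F} {B : V →ₗ⋆[L] V →ₗ[L] L} {X : ZZ σ → Module.End L V}
    {T : Fˣ → Module.End L V} {q p k : ℕ}

theorem TX.restr (D : TX σ B X T) {W₁ W₂ : Submodule L V} (hc : IsCompl W₁ W₂)
    (ho : ∀ v ∈ W₁, ∀ w ∈ W₂, B v w = 0) (hX : ∀ a, ∀ v ∈ W₁, X a v ∈ W₁)
    (hT : ∀ a, ∀ v ∈ W₁, T a v ∈ W₁) :
    TX σ (rB B W₁) (fun a => (X a).restrict (hX a)) (fun a => (T a).restrict (hT a)) where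
  herm := D.herm.restr hc ho
  Xu a v w := D.Xu a v w
  Tu a v w := D.Tu a v w
  xa a b := by
    ext v; exact congrArg (fun f : Module.End L V => f v) (D.xa a b)
  x0 := by
    ext v; exact congrArg (fun f : Module.End L V => f v) D.x0
  ta a b := by
    ext v; exact congrArg (fun f : Module.End L V => f v) (D.ta a b)
  t1 := by
    ext v; exact congrArg (fun f : Module.End L V => f v) D.t1
  tx τ b b' h := by
    ext v; exact congrArg (fun f : Module.End L V => f v) (D.tx τ b b' h)
  xs := by
    ext v
    have := congrArg (fun f : Module.End L V => f v) D.xs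
    simp only [LinearMap.sum_apply, LinearMap.zero_apply] at this
    rw [LinearMap.sum_apply, Submodule.coe_sum]
    exact this

theorem TX.xn (D : TX σ B X T) (b : ZZ σ) (n : ℕ) : X (n • b) = X b ^ n := by
  induction n with
  | zero => rw [zero_smul, D.x0, pow_zero]
  | succ n ih => rw [succ_nsmul, D.xa, ih, pow_succ]

theorem TX.tn (D : TX σ B X T) (b : Fˣ) (n : ℕ) : T (b ^ n) = T b ^ n := by
  induction n with
  | zero => rw [pow_zero, D.t1, pow_zero]
  | succ n ih => rw [pow_succ, D.ta, ih, pow_succ]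

theorem TX.app1 [CharZero L] [FiniteDimensional L V] (D : TX σ B X T) (h : QF q F σ)
    (hpp : p.Prime) (hpF : (p : F) = 0) (hq : q = p ^ k) (hpo : Odd p) {μ r : L}
    (hμr : (μ = -1 ∧ r = 1) ∨ (μ = 1 ∧ p % 4 = 3 ∧ r = p))
    {w : L} (hw : w * star w = 1) (hwq : w ^ (q + 1) = 1) (hw2 : w ^ 2 ≠ 1)
    {θ : Fˣ} (hθ : (θ : F) * σ θ = -1) (hμ : T θ ^ (q + 1) = μ • (1 : Module.End L V)) :
    ∃ d, Module.finrank L V = 2 * d ∧ Disc B (r ^ d) := by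
  obtain ⟨m, hm⟩ := hpo
  obtain ⟨l, hl⟩ := h.odd
  have hpb : ∀ b : ZZ σ, p • b = 0 := by
    intro b
    apply Subtype.ext
    show ((p • b : ZZ σ) : F) = 0
    rw [AddSubgroup.coe_nsmul, nsmul_eq_mul, hpF, zero_mul]
  refine thmA (X := X) (s := T θ) (h := l) hpp hm (by rw [← hl, hq]) hμr hw
    (by rw [← hwq, hl]) hw2 ⟨D.herm, D.Xu, D.Tu θ, ?_, ?_, ?_, ?_⟩ ?_
  · intro a b; rw [← D.xa, add_comm, D.xa]
  · intro a; rw [← D.xn, hpb, D.x0]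
  · intro a
    have h1 : (p - 1) • a = -a := by
      apply eq_neg_of_add_eq_zero_left
      rw [← succ_nsmul, Nat.sub_add_cancel hpp.one_lt.le, hpb]
    rw [← D.xn, h1]
    apply D.tx
    rw [hθ]; simp
  · rw [← hμ, hl]
  · intro v hv
    have := congrArg (fun f : Module.End L V => f v) D.xs
    simp only [LinearMap.sum_apply, LinearMap.zero_apply, hv, Finset.sum_const, Finset.card_univ,
      h.cardZ] at this
    rw [← Nat.cast_smul_eq_nsmul L] at this
    have hq0 : (q : L) ≠ 0 := Nat.cast_ne_zero.2 (by have := h.one; omega)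
    exact (smul_eq_zero.1 this).resolve_left hq0

/-- multiplication map -/
def mulZ (r : F) (hr : σ r = r) : AddMonoid.End (ZZ σ) where
  toFun b := ⟨r * b, by rw [mem_ZZ, map_mul, hr, mem_ZZ.1 b.2]; ring⟩
  map_zero' := by apply Subtype.ext; simp
  map_add' a b := by apply Subtype.ext; simp [mul_add]

theorem mulZ_pow (r : F) (hr : σ r = r) (i : ℕ) (b : ZZ σ) :
    (((mulZ r hr) ^ i) b : F) = r ^ i * b := by
  induction i with
  | zero => simp
  | succ i ih =>
    rw [pow_succ', pow_succ', mul_assoc, ← ih]; rfl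

theorem TX.app2 [CharZero L] [FiniteDimensional L V] (D : TX σ B X T) (h : QF q F σ)
    (hq4 : q % 4 = 1) {δ : Fˣ} (hδ : δ ^ (q - 1) = -1) (hδo : orderOf δ = 2 * (q - 1))
    (hμ : T δ ^ (q - 1) = 1) :
    ∃ d, Module.finrank L V = (q - 1) * d ∧ Disc B ((q : L) ^ d) := by
  classical
  have hq1 := h.one
  have := lemB (A := ZZ σ) (X := X) (s := T δ) D.herm (N := q - 1) (by omega)
    (by rw [Nat.even_iff]; omega) (by rw [h.cardZ]; omega) D.Xu (D.Tu δ) D.x0 D.xa D.xs hμ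
    (mulZ ((δ : F) * σ δ) (nm_fix h _)) (fun a => D.tx _ _ _ rfl) ?_ ?_
  · obtain ⟨d, hd1, hd2⟩ := this
    refine ⟨d, hd1, ?_⟩
    rw [Nat.cast_sub hq1.le] at hd2
    simpa using hd2
  · intro a ha
    have := congrArg Subtype.val ha
    apply Subtype.ext
    exact (mul_eq_zero.1 this).resolve_left (nm_ne δ)
  · intro i hi hiN a ha
    by_contra ha0
    have ha0' : (a : F) ≠ 0 := fun h0 => ha0 (Subtype.ext h0)
    have h1 := congrArg Subtype.val ha
    rw [mulZ_pow] at h1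
    have h2 := mul_right_cancel₀ ha0' (h1.trans (one_mul _).symm)
    rw [h.normU, ← Units.val_pow_eq_pow_val, Units.val_eq_one, ← pow_mul,
      ← orderOf_dvd_iff_pow_eq_one, hδo] at h2
    obtain ⟨c, hc⟩ : ∃ c, q = 4 * c + 1 := ⟨q / 4, by omega⟩
    have h3 : (q + 1) * i = 2 * ((2 * c + 1) * i) := by rw [hc]; ring
    rw [h3] at h2
    have h4 := Nat.dvd_of_mul_dvd_mul_left (by norm_num) h2
    have h5 : Nat.Coprime (q - 1) (2 * c + 1) := by
      have e : q - 1 = 2 * (2 * c) := by omega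
      rw [e]
      apply Nat.Coprime.mul_left
      · simp
      · simp
    have h6 := Nat.le_of_dvd hi (h5.dvd_of_dvd_mul_left h4)
    omega

theorem finrank_fix [CharZero L] [FiniteDimensional L V] (u : Module.End L V) (hu : u ^ 2 = 1) :
    (2 : L) * Module.finrank L (LinearMap.ker (u - 1)) =
      Module.finrank L V + LinearMap.trace L V u := by
  have hu' : ∀ v, u (u v) = v := fun v => by
    have := congrArg (fun f : Module.End L V => f v) hu
    rwa [pow_two] at this
  have hproj : LinearMap.IsProj (LinearMap.ker (u - 1)) ((2 : L)⁻¹ • (1 + u)) := by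
    refine ⟨fun v => ?_, fun v hv => ?_⟩
    · rw [mem_ker_sub_one]
      simp [hu', add_comm]
    · rw [mem_ker_sub_one] at hv
      simp only [LinearMap.smul_apply, LinearMap.add_apply, Module.End.one_apply, hv]
      rw [← two_smul L v, smul_smul, inv_mul_cancel₀ two_ne_zero, one_smul]
  have := hproj.trace
  rw [← this, map_smul, map_add, LinearMap.trace_one, smul_eq_mul]
  field_simp

/-- decomposition under the involution -/
theorem TX.split (D : TX σ B X T) [CharZero L] :
    ∃ (W₁ W₂ : Submodule L V) (_ : W₁ = LinearMap.ker (T (-1) - 1)) (_ : IsCompl W₁ W₂)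
    (_ : ∀ v ∈ W₁, ∀ w ∈ W₂, B v w = 0)
    (hX1 : ∀ a, ∀ v ∈ W₁, X a v ∈ W₁) (hT1 : ∀ a, ∀ v ∈ W₁, T a v ∈ W₁)
    (hX2 : ∀ a, ∀ v ∈ W₂, X a v ∈ W₂) (hT2 : ∀ a, ∀ v ∈ W₂, T a v ∈ W₂),
    TX σ (rB B W₁) (fun a => (X a).restrict (hX1 a)) (fun a => (T a).restrict (hT1 a)) ∧
    TX σ (rB B W₂) (fun a => (X a).restrict (hX2 a)) (fun a => (T a).restrict (hT2 a)) ∧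
    (T (-1)).restrict (hT1 (-1)) = 1 ∧
    (T (-1)).restrict (hT2 (-1)) = (-1 : L) • (1 : Module.End L W₂) := by
  have hu2 : T (-1) ^ 2 = 1 := by rw [← D.tn, neg_one_sq, D.t1]
  obtain ⟨hc, ho⟩ := Paper.split (D.Tu (-1)) (m := 2) (by norm_num) hu2
  have cX : ∀ a v, T (-1) (X a v) = X a (T (-1) v) := fun a v =>
    congrArg (fun f : Module.End L V => f v) (D.tx (-1) a a (by simp))
  have cT : ∀ a v, T (-1) (T a v) = T a (T (-1) v) := fun a v => by
    have : T (-1) * T a = T a * T (-1) := by rw [← D.ta, mul_comm, D.ta]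
    exact congrArg (fun f : Module.End L V => f v) this
  have m2 : ∀ v, v ∈ LinearMap.ker (∑ i ∈ Finset.range 2, T (-1) ^ i) ↔ v + T (-1) v = 0 := by
    intro v
    rw [LinearMap.mem_ker, Finset.sum_range_succ, Finset.sum_range_one, pow_zero, pow_one]; rfl
  refine ⟨_, _, rfl, hc, ho, ?_, ?_, ?_, ?_, ?_⟩
  · intro a v hv
    rw [mem_ker_sub_one] at hv ⊢
    rw [cX, hv]
  · intro a v hv
    rw [mem_ker_sub_one] at hv ⊢
    rw [cT, hv]
  · intro a v hv
    rw [m2] at hv ⊢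
    rw [cX, ← map_add, hv, map_zero]
  · intro a v hv
    rw [m2] at hv ⊢
    rw [cT, ← map_add, hv, map_zero]
  refine ⟨D.restr hc ho _ _, D.restr hc.symm (fun v hv w hw => D.herm.orth (ho w hw v hv)) _ _,
    ?_, ?_⟩
  · ext v
    exact (mem_ker_sub_one _ _).1 v.2
  · ext v
    have := (m2 _).1 v.2
    show T (-1) v = (-1 : L) • (v : V)
    rw [neg_one_smul]
    exact (neg_eq_of_add_eq_zero_right this).symm

theorem TX.core1 [CharZero L] [FiniteDimensional L V] (D : TX σ B X T) (h : QF q F σ)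
    (hpp : p.Prime) (hpF : (p : F) = 0) (hq : q = p ^ k) (hpo : Odd p)
    {w : L} (hw : w * star w = 1) (hwq : w ^ (q + 1) = 1) (hw2 : w ^ 2 ≠ 1) (hq4 : q % 4 = 1) :
    ∃ d, Module.finrank L (LinearMap.ker (T (-1) - 1)) = (q - 1) * d ∧ Disc B ((q : L) ^ d) := by
  obtain ⟨W₁, W₂, hW, hc, ho, hX1, hT1, hX2, hT2, D1, D2, u1, u2⟩ := D.split
  obtain ⟨δ, hδ, hδo⟩ := h.delta
  obtain ⟨θ, hθ⟩ := h.norm_surj (-1) (by simp) (by simp)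
  have hθ' : θ ^ (q + 1) = -1 := by
    rw [h.normU] at hθ
    apply Units.ext; rw [hθ]; simp
  obtain ⟨d, hd, hD1⟩ := D1.app2 h hq4 hδ hδo (by rw [← D1.tn, hδ, u1])
  obtain ⟨e, he, hD2⟩ := D2.app1 h hpp hpF hq hpo (Or.inl ⟨rfl, rfl⟩) hw hwq hw2 hθ
    (by rw [← D2.tn, hθ', u2])
  refine ⟨d, by rw [← hW, hd], ?_⟩
  have := Disc.sum D.herm hc ho hD1 hD2
  rwa [one_pow, mul_one] at this

theorem TX.core3 [CharZero L] [FiniteDimensional L V] (D : TX σ B X T) (h : QF q F σ)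
    (hpp : p.Prime) (hpF : (p : F) = 0) (hq : q = p ^ k) (hpo : Odd p)
    {w : L} (hw : w * star w = 1) (hwq : w ^ (q + 1) = 1) (hw2 : w ^ 2 ≠ 1) (hp4 : p % 4 = 3) :
    ∃ d, Module.finrank L (LinearMap.ker (T (-1) - 1)) = 2 * d ∧ Disc B ((p : L) ^ d) := by
  obtain ⟨W₁, W₂, hW, hc, ho, hX1, hT1, hX2, hT2, D1, D2, u1, u2⟩ := D.split
  obtain ⟨θ, hθ⟩ := h.norm_surj (-1) (by simp) (by simp)
  have hθ' : θ ^ (q + 1) = -1 := by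
    rw [h.normU] at hθ
    apply Units.ext; rw [hθ]; simp
  obtain ⟨d, hd, hD1⟩ := D1.app1 h hpp hpF hq hpo (Or.inr ⟨rfl, hp4, rfl⟩) hw hwq hw2 hθ
    (by rw [← D1.tn, hθ', u1, one_smul])
  obtain ⟨e, he, hD2⟩ := D2.app1 h hpp hpF hq hpo (Or.inl ⟨rfl, rfl⟩) hw hwq hw2 hθ
    (by rw [← D2.tn, hθ', u2])
  refine ⟨d, by rw [← hW, hd], ?_⟩
  have := Disc.sum D.herm hc ho hD1 hD2
  rwa [one_pow, mul_one] at this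

end
end Paper

namespace Paper

section
variable {L : Type} [Field L] [StarRing L] {n : ℕ}

/-- sesquilinear form of a matrix -/
def sesq (H : Matrix (Fin n) (Fin n) L) : (Fin n → L) →ₗ⋆[L] (Fin n → L) →ₗ[L] L :=
  LinearMap.mk₂'ₛₗ (starRingEnd L) (RingHom.id L) (fun v w => star v ⬝ᵥ (H *ᵥ w))
    (by intro a b c; rw [star_add, add_dotProduct])
    (by intro a b c; rw [star_smul, smul_dotProduct]; rfl)
    (by intro a b c; rw [mulVec_add, dotProduct_add])
    (by intro a b c; rw [mulVec_smul, dotProduct_smul]; rfl)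

theorem sesq_apply (H : Matrix (Fin n) (Fin n) L) (v w) : sesq H v w = star v ⬝ᵥ (H *ᵥ w) := rfl

theorem sesq_herm {H : Matrix (Fin n) (Fin n) L} (h1 : Hᴴ = H) (h2 : H.det ≠ 0) :
    Herm (sesq H) := by
  refine ⟨fun v w => ?_, fun v hv => ?_⟩
  · rw [sesq_apply, sesq_apply, ← star_dotProduct_star, star_star, star_mulVec, h1,
      dotProduct_comm, dotProduct_mulVec]
    exact dotProduct_comm _ _
  · have h3 : star v ᵥ* H = 0 := by
      apply dotProduct_eq_zero
      intro w
      rw [← dotProduct_mulVec]; exact hv w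
    have h4 := Matrix.eq_zero_of_vecMul_eq_zero h2 h3
    rwa [star_eq_zero] at h4

theorem sesq_unit {H M : Matrix (Fin n) (Fin n) L} (h : Mᴴ * H * M = H) :
    Unit' (sesq H) (Matrix.toLin' M) := by
  intro v w
  rw [sesq_apply, sesq_apply, Matrix.toLin'_apply, Matrix.toLin'_apply, star_mulVec,
    ← dotProduct_mulVec, mulVec_mulVec, mulVec_mulVec, h]

theorem sesq_gram (H : Matrix (Fin n) (Fin n) L) : gram (sesq H) (Pi.basisFun L (Fin n)) = H := by
  ext i j
  show sesq H _ _ = _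
  rw [sesq_apply]
  simp [Pi.basisFun_apply, ← Pi.single_star, single_dotProduct]

theorem toLin_pow (M : Matrix (Fin n) (Fin n) L) (m : ℕ) :
    (Matrix.toLin' M) ^ m = Matrix.toLin' (M ^ m) := (Matrix.toLin'_pow M m).symm

variable {F G : Type} [Field F] [Fintype F] [Group G] {σ : F →+* F} {x : ZZ σ → G}
  {t : Fˣ → G} {v : F → G} {q p k : ℕ}

theorem matTX (hB : BStr σ x t v) (r : G →* Matrix (Fin n) (Fin n) L)
    (H : Matrix (Fin n) (Fin n) L) (h1 : Hᴴ = H) (h2 : H.det ≠ 0)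
    (hi : ∀ g, (r g)ᴴ * H * r g = H) (hZ : ∑ b, r (x b) = 0) :
    TX σ (sesq H) (fun b => Matrix.toLin' (r (x b))) (fun τ => Matrix.toLin' (r (t τ))) where
  herm := sesq_herm h1 h2
  Xu a := sesq_unit (hi _)
  Tu a := sesq_unit (hi _)
  xa a b := by rw [hB.x_add, map_mul, Matrix.toLin'_mul]; rfl
  x0 := by rw [hB.x0, map_one, Matrix.toLin'_one]; rfl
  ta a b := by rw [hB.t_mul, map_mul, Matrix.toLin'_mul]; rfl
  t1 := by rw [hB.t1, map_one, Matrix.toLin'_one]; rfl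
  tx τ b b' h := by
    rw [Module.End.mul_eq_comp, Module.End.mul_eq_comp, ← Matrix.toLin'_mul, ← Matrix.toLin'_mul,
      ← map_mul, hB.tx τ b b' h, map_mul]
  xs := by rw [← map_sum, hZ, map_zero]

theorem natstar (a m : ℕ) : star ((a : L) ^ m) = (a : L) ^ m := by rw [star_pow, star_natCast]

theorem disc_even [CharZero L] {V : Type} [AddCommGroup V] [Module L V]
    {B : V →ₗ⋆[L] V →ₗ[L] L} {a d : ℕ} (ha : a ≠ 0) (h : Disc B ((a : L) ^ d)) (hd : Even d) :
    Disc B 1 := by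
  obtain ⟨m, rfl⟩ := hd
  refine h.norm (z := (a : L) ^ m) (pow_ne_zero _ (Nat.cast_ne_zero.2 ha)) ?_
  rw [natstar]; ring

theorem disc_odd [CharZero L] {V : Type} [AddCommGroup V] [Module L V]
    {B : V →ₗ⋆[L] V →ₗ[L] L} {a d k : ℕ} (ha : a ≠ 0) (h : Disc B ((a : L) ^ d)) (hd : Odd d)
    (hk : Odd k) : Disc B (((a ^ k : ℕ) : L)) := by
  obtain ⟨m, rfl⟩ := hd
  obtain ⟨l, rfl⟩ := hk
  have ha' : (a : L) ≠ 0 := Nat.cast_ne_zero.2 ha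
  refine h.norm (z := (a : L) ^ m / (a : L) ^ l) (div_ne_zero (pow_ne_zero _ ha') (pow_ne_zero _ ha')) ?_
  rw [star_div₀, natstar, natstar]
  push_cast
  field_simp
  ring

theorem matDisc [CharZero L] (hB : BStr σ x t v) (h : QF q F σ)
    (hpp : p.Prime) (hpF : (p : F) = 0) (hq : q = p ^ k) (hpo : Odd p)
    (r : G →* Matrix (Fin n) (Fin n) L)
    (H : Matrix (Fin n) (Fin n) L) (h1 : Hᴴ = H) (h2 : H.det ≠ 0)
    (hi : ∀ g, (r g)ᴴ * H * r g = H) (hZ : ∑ b, r (x b) = 0)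
    {w : L} (hw : w * star w = 1) (hwq : w ^ (q + 1) = 1) (hw2 : w ^ 2 ≠ 1)
    (hn : n = q * (q - 1)) :
    ((r (t (-1))).trace = (q : L) - 1 →
      (q % 4 = 1 → ∃ z : L, z ≠ 0 ∧ (-1 : L) ^ (n * (n - 1) / 2) * H.det = q * (z * star z)) ∧
      (q % 4 = 3 → ∃ z : L, z ≠ 0 ∧ (-1 : L) ^ (n * (n - 1) / 2) * H.det = (-1) * (z * star z))) ∧
    ((r (t (-1))).trace = -((q : L) - 1) →
      (q % 4 = 1 → ∃ z : L, z ≠ 0 ∧ (-1 : L) ^ (n * (n - 1) / 2) * H.det = 1 * (z * star z)) ∧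
      (q % 4 = 3 → ∃ z : L, z ≠ 0 ∧ (-1 : L) ^ (n * (n - 1) / 2) * H.det = (-q) * (z * star z))) := by
  have D := matTX hB r H h1 h2 hi hZ
  have hq1 := h.one
  have hf := finrank_fix (Matrix.toLin' (r (t (-1)))) (by
    rw [← D.tn (-1) 2, neg_one_sq, D.t1])
  rw [Module.finrank_fin_fun, Matrix.trace_toLin'_eq] at hf
  have fin : ∀ c : L, Disc (sesq H) c → ∃ z : L, z ≠ 0 ∧ H.det = c * (z * star z) := by
    intro c hc
    have := hc.basis (Pi.basisFun L (Fin n))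
    rwa [sesq_gram] at this
  have s1 : q % 4 = 1 → (-1 : L) ^ (n * (n - 1) / 2) = 1 := by
    intro hq4
    obtain ⟨c, hc⟩ : ∃ c, q = 4 * c + 1 := ⟨q / 4, by omega⟩
    have : n * (n - 1) / 2 = 2 * (q * c * (n - 1)) := by
      apply Nat.div_eq_of_eq_mul_left (by norm_num)
      have : n = 4 * (q * c) := by rw [hn, hc, Nat.add_sub_cancel]; ring
      nth_rewrite 1 [this]; ring
    rw [this, pow_mul, neg_one_sq, one_pow]
  have s3 : q % 4 = 3 → (-1 : L) ^ (n * (n - 1) / 2) = -1 := by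
    intro hq4
    obtain ⟨c, hc⟩ : ∃ c, q = 4 * c + 3 := ⟨q / 4, by omega⟩
    have e : n = 2 * (q * (2 * c + 1)) := by
      rw [hn, hc, show 4 * c + 3 - 1 = 4 * c + 2 by omega]; ring
    have hpos : 0 < q * (2 * c + 1) := Nat.mul_pos (by omega) (by omega)
    have : n * (n - 1) / 2 = q * (2 * c + 1) * (n - 1) := by
      apply Nat.div_eq_of_eq_mul_left (by norm_num)
      nth_rewrite 1 [e]; ring
    rw [this]
    apply Odd.neg_one_pow
    refine (h.odd.mul ⟨c, rfl⟩).mul ?_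
    rw [Nat.odd_iff]; omega
  have hnL : (n : L) = q * (q - 1) := by rw [hn]; push_cast [hq1.le]; ring
  have hqL : (q : L) - 1 ≠ 0 := by rw [sub_ne_zero]; exact_mod_cast hq1.ne'
  have hp4 : q % 4 = 3 → p % 4 = 3 ∧ Odd k := by
    intro hq4
    have hpo' := Nat.odd_iff.1 hpo
    rcases Nat.even_or_odd k with ⟨l, hl⟩ | hk
    · exfalso
      rw [hq, hl, ← two_mul, pow_mul, Nat.pow_mod] at hq4
      have : p ^ 2 % 4 = 1 := by
        have h4 : p % 4 = 1 ∨ p % 4 = 3 := by omega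
        rw [Nat.pow_mod]
        rcases h4 with e | e <;> rw [e]
      rw [this] at hq4
      simp at hq4
    · refine ⟨?_, hk⟩
      by_contra h3
      have h4 : p % 4 = 1 := by omega
      rw [hq, Nat.pow_mod, h4] at hq4
      simp at hq4
  have hp0 : p ≠ 0 := hpp.ne_zero
  have hq0 : q ≠ 0 := by omega
  refine ⟨fun htr => ⟨fun hq4 => ?_, fun hq4 => ?_⟩, fun htr => ⟨fun hq4 => ?_, fun hq4 => ?_⟩⟩
  · obtain ⟨d, hd, hDd⟩ := D.core1 h hpp hpF hq hpo hw hwq hw2 hq4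
    rw [hd, htr, hnL] at hf
    push_cast [hq1.le] at hf
    have h5 : (2 : L) * d = q + 1 := by
      apply mul_left_cancel₀ hqL; linear_combination hf
    have h6 : 2 * d = q + 1 := by exact_mod_cast h5
    have := disc_odd (k := 1) hq0 hDd (by rw [Nat.odd_iff]; omega) odd_one
    rw [pow_one] at this
    rw [s1 hq4, one_mul]
    exact fin _ this
  · obtain ⟨hp3, hk⟩ := hp4 hq4
    obtain ⟨d, hd, hDd⟩ := D.core3 h hpp hpF hq hpo hw hwq hw2 hp3
    rw [hd, htr, hnL] at hf
    obtain ⟨c, hc⟩ : ∃ c, q = 4 * c + 3 := ⟨q / 4, by omega⟩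
    have h5 : ((4 * d + 1 : ℕ) : L) = ((q * q : ℕ) : L) := by
      push_cast at hf ⊢; linear_combination hf
    have h6 : 4 * d + 1 = q * q := by exact_mod_cast h5
    have h7 : d = 2 * (2 * c * c + 3 * c + 1) := by rw [hc] at h6; nlinarith
    obtain ⟨z, hz, e⟩ := fin _ (disc_even hp0 hDd (by rw [h7]; exact even_two_mul _))
    refine ⟨z, hz, ?_⟩
    rw [s3 hq4, e]; ring
  · obtain ⟨d, hd, hDd⟩ := D.core1 h hpp hpF hq hpo hw hwq hw2 hq4
    rw [hd, htr, hnL] at hf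
    push_cast [hq1.le] at hf
    have h5 : (2 : L) * d + 1 = q := by
      apply mul_left_cancel₀ hqL; linear_combination hf
    have h6 : 2 * d + 1 = q := by exact_mod_cast h5
    rw [s1 hq4, one_mul]
    exact fin _ (disc_even hq0 hDd (by rw [Nat.even_iff]; omega))
  · obtain ⟨hp3, hk⟩ := hp4 hq4
    obtain ⟨d, hd, hDd⟩ := D.core3 h hpp hpF hq hpo hw hwq hw2 hp3
    rw [hd, htr, hnL] at hf
    obtain ⟨c, hc⟩ : ∃ c, q = 4 * c + 3 := ⟨q / 4, by omega⟩
    have h5 : ((4 * d + 2 * q : ℕ) : L) = ((q * q + 1 : ℕ) : L) := by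
      push_cast at hf ⊢; linear_combination hf
    have h6 : 4 * d + 2 * q = q * q + 1 := by exact_mod_cast h5
    have h7 : d = 2 * (2 * c * c + 2 * c) + 1 := by rw [hc] at h6; nlinarith
    have := disc_odd (k := k) hp0 hDd ⟨_, h7⟩ hk
    rw [← hq] at this
    obtain ⟨z, hz, e⟩ := fin _ this
    refine ⟨z, hz, ?_⟩
    rw [s3 hq4, e]; ring

end
end Paper

namespace Paper

/-- star structure on a conjugation-closed subfield -/
def subStar (L : Subfield ℂ) (hc : ∀ z ∈ L, (starRingEnd ℂ) z ∈ L) : StarRing L where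
  star z := ⟨(starRingEnd ℂ) (z : ℂ), hc _ z.2⟩
  star_involutive z := Subtype.ext (Complex.conj_conj _)
  star_mul a b := Subtype.ext (by
    show (starRingEnd ℂ) ((a : ℂ) * b) = (starRingEnd ℂ) (b : ℂ) * (starRingEnd ℂ) (a : ℂ)
    rw [map_mul, mul_comm])
  star_add a b := Subtype.ext (map_add (starRingEnd ℂ) (a : ℂ) b)

section
variable {q p k n : ℕ} {F G : Type} [Field F] [Fintype F] [Group G] {σ : F →+* F} {x : ZZ σ → G}
  {t : Fˣ → G} {v : F → G}

/-- restriction of the entries of a matrix representation -/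
def subRep (L : Subfield ℂ) (R : G →* Matrix (Fin n) (Fin n) ℂ) (hR : ∀ g i j, R g i j ∈ L) :
    G →* Matrix (Fin n) (Fin n) L where
  toFun g := Matrix.of fun i j => ⟨R g i j, hR g i j⟩
  map_one' := by
    ext i j
    show R 1 i j = _
    rw [map_one]
    by_cases h : i = j
    · subst h; simp
    · simp [h]
  map_mul' a b := by
    ext i j
    show R (a * b) i j = _
    rw [map_mul, Matrix.mul_apply, Matrix.mul_apply]
    push_cast
    rfl

theorem subRep_map (L : Subfield ℂ) (R : G →* Matrix (Fin n) (Fin n) ℂ) (hR : ∀ g i j, R g i j ∈ L)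
    (g : G) : (subRep L R hR g).map L.subtype = R g := rfl

theorem subDisc (hB : BStr σ x t v) (h : QF q F σ)
    (hpp : p.Prime) (hpF : (p : F) = 0) (hq : q = p ^ k) (hpo : Odd p)
    (L : Subfield ℂ) (hc : ∀ z ∈ L, (starRingEnd ℂ) z ∈ L)
    (R : G →* Matrix (Fin n) (Fin n) ℂ) (hR : ∀ g i j, R g i j ∈ L)
    (H : Matrix (Fin n) (Fin n) ℂ) (hH : ∀ i j, H i j ∈ L) (h1 : Hᴴ = H) (h2 : H.det ≠ 0)
    (hi : ∀ g, (R g)ᴴ * H * R g = H) (hZ : ∑ b, R (x b) = 0)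
    {w : ℂ} (hwL : w ∈ L) (hwq : w ^ (q + 1) = 1) (hw2 : w ^ 2 ≠ 1)
    (hn : n = q * (q - 1)) :
    ((R (t (-1))).trace = (q : ℂ) - 1 →
      (q % 4 = 1 → ∃ z ∈ L, z ≠ 0 ∧
        (-1 : ℂ) ^ (n * (n - 1) / 2) * H.det = q * (z * (starRingEnd ℂ) z)) ∧
      (q % 4 = 3 → ∃ z ∈ L, z ≠ 0 ∧
        (-1 : ℂ) ^ (n * (n - 1) / 2) * H.det = (-1) * (z * (starRingEnd ℂ) z))) ∧
    ((R (t (-1))).trace = -((q : ℂ) - 1) →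
      (q % 4 = 1 → ∃ z ∈ L, z ≠ 0 ∧
        (-1 : ℂ) ^ (n * (n - 1) / 2) * H.det = 1 * (z * (starRingEnd ℂ) z)) ∧
      (q % 4 = 3 → ∃ z ∈ L, z ≠ 0 ∧
        (-1 : ℂ) ^ (n * (n - 1) / 2) * H.det = (-q) * (z * (starRingEnd ℂ) z))) := by
  letI : StarRing L := subStar L hc
  have hst : ∀ z : L, ((star z : L) : ℂ) = (starRingEnd ℂ) (z : ℂ) := fun z => rfl
  have inj : ∀ {A B : Matrix (Fin n) (Fin n) L}, A.map L.subtype = B.map L.subtype → A = B := by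
    intro A B hAB
    exact Matrix.map_injective L.subtype.injective hAB
  have mapH : ∀ A : Matrix (Fin n) (Fin n) L, (Aᴴ).map L.subtype = (A.map L.subtype)ᴴ :=
    fun A => rfl
  let H' : Matrix (Fin n) (Fin n) L := Matrix.of fun i j => ⟨H i j, hH i j⟩
  have hH' : H'.map L.subtype = H := rfl
  have hdet : ((H'.det : L) : ℂ) = H.det := by
    have := RingHom.map_det L.subtype H'
    exact this
  have htr : ∀ g, (((subRep L R hR g).trace : L) : ℂ) = (R g).trace := by
    intro g
    rw [Matrix.trace, Matrix.trace]
    push_cast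
    rfl
  have key := matDisc hB h hpp hpF hq hpo (subRep L R hR) H'
    (inj (by rw [mapH, hH', h1])) (fun h0 => h2 (by rw [← hdet, h0]; rfl))
    (fun g => inj (by
      rw [Matrix.map_mul, Matrix.map_mul, mapH, hH', subRep_map, hi]))
    (by
      apply inj
      have e : ∀ A : Matrix (Fin n) (Fin n) L, A.map L.subtype = L.subtype.mapMatrix A :=
        fun A => rfl
      rw [e, e, map_sum, map_zero]
      exact hZ)
    (w := ⟨w, hwL⟩)
    (by
      apply Subtype.ext
      show w * (starRingEnd ℂ) w = 1
      have := Complex.norm_eq_one_of_pow_eq_one hwq (by omega)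
      rw [Complex.mul_conj, Complex.normSq_eq_norm_sq, this]; simp)
    (Subtype.ext hwq) (fun h0 => hw2 (congrArg Subtype.val h0)) hn
  have push : ∀ d : L, (∃ z : L, z ≠ 0 ∧ (-1 : L) ^ (n * (n - 1) / 2) * H'.det = d * (z * star z)) →
      ∃ z ∈ L, z ≠ 0 ∧
        (-1 : ℂ) ^ (n * (n - 1) / 2) * H.det = (d : ℂ) * (z * (starRingEnd ℂ) z) := by
    rintro d ⟨z, hz, he⟩
    refine ⟨z, z.2, fun h0 => hz (Subtype.ext h0), ?_⟩
    have := congrArg (Subtype.val : L → ℂ) he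
    rw [← hdet, ← hst]
    exact_mod_cast this
  refine ⟨fun ha => ?_, fun ha => ?_⟩
  · have k1 := key.1 (Subtype.ext (by rw [htr, ha]; push_cast; rfl))
    refine ⟨fun hm => ?_, fun hm => ?_⟩
    · have := push _ (k1.1 hm); exact_mod_cast this
    · have := push _ (k1.2 hm); exact_mod_cast this
  · have k1 := key.2 (Subtype.ext (by rw [htr, ha]; push_cast; rfl))
    refine ⟨fun hm => ?_, fun hm => ?_⟩
    · have := push _ (k1.1 hm); exact_mod_cast this
    · have := push _ (k1.2 hm); exact_mod_cast this

theorem sum_zero (hB : BStr σ x t v) (h : QF q F σ) (R : G →* Matrix (Fin n) (Fin n) ℂ)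
    (h0 : ∑ b, (R (x b)).trace = 0) : ∑ b, R (x b) = 0 := by
  have hq : (q : ℂ) ≠ 0 := Nat.cast_ne_zero.2 (by have := h.one; omega)
  have hs : (∑ b, R (x b)) * (∑ b, R (x b)) = (q : ℂ) • ∑ b, R (x b) := by
    rw [Finset.sum_mul, Finset.sum_congr rfl (fun b _ => hB.SZ_x (R := R) b), Finset.sum_const,
      Finset.card_univ, h.cardZ, ← Nat.cast_smul_eq_nsmul ℂ]
  have := idem_zero ((q : ℂ)⁻¹ • ∑ b, R (x b)) (by
    rw [smul_mul_smul_comm, hs, smul_smul]; congr 1; field_simp) (by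
    rw [Matrix.trace_smul, Matrix.trace_sum, h0, smul_zero])
  exact (smul_eq_zero.1 this).resolve_left (inv_ne_zero hq)

end

/-- the underlying matrix representation -/
def repM {G : Type} [Group G] {n : ℕ} (ρ : G →* GL (Fin n) ℂ) : G →* Matrix (Fin n) (Fin n) ℂ :=
  (Units.coeHom _).comp ρ

theorem repM_trace {G : Type} [Group G] {n : ℕ} (ρ : G →* GL (Fin n) ℂ) (g : G) :
    (repM ρ g).trace = charOf ρ g := rfl

theorem conj_closed {G : Type} [Group G] {n : ℕ} (ρ : G →* GL (Fin n) ℂ)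
    (H : Matrix (Fin n) (Fin n) ℂ) (h2 : IsUnit H.det)
    (hi : ∀ g, (repM ρ g)ᴴ * H * repM ρ g = H) (z : ℂ) (hz : z ∈ charField (charOf ρ)) :
    (starRingEnd ℂ) z ∈ charField (charOf ρ) := by
  have hle : charField (charOf ρ) ≤ (charField (charOf ρ)).comap (starRingEnd ℂ) := by
    apply Subfield.closure_le.2
    rintro _ ⟨g, rfl⟩
    show (starRingEnd ℂ) (charOf ρ g) ∈ charField (charOf ρ)
    have e : (starRingEnd ℂ) (charOf ρ g) = charOf ρ g⁻¹ := by
      rw [← repM_trace, ← repM_trace]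
      have e1 : (repM ρ g)ᴴ * H = H * repM ρ g⁻¹ := by
        have := congrArg (· * repM ρ g⁻¹) (hi g)
        simp only [Matrix.mul_assoc] at this
        rw [← map_mul, mul_inv_cancel, map_one, Matrix.mul_one] at this
        exact this
      have e2 : (repM ρ g)ᴴ = H * repM ρ g⁻¹ * H⁻¹ := by
        rw [← e1, Matrix.mul_assoc, Matrix.mul_nonsing_inv _ h2, Matrix.mul_one]
      have e3 := Matrix.trace_conjTranspose (repM ρ g)
      rw [e2, Matrix.trace_mul_comm, ← Matrix.mul_assoc, Matrix.nonsing_inv_mul _ h2,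
        Matrix.one_mul] at e3
      exact e3.symm
    rw [e]
    exact Subfield.subset_closure ⟨_, rfl⟩
  exact hle hz

theorem notReal_im {G : Type} [Group G] {χ : G → ℂ} (h : NotReal χ) : ∃ g, (χ g).im ≠ 0 := by
  by_contra! hc
  apply h
  apply Subfield.closure_le.2
  rintro _ ⟨g, rfl⟩
  exact Subfield.subset_closure ⟨(χ g).re, Complex.ext (by simp) (by simp [hc g])⟩

theorem stmt12_aux (p k q : ℕ) (hp : p.Prime) (hpodd : Odd p) (hk : 0 < k) (hq : q = p ^ k)
    (F : Type) [Field F] [Fintype F] [ExpChar F p] (hF : Fintype.card F = q ^ 2)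
    (t₀ : ↥(Borel p k F))
    (ht₀ : (((t₀ : ↥(SU3 p k F)) : Matrix.SpecialLinearGroup (Fin 3) F) :
      Matrix (Fin 3) (Fin 3) F) = Matrix.diagonal ![-1, 1, -1])
    (ϑ : ↥(Borel p k F) → ℂ) (hϑ : IsIrrChar ϑ)
    (hdeg : ϑ 1 = ((q ^ 2 - q : ℕ) : ℂ))
    (hnr : NotReal ϑ) :
    (ϑ t₀ = (q : ℂ) - 1 →
      (q % 4 = 1 → HasUnitaryDisc ϑ (q : ℂ)) ∧
      (q % 4 = 3 → HasUnitaryDisc ϑ (-1 : ℂ))) ∧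
    (ϑ t₀ = -((q : ℂ) - 1) →
      (q % 4 = 1 → HasUnitaryDisc ϑ (1 : ℂ)) ∧
      (q % 4 = 3 → HasUnitaryDisc ϑ (-(q : ℂ)))) := by
  have h := qf_of p k q hp hpodd hk hq F hF
  have hB := borel_str h
  rw [t0_eq h t₀ ht₀]
  have hpF : (p : F) = 0 := by
    have : Fact p.Prime := ⟨hp⟩
    have : CharP F p := by
      cases ‹ExpChar F p› with
      | zero => exact absurd hp Nat.not_prime_one
      | prime _ => assumption
    exact CharP.cast_eq_zero F p
  have h1q := h.one
  have hdeg' : ∀ n : ℕ, (n : ℂ) = ((q ^ 2 - q : ℕ) : ℂ) → n = q * (q - 1) := by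
    intro n hn
    have := Nat.cast_injective hn
    rw [this, Nat.mul_sub, mul_one, pow_two]
  have hq1 : (q : ℂ) - 1 ≠ 0 := by
    rw [sub_ne_zero]; exact_mod_cast h1q.ne'
  have main : ϑ (tt h (-1)) ≠ 0 → ∑ b, ϑ (xx h b) = 0 ∧
      ∃ w ∈ charField ϑ, w ^ (q + 1) = 1 ∧ w ^ 2 ≠ 1 := by
    intro hne
    obtain ⟨n, ρ, hir, rfl⟩ := hϑ
    have hS : ∀ M : Matrix (Fin n) (Fin n) ℂ, (∀ g, M * repM ρ g = repM ρ g * M) →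
      ∃ c : ℂ, M = c • (1 : Matrix (Fin n) (Fin n) ℂ) := fun M hM => schur hir M hM
    have hn : n = q * (q - 1) := by
      apply hdeg'
      rw [← hdeg, ← repM_trace, map_one, Matrix.trace_one, Fintype.card_fin]
    have hq3 : 3 ≤ q := by
      obtain ⟨m, hm⟩ := h.odd
      omega
    have hn1 : 1 < n := by
      rw [hn]
      calc 1 < 3 * 2 := by norm_num
        _ ≤ q * (q - 1) := Nat.mul_le_mul hq3 (by omega)
    have hZ := hB.SZ_zero h hS hn1 hne
    obtain ⟨g, hg⟩ := notReal_im hnr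
    refine ⟨?_, ?_⟩
    · have := congrArg Matrix.trace hZ
      rw [Matrix.trace_sum, Matrix.trace_zero] at this
      exact this
    · obtain ⟨τ, r, ha, hb⟩ := hB.nonreal h hS (by
        rw [hn, Nat.cast_mul, Nat.cast_sub h1q.le, Nat.cast_one]) (by omega) hZ g hg
      refine ⟨_, ?_, ha, hb⟩
      exact mul_mem (SubfieldClass.ratCast_mem _ r) (Subfield.subset_closure ⟨_, rfl⟩)
  have fin : ϑ (tt h (-1)) ≠ 0 → ∀ (n : ℕ) (ρ : ↥(Borel p k F) →* GL (Fin n) ℂ),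
    ϑ = charOf ρ →
    (∀ g i j, ((ρ g : Matrix (Fin n) (Fin n) ℂ)) i j ∈ charField ϑ) →
    ∀ H : Matrix (Fin n) (Fin n) ℂ,
      (∀ i j, H i j ∈ charField ϑ) →
      IsUnit H.det →
      H.conjTranspose = H →
      (∀ g, ((ρ g : Matrix (Fin n) (Fin n) ℂ)).conjTranspose * H *
        (ρ g : Matrix (Fin n) (Fin n) ℂ) = H) →
    ((repM ρ (tt h (-1))).trace = (q : ℂ) - 1 →
      (q % 4 = 1 → ∃ z ∈ charField ϑ, z ≠ 0 ∧
        (-1 : ℂ) ^ (n * (n - 1) / 2) * H.det = q * (z * (starRingEnd ℂ) z)) ∧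
      (q % 4 = 3 → ∃ z ∈ charField ϑ, z ≠ 0 ∧
        (-1 : ℂ) ^ (n * (n - 1) / 2) * H.det = (-1) * (z * (starRingEnd ℂ) z))) ∧
    ((repM ρ (tt h (-1))).trace = -((q : ℂ) - 1) →
      (q % 4 = 1 → ∃ z ∈ charField ϑ, z ≠ 0 ∧
        (-1 : ℂ) ^ (n * (n - 1) / 2) * H.det = 1 * (z * (starRingEnd ℂ) z)) ∧
      (q % 4 = 3 → ∃ z ∈ charField ϑ, z ≠ 0 ∧
        (-1 : ℂ) ^ (n * (n - 1) / 2) * H.det = (-q) * (z * (starRingEnd ℂ) z))) := by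
    intro hne n ρ hρ hent H hH hdet hherm hinv
    obtain ⟨hs, w, hw, hwq, hw2⟩ := main hne
    have hcc : ∀ z ∈ charField ϑ, (starRingEnd ℂ) z ∈ charField ϑ := by
      rw [hρ]; exact conj_closed ρ H hdet hinv
    have hn : n = q * (q - 1) := by
      apply hdeg'
      rw [← hdeg, hρ, ← repM_trace, map_one, Matrix.trace_one, Fintype.card_fin]
    have hZ := sum_zero hB h (repM ρ) (by rw [hρ] at hs; exact hs)
    exact subDisc hB h hp hpF hq hpodd (charField ϑ) hcc (repM ρ) hent H hH hherm hdet.ne_zero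
      hinv hZ hw hwq hw2 hn
  refine ⟨fun ha => ⟨fun hm => ?_, fun hm => ?_⟩, fun ha => ⟨fun hm => ?_, fun hm => ?_⟩⟩
  · intro n ρ hρ h1 H h2 h3 h4 h5
    exact ((fin (by rw [ha]; exact hq1) n ρ hρ h1 H h2 h3 h4 h5).1
      (by rw [repM_trace, ← hρ]; exact ha)).1 hm
  · intro n ρ hρ h1 H h2 h3 h4 h5
    exact ((fin (by rw [ha]; exact hq1) n ρ hρ h1 H h2 h3 h4 h5).1
      (by rw [repM_trace, ← hρ]; exact ha)).2 hm
  · intro n ρ hρ h1 H h2 h3 h4 h5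
    exact ((fin (by rw [ha]; exact neg_ne_zero.2 hq1) n ρ hρ h1 H h2 h3 h4 h5).2
      (by rw [repM_trace, ← hρ]; exact ha)).1 hm
  · intro n ρ hρ h1 H h2 h3 h4 h5
    exact ((fin (by rw [ha]; exact neg_ne_zero.2 hq1) n ρ hρ h1 H h2 h3 h4 h5).2
      (by rw [repM_trace, ← hρ]; exact ha)).2 hm

end Paper

namespace Paper

/-- unitary discriminants of the degree `q²-q` characters of the
Borel subgroup of `SU₃(q)`, `q` odd, in terms of the value at `t₀ = diag(-1,1,-1)`. -/
theorem stmt12 (p k q : ℕ) (hp : p.Prime) (hpodd : Odd p) (hk : 0 < k) (hq : q = p ^ k)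
    (F : Type) [Field F] [Fintype F] [ExpChar F p] (hF : Fintype.card F = q ^ 2)
    (t₀ : ↥(Borel p k F))
    (ht₀ : (((t₀ : ↥(SU3 p k F)) : Matrix.SpecialLinearGroup (Fin 3) F) :
      Matrix (Fin 3) (Fin 3) F) = Matrix.diagonal ![-1, 1, -1])
    (ϑ : ↥(Borel p k F) → ℂ) (hϑ : IsIrrChar ϑ)
    (hdeg : ϑ 1 = ((q ^ 2 - q : ℕ) : ℂ))
    (hnr : NotReal ϑ) :
    (ϑ t₀ = (q : ℂ) - 1 →
      (q % 4 = 1 → HasUnitaryDisc ϑ (q : ℂ)) ∧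
      (q % 4 = 3 → HasUnitaryDisc ϑ (-1 : ℂ))) ∧
    (ϑ t₀ = -((q : ℂ) - 1) →
      (q % 4 = 1 → HasUnitaryDisc ϑ (1 : ℂ)) ∧
      (q % 4 = 3 → HasUnitaryDisc ϑ (-(q : ℂ)))) := by
  exact stmt12_aux p k q hp hpodd hk hq F hF t₀ ht₀ ϑ hϑ hdeg hnr

end Paper
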